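/- Let ω be a non-quasianalytic concave weight function and let d ≥ 1. Then the ring of germs at 0 ∈ ℝ^d of complex-valued E^{ω}-functions (Roumieu) has property (D), and the ring of germs at 0 ∈ ℝ^d of complex-valued E^{(ω)}-functions (Beurling) has property (D): for every function f defined on an open neighborhood of 0 in ℝ^d and every integer j ≥ 1, if f^j and f^{j+1} are of the respective class on some open neighborhood of 0, then f is of that class on some open neighborhood of 0. -/

import Mathlib

open Filter Set Asymptotics MeasureTheory

noncomputable section

/-- `M` is a weight sequence: `M 0 = 1`, positive, `M 1 ≥ 1`, log-convex and
`M k ^ (1/k) → ∞`. -/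
def IsWeightSeq (M : ℕ → ℝ) : Prop :=
  M 0 = 1 ∧ (∀ k, 0 < M k) ∧ 1 ≤ M 1 ∧
    (∀ k : ℕ, 1 ≤ k → M k ^ 2 ≤ M (k - 1) * M (k + 1)) ∧
    Tendsto (fun k : ℕ => M k ^ (1 / (k : ℝ))) atTop atTop

/-- The sequence `m k = M k / k!`. -/
def mseq (M : ℕ → ℝ) : ℕ → ℝ := fun k => M k / (Nat.factorial k : ℝ)

/-- Log-convexity of a sequence. -/
def LogConvexSeq (m : ℕ → ℝ) : Prop := ∀ k : ℕ, 1 ≤ k → m k ^ 2 ≤ m (k - 1) * m (k + 1)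

/-- `m k ^ (1/k) → ∞`. -/
def RootTendsToInfty (m : ℕ → ℝ) : Prop :=
  Tendsto (fun k : ℕ => m k ^ (1 / (k : ℝ))) atTop atTop

/-- Moderate growth of a sequence. -/
def ModerateGrowth (M : ℕ → ℝ) : Prop :=
  ∃ C : ℝ, 0 < C ∧ ∀ j k : ℕ, M (j + k) ≤ C ^ (j + k) * M j * M k

/-- Derivation closedness of a sequence. -/
def DerivClosed (M : ℕ → ℝ) : Prop :=
  ∃ C : ℝ, 0 < C ∧ ∀ k : ℕ, M (k + 1) ≤ C ^ (k + 1) * M k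

/-- Non-quasianalyticity: `∑_{k≥1} M (k-1) / M k = ∑_{k≥1} 1/μ_k < ∞`. -/
def NonQuasianalytic (M : ℕ → ℝ) : Prop := Summable fun k : ℕ => M k / M (k + 1)

/-- Quasianalyticity: `∑_{k≥1} 1/μ_k = ∞`. -/
def Quasianalytic (M : ℕ → ℝ) : Prop := ¬ NonQuasianalytic M

/-- The associated function `h_m (t) = inf_k m k * t ^ k`. -/
def hFun (m : ℕ → ℝ) (t : ℝ) : ℝ := ⨅ k : ℕ, m k * t ^ k

/-- `Γ̄_m (t) = min {k | h_m t = m k * t ^ k}`. -/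
def GammaBar (m : ℕ → ℝ) (t : ℝ) : ℕ := sInf {k : ℕ | hFun m t = m k * t ^ k}

/-- `Γ̲_m (t) = min {k | m (k+1) / m k ≥ 1 / t}`. -/
def GammaLow (m : ℕ → ℝ) (t : ℝ) : ℕ := sInf {k : ℕ | 1 / t ≤ m (k + 1) / m k}

/-- The set whose supremum is `mg (M, N)`. -/
def mgSet (M N : ℕ → ℝ) : Set ℝ :=
  {x | ∃ j k : ℕ, 1 ≤ j + k ∧ x = (M (j + k) / (N j * N k)) ^ (1 / (j + k : ℝ))}

/-- `mg (M, N) = sup_{j+k ≥ 1} (M (j+k) / (N j * N k)) ^ (1/(j+k))`. -/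
def mg (M N : ℕ → ℝ) : ℝ := sSup (mgSet M N)

/-- `mg (M, N) < ∞`. -/
def MgFinite (M N : ℕ → ℝ) : Prop := BddAbove (mgSet M N)

/-- A weight sequence is regular: `m k ^ (1/k) → ∞`, derivation closed, and
`Γ̄_m (C t) ≤ Γ̲_m t` for some `C ≥ 1`. -/
def RegularWS (M : ℕ → ℝ) : Prop :=
  RootTendsToInfty (mseq M) ∧ DerivClosed M ∧
    ∃ C : ℝ, 1 ≤ C ∧ ∀ t : ℝ, 0 < t → GammaBar (mseq M) (C * t) ≤ GammaLow (mseq M) t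

/-- `f` is of class `E^{M}` (Roumieu) on the open set `U`. -/
def RoumieuOn {E : Type*} [NormedAddCommGroup E] [NormedSpace ℝ E]
    (M : ℕ → ℝ) (f : E → ℂ) (U : Set E) : Prop :=
  ContDiffOn ℝ (⊤ : ℕ∞) f U ∧
    ∀ V : Set E, IsOpen V → IsCompact (closure V) → closure V ⊆ U →
      ∃ C σ : ℝ, 0 < C ∧ 0 < σ ∧
        ∀ x ∈ V, ∀ k : ℕ, ‖iteratedFDerivWithin ℝ k f U x‖ ≤ C * σ ^ k * M k

/-- `f` is of class `E^{(M)}` (Beurling) on the open set `U`. -/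
def BeurlingOn {E : Type*} [NormedAddCommGroup E] [NormedSpace ℝ E]
    (M : ℕ → ℝ) (f : E → ℂ) (U : Set E) : Prop :=
  ContDiffOn ℝ (⊤ : ℕ∞) f U ∧
    ∀ V : Set E, IsOpen V → IsCompact (closure V) → closure V ⊆ U →
      ∀ σ : ℝ, 0 < σ → ∃ C : ℝ, 0 < C ∧
        ∀ x ∈ V, ∀ k : ℕ, ‖iteratedFDerivWithin ℝ k f U x‖ ≤ C * σ ^ k * M k

/-- A weight matrix: a nonempty, pointwise totally ordered family of weight sequences. -/
def IsWeightMatrix (W : Set (ℕ → ℝ)) : Prop :=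
  W.Nonempty ∧ (∀ M ∈ W, IsWeightSeq M) ∧
    ∀ M ∈ W, ∀ N ∈ W, (∀ k, M k ≤ N k) ∨ (∀ k, N k ≤ M k)

/-- R-regularity of a weight matrix. -/
def RRegular (W : Set (ℕ → ℝ)) : Prop :=
  (∀ M ∈ W, RootTendsToInfty (mseq M)) ∧
    (∀ M ∈ W, ∃ N ∈ W, ∃ C : ℝ, 1 ≤ C ∧ ∀ j : ℕ, M (j + 1) ≤ C ^ (j + 1) * N j) ∧
    (∀ M ∈ W, ∃ N ∈ W, ∃ C : ℝ, 1 ≤ C ∧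
      ∀ t : ℝ, 0 < t → GammaBar (mseq N) (C * t) ≤ GammaLow (mseq M) t)

/-- B-regularity of a weight matrix. -/
def BRegular (W : Set (ℕ → ℝ)) : Prop :=
  (∀ M ∈ W, RootTendsToInfty (mseq M)) ∧
    (∀ M ∈ W, ∃ N ∈ W, ∃ C : ℝ, 1 ≤ C ∧ ∀ j : ℕ, N (j + 1) ≤ C ^ j * M j) ∧
    (∀ M ∈ W, ∃ N ∈ W, ∃ C : ℝ, 1 ≤ C ∧
      ∀ t : ℝ, 0 < t → GammaBar (mseq M) (C * t) ≤ GammaLow (mseq N) t)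

/-- R-moderate growth of a weight matrix. -/
def RModerateGrowth (W : Set (ℕ → ℝ)) : Prop := ∀ M ∈ W, ∃ N ∈ W, MgFinite M N

/-- B-moderate growth of a weight matrix. -/
def BModerateGrowth (W : Set (ℕ → ℝ)) : Prop := ∀ M ∈ W, ∃ N ∈ W, MgFinite N M

/-- `f` is of class `E^{W}` (Roumieu, weight matrix) on the open set `U`. -/
def MatrixRoumieuOn {E : Type*} [NormedAddCommGroup E] [NormedSpace ℝ E]
    (W : Set (ℕ → ℝ)) (f : E → ℂ) (U : Set E) : Prop :=
  ContDiffOn ℝ (⊤ : ℕ∞) f U ∧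
    ∀ V : Set E, IsOpen V → IsCompact (closure V) → closure V ⊆ U →
      ∃ M ∈ W, ∃ C σ : ℝ, 0 < C ∧ 0 < σ ∧
        ∀ x ∈ V, ∀ k : ℕ, ‖iteratedFDerivWithin ℝ k f U x‖ ≤ C * σ ^ k * M k

/-- `f` is of class `E^{(W)}` (Beurling, weight matrix) on the open set `U`. -/
def MatrixBeurlingOn {E : Type*} [NormedAddCommGroup E] [NormedSpace ℝ E]
    (W : Set (ℕ → ℝ)) (f : E → ℂ) (U : Set E) : Prop :=
  ContDiffOn ℝ (⊤ : ℕ∞) f U ∧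
    ∀ V : Set E, IsOpen V → IsCompact (closure V) → closure V ⊆ U →
      ∀ M ∈ W, ∀ σ : ℝ, 0 < σ → ∃ C : ℝ, 0 < C ∧
        ∀ x ∈ V, ∀ k : ℕ, ‖iteratedFDerivWithin ℝ k f U x‖ ≤ C * σ ^ k * M k

/-- `ω` is a weight function. -/
def IsWeightFunction (ω : ℝ → ℝ) : Prop :=
  ContinuousOn ω (Ici 0) ∧ MonotoneOn ω (Ici 0) ∧ (∀ t ∈ Ici (0 : ℝ), 0 ≤ ω t) ∧
    ((fun t => ω (2 * t)) =O[atTop] ω) ∧ (ω =o[atTop] fun t : ℝ => t) ∧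
    ((fun t => Real.log t) =o[atTop] ω) ∧ ConvexOn ℝ (Ici 0) fun t => ω (Real.exp t)

/-- The Young conjugate `φ*_ω (s) = sup_{t ≥ 0} (s t - ω (e^t))`. -/
def phiStar (ω : ℝ → ℝ) (s : ℝ) : ℝ := sSup ((fun t => s * t - ω (Real.exp t)) '' Ici 0)

/-- Non-quasianalyticity of a weight function. -/
def NonQuasianalyticW (ω : ℝ → ℝ) : Prop := IntegrableOn (fun t => ω t / t ^ 2) (Ici 1)

/-- `f` is of class `E^{ω}` (Roumieu) on the open set `U`. -/
def OmegaRoumieuOn {E : Type*} [NormedAddCommGroup E] [NormedSpace ℝ E]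
    (ω : ℝ → ℝ) (f : E → ℂ) (U : Set E) : Prop :=
  ContDiffOn ℝ (⊤ : ℕ∞) f U ∧
    ∀ V : Set E, IsOpen V → IsCompact (closure V) → closure V ⊆ U →
      ∃ C ρ : ℝ, 0 < C ∧ 0 < ρ ∧
        ∀ x ∈ V, ∀ k : ℕ,
          ‖iteratedFDerivWithin ℝ k f U x‖ ≤ C * Real.exp (phiStar ω (ρ * k) / ρ)

/-- `f` is of class `E^{(ω)}` (Beurling) on the open set `U`. -/
def OmegaBeurlingOn {E : Type*} [NormedAddCommGroup E] [NormedSpace ℝ E]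
    (ω : ℝ → ℝ) (f : E → ℂ) (U : Set E) : Prop :=
  ContDiffOn ℝ (⊤ : ℕ∞) f U ∧
    ∀ V : Set E, IsOpen V → IsCompact (closure V) → closure V ⊆ U →
      ∀ ρ : ℝ, 0 < ρ → ∃ C : ℝ, 0 < C ∧
        ∀ x ∈ V, ∀ k : ℕ,
          ‖iteratedFDerivWithin ℝ k f U x‖ ≤ C * Real.exp (phiStar ω (ρ * k) / ρ)

/-- The open ellipse `Ω_ε` with vertices `± cosh ε` and co-vertices `± i sinh ε`. -/
def OmegaE (ε : ℝ) : Set ℂ :=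
  {z : ℂ | (z.re / Real.cosh ε) ^ 2 + (z.im / Real.sinh ε) ^ 2 < 1}

/-- The sequence space `Λ^{M}`. -/
def Lambda (M : ℕ → ℝ) : Set (ℕ → ℂ) :=
  {c | ∃ ρ : ℝ, 0 < ρ ∧ ∃ C : ℝ, ∀ k, ‖c k‖ ≤ C * ρ ^ k * M k}

/-- `L(M)`: all non-quasianalytic weight sequences `N ≥ M` with `n = N/k!` log-convex. -/
def LM (M : ℕ → ℝ) : Set (ℕ → ℝ) :=
  {N | IsWeightSeq N ∧ NonQuasianalytic N ∧ (∀ k, M k ≤ N k) ∧ LogConvexSeq (mseq N)}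

/-- A quasianalytic weight sequence `M` is intersectable if `Λ^{M} = ⋂_{N ∈ L(M)} Λ^{N}`. -/
def Intersectable (M : ℕ → ℝ) : Prop := Lambda M = ⋂ N ∈ LM M, Lambda N

/-!
Cutting off Taylor expansions shows that a function belongs to the class of a concave weight `ω`
only if, for large `R`, its restrictions to lines agree up to an error `exp (-b * ω R)` with
functions that are bounded and holomorphic on discs of radius comparable to `ω R / R`; conversely,
by the two-constants theorem, the differences of consecutive such approximants (`R = 2 ^ n * S`)
sum to derivative bounds of the same class.

Approximability passes from `f ^ j` and `f ^ (j + 1)` to `f`. If `G` and `H` approximate the two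
powers, then `H * conj G / (|G| ^ 2 + η ^ 2)` is bounded and close to `f` on the real axis, and its
`∂̄`-derivative is controlled by the spherical derivative of `G`, whose energy is bounded
independently of `η`. Subtracting a solution of the `∂̄`-equation therefore yields holomorphic
approximants of `f`, with a smaller `b`. That `f` is smooth at all follows from the decay of its
finite differences through Fourier inversion, and polarization turns the bounds along lines into
bounds for the full Fréchet derivatives.
-/

section TwoConstants

open Complex Metric

/-- Holomorphic minorant of the harmonic measure of the diameter in the upper unit half-disc: its
real part is at most `1` on the diameter and at most `0` on the half-circle. It is the exponent in
the two-constants theorem. -/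
def halfDiscBarrier (z : ℂ) : ℂ := 1 - z ^ 2 + 2 * I * z

lemma halfDiscBarrier_re (z : ℂ) :
    (halfDiscBarrier z).re = 1 - z.re ^ 2 + z.im ^ 2 - 2 * z.im := by
  simp [halfDiscBarrier, pow_two]
  ring

lemma halfDiscBarrier_re_nonpos {z : ℂ} (hz : ‖z‖ = 1) (him : 0 ≤ z.im) :
    (halfDiscBarrier z).re ≤ 0 := by
  have hsq : z.re ^ 2 + z.im ^ 2 = 1 := by
    rw [← one_pow 2, ← hz, Complex.sq_norm, normSq_apply]; ring
  have him_le : z.im ≤ 1 := hz ▸ (le_abs_self _).trans (abs_im_le_norm z)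
  rw [halfDiscBarrier_re]
  nlinarith

lemma half_le_halfDiscBarrier_re {z : ℂ} (hz : ‖z‖ ≤ 1 / 8) : 1 / 2 ≤ (halfDiscBarrier z).re := by
  have hre := abs_le.1 ((abs_re_le_norm z).trans hz)
  have him := abs_le.1 ((abs_im_le_norm z).trans hz)
  rw [halfDiscBarrier_re]
  nlinarith [sq_nonneg z.im]

/-- The open upper half of the unit disc. -/
def upperHalfDisc : Set ℂ := {z | ‖z‖ < 1 ∧ 0 < z.im}

lemma isOpen_upperHalfDisc : IsOpen upperHalfDisc :=
  (isOpen_lt continuous_norm continuous_const).inter (isOpen_lt continuous_const continuous_im)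

lemma closure_upperHalfDisc_subset : closure upperHalfDisc ⊆ {z | ‖z‖ ≤ 1 ∧ 0 ≤ z.im} :=
  closure_minimal (fun _ h ↦ ⟨h.1.le, h.2.le⟩)
    ((isClosed_le continuous_norm continuous_const).inter
      (isClosed_le continuous_const continuous_im))

lemma isBounded_upperHalfDisc : Bornology.IsBounded upperHalfDisc :=
  (isBounded_ball (x := (0 : ℂ)) (r := 1)).subset fun z hz ↦ by simpa using hz.1

lemma frontier_upperHalfDisc_subset :
    frontier upperHalfDisc ⊆ {z | ‖z‖ = 1 ∧ 0 ≤ z.im} ∪ {z | ‖z‖ ≤ 1 ∧ z.im = 0} := by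
  rintro z ⟨hcl, hint⟩
  rw [isOpen_upperHalfDisc.interior_eq] at hint
  obtain ⟨hnorm, him⟩ := closure_upperHalfDisc_subset hcl
  rcases him.eq_or_lt with him0 | him_pos
  · exact .inr ⟨hnorm, him0.symm⟩
  · exact .inl ⟨hnorm.antisymm (not_lt.1 fun h ↦ hint ⟨h, him_pos⟩), him⟩

lemma ofReal_re_eq_self_of_im_eq_zero {z : ℂ} (hz : z.im = 0) : (z.re : ℂ) = z :=
  Complex.ext rfl (by simp [hz])

theorem norm_mul_rpow_le_of_upperHalfDisc {F : ℂ → ℂ} {C δ : ℝ} (hδ : 0 < δ) (hδC : δ ≤ C)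
    (hF : DiffContOnCl ℂ F upperHalfDisc)
    (hC : ∀ z, ‖z‖ = 1 → ‖F z‖ ≤ C) (hR : ∀ t : ℝ, |t| ≤ 1 → ‖F t‖ ≤ δ)
    {z : ℂ} (hz : z ∈ closure upperHalfDisc) :
    ‖F z‖ * (C / δ) ^ (halfDiscBarrier z).re ≤ C := by
  have hratio : 1 ≤ C / δ := (one_le_div hδ).2 hδC
  have hratio0 : 0 < C / δ := by linarith
  set Φ : ℂ → ℂ := fun w ↦ F w * exp (Real.log (C / δ) * halfDiscBarrier w)
  have hnorm (w : ℂ) : ‖Φ w‖ = ‖F w‖ * (C / δ) ^ (halfDiscBarrier w).re := by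
    simp [Φ, norm_exp, Real.rpow_def_of_pos hratio0]
  have hΦ : DiffContOnCl ℂ Φ upperHalfDisc := by
    have hexp : Differentiable ℂ fun w ↦ exp (Real.log (C / δ) * halfDiscBarrier w) := by
      unfold halfDiscBarrier; fun_prop
    exact ⟨hF.1.mul hexp.differentiableOn, hF.2.mul hexp.continuous.continuousOn⟩
  rw [← hnorm]
  refine norm_le_of_forall_mem_frontier_norm_le isBounded_upperHalfDisc hΦ (fun w hw ↦ ?_) hz
  rw [hnorm]
  rcases frontier_upperHalfDisc_subset hw with ⟨hw1, him⟩ | ⟨hw1, him⟩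
  · have hpow : (C / δ) ^ (halfDiscBarrier w).re ≤ 1 :=
      Real.rpow_le_one_of_one_le_of_nonpos hratio (halfDiscBarrier_re_nonpos hw1 him)
    calc ‖F w‖ * (C / δ) ^ (halfDiscBarrier w).re ≤ C * 1 := by
          gcongr
          · linarith
          · exact hC w hw1
      _ = C := mul_one C
  · have hδw : ‖F w‖ ≤ δ := by
      rw [← ofReal_re_eq_self_of_im_eq_zero him]
      exact hR _ ((abs_re_le_norm w).trans hw1)
    have hexponent : (halfDiscBarrier w).re ≤ 1 := by
      rw [halfDiscBarrier_re, him]; nlinarith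
    calc ‖F w‖ * (C / δ) ^ (halfDiscBarrier w).re ≤ δ * (C / δ) ^ (1 : ℝ) := by gcongr
      _ = C := by rw [Real.rpow_one, mul_div_cancel₀ _ hδ.ne']

lemma norm_le_sqrt_mul_of_mem_closure_upperHalfDisc {F : ℂ → ℂ} {C δ : ℝ} (hδ : 0 < δ)
    (hδC : δ ≤ C) (hF : DiffContOnCl ℂ F upperHalfDisc)
    (hC : ∀ z, ‖z‖ = 1 → ‖F z‖ ≤ C) (hR : ∀ t : ℝ, |t| ≤ 1 → ‖F t‖ ≤ δ)
    {z : ℂ} (hz : z ∈ closure upperHalfDisc) (hz8 : ‖z‖ ≤ 1 / 8) : ‖F z‖ ≤ √(C * δ) := by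
  have hC0 : 0 < C := hδ.trans_le hδC
  have hratio : 0 < C / δ := by positivity
  have hpow : √(C / δ) ≤ (C / δ) ^ (halfDiscBarrier z).re := by
    rw [Real.sqrt_eq_rpow]
    exact Real.rpow_le_rpow_of_exponent_le ((one_le_div hδ).2 hδC) (half_le_halfDiscBarrier_re hz8)
  have hsqrt : √(C * δ) * √(C / δ) = C := by
    rw [← Real.sqrt_mul (by positivity), show C * δ * (C / δ) = C ^ 2 by field_simp,
      Real.sqrt_sq hC0.le]
  refine le_of_mul_le_mul_right ?_ (Real.sqrt_pos.2 hratio)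
  calc ‖F z‖ * √(C / δ) ≤ ‖F z‖ * (C / δ) ^ (halfDiscBarrier z).re := by gcongr
    _ ≤ C := norm_mul_rpow_le_of_upperHalfDisc hδ hδC hF hC hR hz
    _ = √(C * δ) * √(C / δ) := hsqrt.symm

lemma mem_closure_upperHalfDisc {z : ℂ} (hz : ‖z‖ < 1) (him : 0 ≤ z.im) :
    z ∈ closure upperHalfDisc := by
  have hlim : Tendsto (fun t : ℝ ↦ z + t * I) (nhdsWithin 0 (Ioi 0)) (nhds z) := by
    have : Continuous fun t : ℝ ↦ z + t * I := by fun_prop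
    simpa using (this.tendsto 0).mono_left nhdsWithin_le_nhds
  refine mem_closure_of_tendsto hlim ?_
  filter_upwards [self_mem_nhdsWithin,
    hlim.eventually (isOpen_ball.mem_nhds (by simpa using hz : z ∈ ball (0 : ℂ) 1))] with t ht hball
  exact ⟨by simpa using hball, by simpa using add_pos_of_nonneg_of_pos him ht⟩

theorem norm_le_sqrt_mul_of_norm_le_on_reals {F : ℂ → ℂ} {r C δ : ℝ} (hδ : 0 < δ)
    (hδC : δ ≤ C) (hF : DifferentiableOn ℂ F (ball 0 r))
    (hC : ∀ z ∈ ball (0 : ℂ) r, ‖F z‖ ≤ C) (hR : ∀ t : ℝ, |t| < r → ‖F t‖ ≤ δ)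
    {z : ℂ} (hr : 0 < r) (hz : ‖z‖ ≤ r / 16) : ‖F z‖ ≤ √(C * δ) := by
  wlog him : 0 ≤ z.im generalizing F z
  · simpa using this (F := fun w ↦ F (-w)) (z := -z)
      (hF.comp differentiable_id.neg.differentiableOn fun w hw ↦ by simpa using hw)
      (fun w hw ↦ hC _ (by simpa using hw))
      (fun t ht ↦ by simpa using hR (-t) (by simpa using ht)) (by simpa using hz)
      (by simpa using (not_le.1 him).le)
  set s : ℂ := ((r / 2 : ℝ) : ℂ) with hs
  have hsnorm : ‖s‖ = r / 2 := by rw [hs, norm_real, Real.norm_of_nonneg (by positivity)]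
  have hs0 : s ≠ 0 := norm_pos_iff.1 (by rw [hsnorm]; positivity)
  have hmaps (w : ℂ) (hw : ‖w‖ ≤ 1) : s * w ∈ ball (0 : ℂ) r := by
    rw [mem_ball_zero_iff, norm_mul, hsnorm]; nlinarith
  have hsub : closure upperHalfDisc ⊆ {w | ‖w‖ ≤ 1} :=
    fun w hw ↦ (closure_upperHalfDisc_subset hw).1
  have hscaled : DifferentiableOn ℂ (fun w ↦ F (s * w)) {w | ‖w‖ ≤ 1} :=
    hF.comp (by fun_prop) hmaps
  have hzs : ‖s⁻¹ * z‖ ≤ 1 / 8 := by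
    rw [norm_mul, norm_inv, hsnorm, ← div_eq_inv_mul, div_le_iff₀ (by positivity)]; linarith
  have hzmem : s⁻¹ * z ∈ closure upperHalfDisc :=
    mem_closure_upperHalfDisc (by linarith) (by
      rw [hs, ← ofReal_inv, im_ofReal_mul]; positivity)
  have key := norm_le_sqrt_mul_of_mem_closure_upperHalfDisc (F := fun w ↦ F (s * w)) hδ hδC
    ⟨hscaled.mono (subset_closure.trans hsub), hscaled.continuousOn.mono hsub⟩
    (fun w hw ↦ hC _ (hmaps w hw.le))
    (fun t ht ↦ by
      rw [hs, ← ofReal_mul]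
      refine hR _ ?_
      rw [abs_mul, abs_of_pos (by positivity : 0 < r / 2)]; nlinarith) hzmem hzs
  simpa only [mul_inv_cancel_left₀ hs0] using key

theorem norm_iteratedDeriv_le_of_norm_le_on_reals {F : ℂ → ℂ} {r C δ : ℝ} (hr : 0 < r)
    (hδ : 0 < δ) (hδC : δ ≤ C) (hF : DifferentiableOn ℂ F (ball 0 r))
    (hC : ∀ z ∈ ball (0 : ℂ) r, ‖F z‖ ≤ C) (hR : ∀ t : ℝ, |t| < r → ‖F t‖ ≤ δ) (k : ℕ) :
    ‖iteratedDeriv k F 0‖ ≤ k.factorial * √(C * δ) / (r / 16) ^ k := by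
  have hsub : closedBall (0 : ℂ) (r / 16) ⊆ ball 0 r := closedBall_subset_ball (by linarith)
  refine norm_iteratedDeriv_le_of_forall_mem_sphere_norm_le k (by positivity)
    ⟨hF.mono (ball_subset_closedBall.trans hsub),
      hF.continuousOn.mono (closure_ball_subset_closedBall.trans hsub)⟩ fun z hz ↦ ?_
  exact norm_le_sqrt_mul_of_norm_le_on_reals hδ hδC hF hC hR hr (mem_sphere_zero_iff_norm.1 hz).le

end TwoConstants

section Wirtinger

open Complex

/-- The first-order operator `∂ₓ + c ∂ᵧ` on functions `ℂ → ℂ`. Up to the factor `2`, which is left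
out to avoid fractions, `c = I` gives the Wirtinger derivative `∂̄` and `c = -I` gives `∂`. -/
def wirtinger (c : ℂ) (u : ℂ → ℂ) (z : ℂ) : ℂ := fderiv ℝ u z 1 + c * fderiv ℝ u z I

/-- The Cauchy–Riemann operator, normalised as `2 ∂̄ = ∂ₓ + I ∂ᵧ`. -/
abbrev dbar : (ℂ → ℂ) → ℂ → ℂ := wirtinger I

/-- The conjugate Cauchy–Riemann operator, normalised as `2 ∂ = ∂ₓ - I ∂ᵧ`. -/
abbrev del : (ℂ → ℂ) → ℂ → ℂ := wirtinger (-I)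

variable {c : ℂ} {u v : ℂ → ℂ}

lemma wirtinger_mul {z : ℂ} (hu : DifferentiableAt ℝ u z) (hv : DifferentiableAt ℝ v z) :
    wirtinger c (fun w ↦ u w * v w) z = u z * wirtinger c v z + v z * wirtinger c u z := by
  simp only [wirtinger, fderiv_fun_mul hu hv, add_apply,
    smul_apply, smul_eq_mul]
  ring

lemma wirtinger_congr {z : ℂ} (h : u =ᶠ[nhds z] v) : wirtinger c u z = wirtinger c v z := by
  simp only [wirtinger, h.fderiv_eq]

lemma contDiff_wirtinger {m n : WithTop ℕ∞} (hu : ContDiff ℝ n u) (hmn : m + 1 ≤ n) :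
    ContDiff ℝ m (wirtinger c u) := by
  have := hu.fderiv_right hmn
  unfold wirtinger
  fun_prop

lemma continuous_wirtinger (hu : ContDiff ℝ 1 u) : Continuous (wirtinger c u) :=
  (contDiff_wirtinger hu (m := 0) (by simp)).continuous

lemma tsupport_wirtinger_subset : tsupport (wirtinger c u) ⊆ tsupport u := by
  intro z hz
  contrapose! hz
  rw [notMem_tsupport_iff_eventuallyEq] at hz ⊢
  filter_upwards [hz.eventually_nhds] with w hw
  rw [wirtinger_congr hw]
  simp [wirtinger]

lemma hasCompactSupport_wirtinger (hu : HasCompactSupport u) :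
    HasCompactSupport (wirtinger c u) :=
  (hu.fderiv_apply (𝕜 := ℝ) 1).add ((hu.fderiv_apply (𝕜 := ℝ) I).mul_left)

lemma integral_wirtinger_mul_eq_neg (hu : ContDiff ℝ 1 u) (hv : ContDiff ℝ 1 v)
    (hc : HasCompactSupport u) :
    ∫ z, wirtinger c u z * v z = -∫ z, u z * wirtinger c v z := by
  have := hu.continuous_fderiv one_ne_zero
  have := hv.continuous_fderiv one_ne_zero
  have hint_left (e : ℂ) : Integrable fun z ↦ fderiv ℝ u z e * v z :=
    Continuous.integrable_of_hasCompactSupport ((by fun_prop : Continuous _).mul hv.continuous)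
      (hc.fderiv_apply (𝕜 := ℝ) e).mul_right
  have hint_right (e : ℂ) : Integrable fun z ↦ u z * fderiv ℝ v z e :=
    Continuous.integrable_of_hasCompactSupport (hu.continuous.mul (by fun_prop)) hc.mul_right
  have hparts (e : ℂ) : ∫ z, u z * fderiv ℝ v z e = -∫ z, fderiv ℝ u z e * v z :=
    integral_mul_fderiv_eq_neg_fderiv_mul_of_integrable (hint_left e) (hint_right e)
      (Continuous.integrable_of_hasCompactSupport (hu.continuous.mul hv.continuous) hc.mul_right)
      (fun x _ ↦ hu.differentiable one_ne_zero x) (fun x _ ↦ hv.differentiable one_ne_zero x)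
  have hexpand_left : ∫ z, wirtinger c u z * v z =
      (∫ z, fderiv ℝ u z 1 * v z) + c * ∫ z, fderiv ℝ u z I * v z := by
    rw [← integral_const_mul, ← integral_add (hint_left 1) ((hint_left I).const_mul c)]
    exact integral_congr_ae (ae_of_all _ fun z ↦ by simp only [wirtinger]; ring)
  have hexpand_right : ∫ z, u z * wirtinger c v z =
      (∫ z, u z * fderiv ℝ v z 1) + c * ∫ z, u z * fderiv ℝ v z I := by
    rw [← integral_const_mul, ← integral_add (hint_right 1) ((hint_right I).const_mul c)]
    exact integral_congr_ae (ae_of_all _ fun z ↦ by simp only [wirtinger]; ring)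
  rw [hexpand_left, hexpand_right, hparts, hparts]
  ring

end Wirtinger

section RegularizedQuotient

open Complex ComplexConjugate

/-- The smooth regularisation `h g̅ / (|g|² + η²)` of the quotient `h / g`. -/
def regDiv (η : ℝ) (h g : ℂ) : ℂ := h * conj g / (g * conj g + (η : ℂ) ^ 2)

lemma mul_conj_add_sq (g : ℂ) (η : ℝ) :
    g * conj g + (η : ℂ) ^ 2 = ((‖g‖ ^ 2 + η ^ 2 : ℝ) : ℂ) := by
  rw [mul_conj, normSq_eq_norm_sq]; push_cast; rfl

lemma mul_conj_add_sq_ne_zero (g : ℂ) {η : ℝ} (hη : 0 < η) : g * conj g + (η : ℂ) ^ 2 ≠ 0 := by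
  rw [mul_conj_add_sq]
  exact_mod_cast (by positivity : 0 < ‖g‖ ^ 2 + η ^ 2).ne'

lemma norm_regDiv (η : ℝ) (h g : ℂ) : ‖regDiv η h g‖ = ‖h‖ * ‖g‖ / (‖g‖ ^ 2 + η ^ 2) := by
  rw [regDiv, mul_conj_add_sq, norm_div, norm_mul, RCLike.norm_conj, norm_real,
    Real.norm_of_nonneg (by positivity)]

variable {G H : ℂ → ℂ} {η : ℝ}

lemma contDiff_regDiv (hη : 0 < η) (hG : Differentiable ℂ G) (hH : Differentiable ℂ H) {n : ℕ∞} :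
    ContDiff ℝ n fun z ↦ regDiv η (H z) (G z) := by
  have hG' : ContDiff ℝ n G := hG.contDiff.restrict_scalars ℝ
  have hH' : ContDiff ℝ n H := hH.contDiff.restrict_scalars ℝ
  have hconj : ContDiff ℝ n fun z ↦ conj (G z) := conjCLE.contDiff.comp hG'
  exact (hH'.mul hconj).mul (((hG'.mul hconj).add contDiff_const).inv
    fun z ↦ mul_conj_add_sq_ne_zero _ hη)

lemma dbar_regDiv (hη : 0 < η) (hG : Differentiable ℂ G) (hH : Differentiable ℂ H) (z : ℂ) :
    dbar (fun w ↦ regDiv η (H w) (G w)) z =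
      2 * H z * η ^ 2 * conj (deriv G z) / (G z * conj (G z) + (η : ℂ) ^ 2) ^ 2 := by
  have hG' := (hG z).hasDerivAt.hasFDerivAt.restrictScalars ℝ
  have hH' := (hH z).hasDerivAt.hasFDerivAt.restrictScalars ℝ
  have hconj : HasFDerivAt (fun w ↦ conj (G w)) _ z := (conjCLE.hasFDerivAt (x := G z)).comp z hG'
  have hne := mul_conj_add_sq_ne_zero (G z) hη
  have hinv := (hasDerivAt_inv hne).hasFDerivAt.restrictScalars ℝ
  have hquot : HasFDerivAt (fun w ↦ regDiv η (H w) (G w)) _ z :=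
    (hH'.mul hconj).mul (hinv.comp z ((hG'.mul hconj).add_const ((η : ℂ) ^ 2)))
  simp only [wirtinger, hquot.fderiv]
  simp
  field_simp
  ring_nf
  simp only [I_sq]
  ring

end RegularizedQuotient

section CauchyPompeiu

open Complex ComplexConjugate

/-- The profile of the approximate identity produced by `∂̄` of the regularised Cauchy kernel. -/
def cauchyProfile (x : ℂ) : ℝ := 2 / (1 + ‖x‖ ^ 2) ^ 2

lemma cauchyProfile_nonneg (x : ℂ) : 0 ≤ cauchyProfile x := by unfold cauchyProfile; positivity

lemma integral_cauchyProfile : ∫ x, cauchyProfile x = 2 * Real.pi := by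
  have hderiv (y : ℝ) : HasDerivAt (fun y : ℝ ↦ -(1 + y ^ 2)⁻¹) (y * (2 / (1 + y ^ 2) ^ 2)) y := by
    have hden := ((hasDerivAt_id y).fun_pow 2).const_add 1
    exact (hden.fun_inv (by positivity)).fun_neg.congr_deriv (by simp; ring)
  have hlim : Tendsto (fun y : ℝ ↦ -(1 + y ^ 2)⁻¹) atTop (nhds 0) := by
    simpa using (tendsto_inv_atTop_zero.comp (tendsto_atTop_add_const_left _ (1 : ℝ)
      (tendsto_pow_atTop (α := ℝ) two_ne_zero))).neg
  have hradial : ∫ y in Ioi (0 : ℝ), y * (2 / (1 + y ^ 2) ^ 2) = 1 := by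
    rw [integral_Ioi_of_hasDerivAt_of_nonneg' (fun y _ ↦ hderiv y)
      (fun y hy ↦ mul_nonneg (le_of_lt hy) (by positivity)) hlim]
    norm_num
  have hpolar := integral_fun_norm_addHaar (volume : Measure ℂ) fun y ↦ 2 / (1 + y ^ 2) ^ 2
  simp only [finrank_real_complex, Nat.add_one_sub_one, pow_one, smul_eq_mul, hradial] at hpolar
  rw [show (∫ x, cauchyProfile x) = _ from hpolar, Measure.real, Complex.volume_ball]
  simp

lemma tendsto_sq_norm_mul_cauchyProfile :
    Tendsto (fun x ↦ ‖x‖ ^ 2 * cauchyProfile x) (Bornology.cobounded ℂ) (nhds 0) := by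
  have hbound (x : ℂ) : ‖x‖ ^ 2 * cauchyProfile x ≤ 2 * (1 + ‖x‖ ^ 2)⁻¹ := by
    rw [cauchyProfile, ← div_eq_mul_inv, ← mul_div_assoc, div_le_div_iff₀ (by positivity)
      (by positivity)]
    nlinarith [sq_nonneg ‖x‖]
  refine squeeze_zero (fun x ↦ mul_nonneg (by positivity) (cauchyProfile_nonneg x)) hbound ?_
  have hlim : Tendsto (fun x : ℂ ↦ 1 + ‖x‖ ^ 2) (Bornology.cobounded ℂ) atTop :=
    tendsto_atTop_add_const_left _ _
      ((tendsto_pow_atTop two_ne_zero).comp tendsto_norm_cobounded_atTop)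
  simpa using (tendsto_inv_atTop_zero.comp hlim).const_mul 2

lemma integrable_mul_inv_norm_sub {g : ℂ → ℝ} (hg : Continuous g) (hc : HasCompactSupport g)
    (z : ℂ) : Integrable fun w ↦ g w * ‖w - z‖⁻¹ := by
  have hloc : LocallyIntegrable fun w : ℂ ↦ ‖w‖⁻¹ :=
    locallyIntegrable_of_norm_le_rpow (α := 1) (C := 1) (by simp) (by simp)
      (ae_of_all _ fun x ↦ by simp [Real.rpow_neg_one]) measurable_norm.inv.aestronglyMeasurable
  have hshift := hloc.integrable_smul_left_of_hasCompactSupport (g := fun w ↦ g (w + z))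
    (by fun_prop) (hc.comp_homeomorph (Homeomorph.addRight z))
  simpa using hshift.comp_sub_right z

variable {u : ℂ → ℂ}

lemma tendsto_integral_mul_regDiv (hu : Continuous u) (hc : HasCompactSupport u) (z : ℂ) :
    Tendsto (fun c : ℝ ↦ ∫ w, u w * regDiv c⁻¹ 1 (w - z)) atTop
      (nhds (∫ w, u w * (w - z)⁻¹)) := by
  refine tendsto_integral_filter_of_dominated_convergence (fun w ↦ ‖u w‖ * ‖w - z‖⁻¹) ?_ ?_
    (integrable_mul_inv_norm_sub hu.norm hc.norm z) ?_
  · filter_upwards [eventually_gt_atTop 0] with c hc0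
    exact (hu.mul (contDiff_regDiv (n := 0) (inv_pos.2 hc0) (by fun_prop : Differentiable ℂ (· - z))
      (differentiable_const 1)).continuous).aestronglyMeasurable
  · filter_upwards [eventually_gt_atTop 0] with c hc0
    refine ae_of_all _ fun w ↦ ?_
    rw [norm_mul, norm_regDiv, norm_one, one_mul]
    gcongr
    rcases (norm_nonneg (w - z)).eq_or_lt' with h | h
    · simp [h]
    · rw [← one_div ‖w - z‖, div_le_div_iff₀ (by positivity) h]
      nlinarith [sq_nonneg c⁻¹]
  · filter_upwards [Measure.ae_ne volume z] with w hw
    have hwz : w - z ≠ 0 := sub_ne_zero.2 hw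
    have hwz' : conj (w - z) ≠ 0 := (map_ne_zero _).2 hwz
    have hlim : Tendsto (fun c : ℝ ↦ (w - z) * conj (w - z) + ((c⁻¹ : ℝ) : ℂ) ^ 2) atTop
        (nhds ((w - z) * conj (w - z) + ((0 : ℝ) : ℂ) ^ 2)) :=
      tendsto_const_nhds.add (((continuous_ofReal.tendsto 0).comp tendsto_inv_atTop_zero).pow 2)
    have hquot := (tendsto_const_nhds (x := 1 * conj (w - z))).div hlim (by
      rw [ofReal_zero, zero_pow two_ne_zero, add_zero]; exact mul_ne_zero hwz hwz')
    have hvalue : 1 * conj (w - z) / ((w - z) * conj (w - z) + ((0 : ℝ) : ℂ) ^ 2) = (w - z)⁻¹ := by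
      rw [ofReal_zero, zero_pow two_ne_zero, add_zero, one_mul, div_mul_cancel_right₀ hwz']
    rw [hvalue] at hquot
    exact hquot.const_mul (u w)

lemma dbar_regDiv_one_sub {c : ℝ} (hc : 0 < c) (z w : ℂ) :
    dbar (fun w ↦ regDiv c⁻¹ 1 (w - z)) w = c ^ 2 * cauchyProfile (c • (z - w)) := by
  rw [dbar_regDiv (G := (· - z)) (H := fun _ ↦ 1) (inv_pos.2 hc) (by fun_prop) (by fun_prop),
    mul_conj_add_sq, deriv_sub_const, deriv_id'', cauchyProfile, norm_smul, norm_sub_rev z w,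
    Real.norm_of_nonneg hc.le, map_one]
  have hc' : (c : ℂ) ≠ 0 := by exact_mod_cast hc.ne'
  have hden : 1 + (c * ‖w - z‖) ^ 2 = c ^ 2 * (‖w - z‖ ^ 2 + c⁻¹ ^ 2) := by field_simp; ring
  have hne : ((‖w - z‖ ^ 2 + c⁻¹ ^ 2 : ℝ) : ℂ) ≠ 0 := by
    exact_mod_cast (by positivity : 0 < ‖w - z‖ ^ 2 + c⁻¹ ^ 2).ne'
  rw [hden]
  push_cast at hne ⊢
  field_simp

lemma tendsto_integral_mul_dbar_regDiv (hu : Continuous u) (hc : HasCompactSupport u) (z : ℂ) :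
    Tendsto (fun c : ℝ ↦ ∫ w, u w * dbar (fun w ↦ regDiv c⁻¹ 1 (w - z)) w) atTop
      (nhds (2 * Real.pi * u z)) := by
  have hlim := tendsto_integral_comp_smul_smul_of_integrable' (μ := (volume : Measure ℂ))
    (φ := fun x ↦ (2 * Real.pi)⁻¹ * cauchyProfile x)
    (fun x ↦ mul_nonneg (by positivity) (cauchyProfile_nonneg x))
    (by rw [integral_const_mul, integral_cauchyProfile, inv_mul_cancel₀ (by positivity)])
    (by simpa [mul_left_comm] using tendsto_sq_norm_mul_cauchyProfile.const_mul (2 * Real.pi)⁻¹)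
    (g := u) (x₀ := z) (hu.integrable_of_hasCompactSupport hc) hu.continuousAt
  refine (hlim.const_mul (2 * Real.pi : ℂ)).congr' ?_
  filter_upwards [eventually_gt_atTop 0] with c hc0
  rw [← integral_const_mul]
  refine integral_congr_ae (ae_of_all _ fun w ↦ ?_)
  have hpi : (Real.pi : ℂ) ≠ 0 := by exact_mod_cast Real.pi_ne_zero
  simp only [dbar_regDiv_one_sub hc0, real_smul, finrank_real_complex]
  push_cast
  field_simp

theorem integral_dbar_mul_inv_sub (hu : ContDiff ℝ 1 u) (hc : HasCompactSupport u) (z : ℂ) :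
    ∫ w, dbar u w * (w - z)⁻¹ = -(2 * Real.pi * u z) := by
  refine tendsto_nhds_unique
    (tendsto_integral_mul_regDiv (continuous_wirtinger hu) (hasCompactSupport_wirtinger hc) z) ?_
  refine (tendsto_integral_mul_dbar_regDiv hu.continuous hc z).neg.congr' ?_
  filter_upwards [eventually_gt_atTop 0] with c hc0
  exact (integral_wirtinger_mul_eq_neg hu (contDiff_regDiv (n := 1) (inv_pos.2 hc0)
    (by fun_prop : Differentiable ℂ (· - z)) (differentiable_const 1)) hc).symm

end CauchyPompeiu

section SphericalDerivative

open Complex ComplexConjugate Metric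

/-- The spherical derivative of `G / η`. Its square is the density of the pullback of the area of
the Riemann sphere, so its local `L²` norm is controlled by the growth of `G`. -/
def sphericalDeriv (η : ℝ) (G : ℂ → ℂ) (z : ℂ) : ℝ := ‖deriv G z‖ * η / (‖G z‖ ^ 2 + η ^ 2)

variable {G : ℂ → ℂ} {η : ℝ}

lemma sphericalDeriv_nonneg (hη : 0 ≤ η) (z : ℂ) : 0 ≤ sphericalDeriv η G z := by
  unfold sphericalDeriv; positivity

lemma sphericalDeriv_le_div (hη : 0 < η) (z : ℂ) :
    sphericalDeriv η G z ≤ ‖deriv G z‖ / η := by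
  rw [sphericalDeriv, div_le_div_iff₀ (by positivity) hη, mul_assoc]
  gcongr
  nlinarith [sq_nonneg ‖G z‖]

lemma continuous_sphericalDeriv (hη : 0 < η) (hG : Differentiable ℂ G) :
    Continuous (sphericalDeriv η G) := by
  have hderiv := (hG.contDiff (n := 1)).continuous_deriv le_rfl
  have := hG.continuous
  exact (by fun_prop : Continuous fun z ↦ ‖deriv G z‖ * η).div (by fun_prop) fun z ↦ by positivity

lemma contDiff_log_norm_sq_add (hη : 0 < η) (hG : Differentiable ℂ G) {n : ℕ∞} :
    ContDiff ℝ n fun z ↦ ((Real.log (‖G z‖ ^ 2 + η ^ 2) : ℝ) : ℂ) := by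
  have hG' : ContDiff ℝ n G := hG.contDiff.restrict_scalars ℝ
  exact ofRealCLM.contDiff.comp
    (((hG'.norm_sq ℝ).add contDiff_const).log fun z ↦ by positivity)

lemma del_log_norm_sq_add (hη : 0 < η) (hG : Differentiable ℂ G) (z : ℂ) :
    del (fun w ↦ ((Real.log (‖G w‖ ^ 2 + η ^ 2) : ℝ) : ℂ)) z =
      2 * regDiv η (deriv G z) (G z) := by
  have hlog := ((((hG z).hasDerivAt.hasFDerivAt.restrictScalars ℝ).norm_sq).add_const
    (η ^ 2)).log (by positivity)
  have hcast : HasFDerivAt (fun w ↦ ((Real.log (‖G w‖ ^ 2 + η ^ 2) : ℝ) : ℂ)) _ z :=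
    ofRealCLM.hasFDerivAt.comp z hlog
  have hden : ‖G z‖ ^ 2 + η ^ 2 ≠ 0 := by positivity
  rw [del, wirtinger, hcast.fderiv, regDiv, mul_conj_add_sq]
  generalize ‖G z‖ ^ 2 + η ^ 2 = D at *
  have hD : (D : ℂ) ≠ 0 := by exact_mod_cast hden
  simp [Complex.inner]
  field_simp
  apply Complex.ext
  · simp
  · simp
    ring

lemma dbar_regDiv_deriv (hη : 0 < η) (hG : Differentiable ℂ G) (z : ℂ) :
    dbar (fun w ↦ regDiv η (deriv G w) (G w)) z = 2 * (sphericalDeriv η G z : ℂ) ^ 2 := by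
  have hnorm : deriv G z * conj (deriv G z) = (‖deriv G z‖ : ℂ) ^ 2 := by
    rw [mul_conj, normSq_eq_norm_sq]; push_cast; rfl
  rw [dbar_regDiv hη hG hG.deriv, mul_conj_add_sq, sphericalDeriv]
  push_cast
  rw [div_pow, mul_pow, ← hnorm]
  ring

/-- The Laplacian of `log (‖G‖² + η²)` is four times the square of the spherical derivative. -/
theorem four_mul_integral_mul_sphericalDeriv_sq {χ : ℂ → ℂ} (hχ : ContDiff ℝ 2 χ)
    (hc : HasCompactSupport χ) (hη : 0 < η) (hG : Differentiable ℂ G) :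
    4 * ∫ z, χ z * (sphericalDeriv η G z : ℂ) ^ 2 =
      ∫ z, del (dbar χ) z * ((Real.log (‖G z‖ ^ 2 + η ^ 2) : ℝ) : ℂ) := by
  have hχ' : ContDiff ℝ 1 (dbar χ) := contDiff_wirtinger hχ one_add_one_eq_two.le
  have hlog := contDiff_log_norm_sq_add (n := 1) hη hG
  have hquot := contDiff_regDiv (n := 1) hη hG hG.deriv
  calc 4 * ∫ z, χ z * (sphericalDeriv η G z : ℂ) ^ 2
      = 2 * ∫ z, χ z * dbar (fun w ↦ regDiv η (deriv G w) (G w)) z := by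
        rw [← integral_const_mul, ← integral_const_mul]
        refine integral_congr_ae (ae_of_all _ fun z ↦ ?_)
        simp only [dbar_regDiv_deriv hη hG]
        ring
    _ = -∫ z, dbar χ z * del (fun w ↦ ((Real.log (‖G w‖ ^ 2 + η ^ 2) : ℝ) : ℂ)) z := by
        rw [← neg_eq_iff_eq_neg.2 (integral_wirtinger_mul_eq_neg (hχ.of_le one_le_two) hquot hc),
          mul_neg, ← integral_const_mul]
        refine congr_arg Neg.neg (integral_congr_ae (ae_of_all _ fun z ↦ ?_))
        simp only [del_log_norm_sq_add hη hG]
        ring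
    _ = _ := (integral_wirtinger_mul_eq_neg hχ' hlog (hasCompactSupport_wirtinger hc)).symm

lemma integral_mul_sphericalDeriv_sq_le {χ : ℂ → ℝ} (hχ : ContDiff ℝ 2 χ)
    (hc : HasCompactSupport χ) (hχ0 : ∀ z, 0 ≤ χ z) (hη : 0 < η) (hG : Differentiable ℂ G) {B : ℝ}
    (hB : ∀ z ∈ tsupport χ, |Real.log (‖G z‖ ^ 2 + η ^ 2)| ≤ B) :
    4 * ∫ z, χ z * sphericalDeriv η G z ^ 2 ≤ (∫ z, ‖del (dbar fun z ↦ (χ z : ℂ)) z‖) * B := by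
  have hχC : ContDiff ℝ 2 fun z ↦ (χ z : ℂ) := ofRealCLM.contDiff.comp hχ
  have hcC : HasCompactSupport fun z ↦ (χ z : ℂ) := hc.comp_left (g := ofReal) ofReal_zero
  have hident := four_mul_integral_mul_sphericalDeriv_sq hχC hcC hη hG
  have hcast : ∫ z, (χ z : ℂ) * (sphericalDeriv η G z : ℂ) ^ 2 =
      ((∫ z, χ z * sphericalDeriv η G z ^ 2 : ℝ) : ℂ) := by
    rw [← integral_complex_ofReal]; push_cast; rfl
  have hnonneg : 0 ≤ ∫ z, χ z * sphericalDeriv η G z ^ 2 :=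
    integral_nonneg fun z ↦ mul_nonneg (hχ0 z) (sq_nonneg _)
  have hnorm : 4 * ∫ z, χ z * sphericalDeriv η G z ^ 2 =
      ‖∫ z, del (dbar fun z ↦ (χ z : ℂ)) z * ((Real.log (‖G z‖ ^ 2 + η ^ 2) : ℝ) : ℂ)‖ := by
    rw [← hident, hcast, norm_mul, norm_real, Real.norm_of_nonneg hnonneg]; simp
  rw [hnorm, ← integral_mul_const]
  have hcont : Continuous (del (dbar fun z ↦ (χ z : ℂ))) :=
    continuous_wirtinger (contDiff_wirtinger hχC one_add_one_eq_two.le)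
  refine norm_integral_le_of_norm_le ((hcont.integrable_of_hasCompactSupport
    (hasCompactSupport_wirtinger (hasCompactSupport_wirtinger hcC))).norm.mul_const B)
    (ae_of_all _ fun z ↦ ?_)
  rw [norm_mul, norm_real, Real.norm_eq_abs]
  by_cases hz : z ∈ tsupport χ
  · gcongr
    exact hB z hz
  · have hz' : z ∉ tsupport (del (dbar fun z ↦ (χ z : ℂ))) := fun h ↦ hz <|
      closure_mono (Function.support_comp_subset ofReal_zero χ)
        (tsupport_wirtinger_subset (tsupport_wirtinger_subset h))
    simp [image_eq_zero_of_notMem_tsupport hz']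

lemma abs_log_norm_sq_add_le {a C : ℝ} (ha : 0 < a) {g : ℂ} (hg : ‖g‖ ≤ C)
    (hη : 0 < η) (hη1 : η ≤ 1) :
    |Real.log (‖g‖ ^ 2 + η ^ 2)| ≤ (Real.log (C ^ 2 + 1) + 2 / a) * η ^ (-a) := by
  have hC : 0 ≤ C := (norm_nonneg g).trans hg
  have hpow : 1 ≤ η ^ (-a) := Real.one_le_rpow_of_pos_of_le_one_of_nonpos hη hη1 (by linarith)
  have hlogC : 0 ≤ Real.log (C ^ 2 + 1) := Real.log_nonneg (by nlinarith)
  have hlower : Real.log (η ^ 2) ≤ Real.log (‖g‖ ^ 2 + η ^ 2) :=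
    Real.log_le_log (by positivity) (by nlinarith [sq_nonneg ‖g‖])
  have hupper : Real.log (‖g‖ ^ 2 + η ^ 2) ≤ Real.log (C ^ 2 + 1) :=
    Real.log_le_log (by positivity) (by nlinarith [norm_nonneg g])
  have hlog : -Real.log η ≤ η ^ (-a) / a := by
    rw [← Real.log_inv, Real.rpow_neg hη.le, ← Real.inv_rpow hη.le]
    exact Real.log_le_rpow_div (by positivity) ha
  rw [Real.log_pow] at hlower
  push_cast at hlower
  have hsplit : (Real.log (C ^ 2 + 1) + 2 / a) * η ^ (-a) =
      Real.log (C ^ 2 + 1) * η ^ (-a) + 2 * (η ^ (-a) / a) := by ring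
  have : Real.log (C ^ 2 + 1) ≤ Real.log (C ^ 2 + 1) * η ^ (-a) :=
    le_mul_of_one_le_right hlogC hpow
  have : 0 ≤ η ^ (-a) / a := by positivity
  rw [hsplit, abs_le]
  constructor <;> linarith

lemma exists_setIntegral_sphericalDeriv_sq_le {a r R : ℝ} (ha : 0 < a) (hr : 0 < r) (hrR : r < R)
    (C : ℝ) : ∃ K, ∀ (G : ℂ → ℂ) (η : ℝ), Differentiable ℂ G → 0 < η → η ≤ 1 →
      (∀ z ∈ ball (0 : ℂ) R, ‖G z‖ ≤ C) →
      ∫ z in closedBall 0 r, sphericalDeriv η G z ^ 2 ≤ K * η ^ (-a) := by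
  obtain ⟨s, hrs, hsR⟩ := exists_between hrR
  let χ : ContDiffBump (0 : ℂ) := ⟨r, s, hr, hrs⟩
  refine ⟨(∫ z, ‖del (dbar fun z ↦ (χ z : ℂ)) z‖) * (Real.log (C ^ 2 + 1) + 2 / a) / 4,
    fun G η hG hη hη1 hC ↦ ?_⟩
  have hcont := continuous_sphericalDeriv hη hG
  have hmass := integral_mul_sphericalDeriv_sq_le χ.contDiff χ.hasCompactSupport
    (fun _ ↦ χ.nonneg) hη hG fun z hz ↦ abs_log_norm_sq_add_le ha
      (hC z (closedBall_subset_ball hsR (χ.tsupport_eq ▸ hz))) hη hη1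
  have hle : ∫ z in closedBall 0 r, sphericalDeriv η G z ^ 2 ≤
      ∫ z, χ z * sphericalDeriv η G z ^ 2 := by
    rw [← integral_indicator measurableSet_closedBall]
    refine integral_mono (((hcont.pow 2).continuousOn.integrableOn_compact
        (isCompact_closedBall 0 r)).integrable_indicator measurableSet_closedBall)
      ((χ.continuous.mul (hcont.pow 2)).integrable_of_hasCompactSupport
        χ.hasCompactSupport.mul_right) (indicator_le' (fun z hz ↦ ?_) fun z _ ↦ ?_)
    · rw [χ.one_of_mem_closedBall hz, one_mul]
    · exact mul_nonneg χ.nonneg (sq_nonneg _)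
  linarith

end SphericalDerivative

section KernelEstimate

open Complex Metric

lemma mul_inv_le_rpow_mul {a E B r : ℝ} (ha : 0 < a) (ha1 : a < 1) (hE : 0 ≤ E) (hEB : E ≤ B)
    (hr : 0 ≤ r) : E * r⁻¹ ≤ B ^ a * (E ^ 2 + r ^ (-(2 / (1 + a)))) := by
  have hconj : (2 / (1 - a)).HolderConjugate (2 / (1 + a)) := by
    rw [Real.holderConjugate_iff, one_lt_div (by linarith)]
    exact ⟨by linarith, by rw [inv_div, inv_div]; ring⟩
  have hyoung := Real.young_inequality_of_nonneg (Real.rpow_nonneg hE (1 - a)) (inv_nonneg.2 hr)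
    hconj
  rw [← Real.rpow_mul hE, mul_div_cancel₀ _ (by linarith : 1 - a ≠ 0), Real.rpow_two,
    Real.inv_rpow hr, ← Real.rpow_neg hr] at hyoung
  have hfst : E ^ 2 / (2 / (1 - a)) ≤ E ^ 2 := div_le_self (sq_nonneg _) hconj.lt.le
  have hsnd : r ^ (-(2 / (1 + a))) / (2 / (1 + a)) ≤ r ^ (-(2 / (1 + a))) :=
    div_le_self (by positivity) hconj.symm.lt.le
  have hB : 0 ≤ B ^ a := Real.rpow_nonneg (hE.trans hEB) a
  calc E * r⁻¹ = E ^ a * (E ^ (1 - a) * r⁻¹) := by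
        rw [← mul_assoc, ← Real.rpow_add' hE (by simp), add_sub_cancel, Real.rpow_one]
    _ ≤ _ := by
        gcongr
        linarith

lemma integrableOn_norm_rpow_neg {q : ℝ} (hq : q < 2) (R : ℝ) :
    IntegrableOn (fun w : ℂ ↦ ‖w‖ ^ (-q)) (closedBall 0 R) := by
  refine (locallyIntegrable_of_norm_le_rpow (α := q) (C := 1) (by simp) (by simpa using hq)
    (ae_of_all _ fun w ↦ ?_)
    (measurable_norm.pow_const _).aestronglyMeasurable).integrableOn_isCompact
    (isCompact_closedBall 0 R)
  rw [Real.norm_of_nonneg (by positivity), one_mul]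

lemma setIntegral_comp_sub_le {f : ℂ → ℝ} {r s : ℝ} (hf0 : ∀ w, 0 ≤ f w)
    (hf : IntegrableOn f (closedBall 0 (r + s))) {z : ℂ} (hz : ‖z‖ ≤ s) :
    IntegrableOn (fun w ↦ f (w - z)) (closedBall 0 r) ∧
      ∫ w in closedBall 0 r, f (w - z) ≤ ∫ w in closedBall 0 (r + s), f w := by
  set g := (closedBall (0 : ℂ) (r + s)).indicator f
  have hgi : Integrable fun w ↦ g (w - z) :=
    (hf.integrable_indicator measurableSet_closedBall).comp_sub_right z
  have hfg : EqOn (fun w ↦ g (w - z)) (fun w ↦ f (w - z)) (closedBall 0 r) := fun w hw ↦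
    indicator_of_mem (mem_closedBall_zero_iff.2
      ((norm_sub_le w z).trans (add_le_add (mem_closedBall_zero_iff.1 hw) hz))) f
  refine ⟨(integrableOn_congr_fun hfg measurableSet_closedBall).1 hgi.integrableOn, ?_⟩
  rw [← setIntegral_congr_fun measurableSet_closedBall hfg,
    ← integral_indicator measurableSet_closedBall (f := f), ← integral_sub_right_eq_self g z]
  exact setIntegral_le_integral hgi (ae_of_all _ fun w ↦ indicator_nonneg (fun w _ ↦ hf0 w) _)

lemma norm_deriv_le_of_norm_le_on_ball {G : ℂ → ℂ} {r R C : ℝ} (hrR : r < R)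
    (hG : Differentiable ℂ G) (hC : ∀ z ∈ ball (0 : ℂ) R, ‖G z‖ ≤ C) {z : ℂ}
    (hz : z ∈ closedBall 0 r) : ‖deriv G z‖ ≤ C / ((R - r) / 2) := by
  refine Complex.norm_deriv_le_of_forall_mem_sphere_norm_le (by linarith) hG.diffContOnCl
    fun w hw ↦ hC w ?_
  rw [mem_closedBall_zero_iff] at hz
  rw [mem_sphere_iff_norm] at hw
  rw [mem_ball_zero_iff]
  linarith [norm_sub_norm_le w z]

lemma setIntegral_mul_inv_norm_sub_le {E : ℂ → ℝ} {a B r s : ℝ} (ha : 0 < a) (ha1 : a < 1)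
    (hr : 0 ≤ r) (hE : Continuous E) (hE0 : ∀ w, 0 ≤ E w)
    (hEB : ∀ w ∈ closedBall (0 : ℂ) r, E w ≤ B) {z : ℂ} (hz : ‖z‖ ≤ s) :
    ∫ w in closedBall 0 r, E w * ‖w - z‖⁻¹ ≤ B ^ a * ((∫ w in closedBall 0 r, E w ^ 2) +
      ∫ w in closedBall (0 : ℂ) (r + s), ‖w‖ ^ (-(2 / (1 + a)))) := by
  have hB : 0 ≤ B := (hE0 0).trans (hEB 0 (mem_closedBall_self hr))
  have hq : 2 / (1 + a) < 2 := div_lt_self two_pos (by linarith)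
  obtain ⟨hkerint, hker⟩ := setIntegral_comp_sub_le (f := fun w ↦ ‖w‖ ^ (-(2 / (1 + a))))
    (fun w ↦ by positivity) (integrableOn_norm_rpow_neg hq (r + s)) hz
  have hsqint : IntegrableOn (fun w ↦ E w ^ 2) (closedBall 0 r) :=
    (hE.pow 2).continuousOn.integrableOn_compact (isCompact_closedBall 0 r)
  calc ∫ w in closedBall 0 r, E w * ‖w - z‖⁻¹
      ≤ ∫ w in closedBall 0 r, B ^ a * (E w ^ 2 + ‖w - z‖ ^ (-(2 / (1 + a)))) := by
        refine integral_mono_of_nonneg (ae_of_all _ fun w ↦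
          mul_nonneg (hE0 w) (by positivity)) ((hsqint.add hkerint).const_mul _) ?_
        exact (ae_restrict_iff' measurableSet_closedBall).2 (ae_of_all _ fun w hw ↦
          mul_inv_le_rpow_mul ha ha1 (hE0 w) (hEB w hw) (norm_nonneg _))
    _ ≤ _ := by
        rw [integral_const_mul, integral_add hsqint hkerint]
        gcongr

lemma exists_setIntegral_sphericalDeriv_mul_inv_le {a r R : ℝ} (ha : 0 < a) (ha1 : a < 1)
    (hr : 0 < r) (hrR : r < R) (C : ℝ) : ∃ K, ∀ (G : ℂ → ℂ) (η : ℝ), Differentiable ℂ G → 0 < η →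
      η ≤ 1 → (∀ z ∈ ball (0 : ℂ) R, ‖G z‖ ≤ C) → ∀ z ∈ ball (0 : ℂ) R,
      ∫ w in closedBall 0 r, sphericalDeriv η G w * ‖w - z‖⁻¹ ≤ K * η ^ (-(2 * a)) := by
  obtain ⟨K, hK⟩ := exists_setIntegral_sphericalDeriv_sq_le ha hr hrR C
  set I := ∫ w in closedBall (0 : ℂ) (r + R), ‖w‖ ^ (-(2 / (1 + a)))
  have hI : 0 ≤ I := integral_nonneg fun w ↦ by positivity
  refine ⟨(C / ((R - r) / 2)) ^ a * (K + I), fun G η hG hη hη1 hC z hz ↦ ?_⟩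
  set B := C / ((R - r) / 2)
  have hderiv : ∀ w ∈ closedBall (0 : ℂ) r, ‖deriv G w‖ ≤ B := fun w ↦
    norm_deriv_le_of_norm_le_on_ball hrR hG hC
  have hB : 0 ≤ B := (norm_nonneg (deriv G 0)).trans (hderiv 0 (mem_closedBall_self hr.le))
  have hpow : 1 ≤ η ^ (-a) := Real.one_le_rpow_of_pos_of_le_one_of_nonpos hη hη1 (by linarith)
  calc ∫ w in closedBall 0 r, sphericalDeriv η G w * ‖w - z‖⁻¹
      ≤ (B / η) ^ a * ((∫ w in closedBall 0 r, sphericalDeriv η G w ^ 2) + I) :=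
        setIntegral_mul_inv_norm_sub_le ha ha1 hr.le (continuous_sphericalDeriv hη hG)
          (sphericalDeriv_nonneg hη.le) (fun w hw ↦ (sphericalDeriv_le_div hη w).trans
            (div_le_div_of_nonneg_right (hderiv w hw) hη.le)) (mem_ball_zero_iff.1 hz).le
    _ ≤ (B / η) ^ a * (K * η ^ (-a) + I * η ^ (-a)) := by
        gcongr
        · exact hK G η hG hη hη1 hC
        · exact le_mul_of_one_le_right hI hpow
    _ = B ^ a * (K + I) * η ^ (-(2 * a)) := by
        rw [Real.div_rpow hB hη.le, div_eq_mul_inv, ← Real.rpow_neg hη.le,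
          show -(2 * a) = -a + -a by ring, Real.rpow_add hη]
        ring

end KernelEstimate

section CauchyTransform

open Complex Metric

/-- The Cauchy transform of `p`, i.e. the convolution of `p` with the fundamental solution
`1 / (π z)` of the Wirtinger operator `(∂ₓ + i ∂ᵧ) / 2`. As `dbar` lacks the factor `1 / 2`, it
inverts `dbar` on compactly supported functions. -/
def cauchyTransform (p : ℂ → ℂ) (z : ℂ) : ℂ := -(2 * Real.pi : ℂ)⁻¹ * ∫ w, p w * (w - z)⁻¹

lemma integrable_mul_inv_sub {p : ℂ → ℂ} (hp : Continuous p) (hc : HasCompactSupport p) (z : ℂ) :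
    Integrable fun w ↦ p w * (w - z)⁻¹ := by
  have hnorm := integrable_mul_inv_norm_sub hp.norm hc.norm z
  refine hnorm.mono' (hp.aestronglyMeasurable.mul
    (measurable_id.sub_const z).inv.aestronglyMeasurable) (ae_of_all _ fun w ↦ ?_)
  rw [norm_mul, norm_inv]

lemma cauchyTransform_add {p q : ℂ → ℂ} (hp : Continuous p) (hpc : HasCompactSupport p)
    (hq : Continuous q) (hqc : HasCompactSupport q) (z : ℂ) :
    cauchyTransform (fun w ↦ p w + q w) z = cauchyTransform p z + cauchyTransform q z := by
  simp only [cauchyTransform, add_mul]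
  rw [integral_add (integrable_mul_inv_sub hp hpc z) (integrable_mul_inv_sub hq hqc z), mul_add]

lemma cauchyTransform_dbar {u : ℂ → ℂ} (hu : ContDiff ℝ 1 u) (hc : HasCompactSupport u) (z : ℂ) :
    cauchyTransform (dbar u) z = u z := by
  have hpi : (Real.pi : ℂ) ≠ 0 := ofReal_ne_zero.2 Real.pi_ne_zero
  rw [cauchyTransform, integral_dbar_mul_inv_sub hu hc]
  field_simp

lemma norm_cauchyTransform_le (p : ℂ → ℂ) (z : ℂ) :
    ‖cauchyTransform p z‖ ≤ ∫ w, ‖p w‖ * ‖w - z‖⁻¹ := by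
  have hconst : ‖-(2 * Real.pi : ℂ)⁻¹‖ ≤ 1 := by
    rw [norm_neg, norm_inv, norm_mul, norm_real, Real.norm_of_nonneg Real.pi_pos.le,
      Complex.norm_two]
    exact inv_le_one_of_one_le₀ (by linarith [Real.pi_gt_three])
  calc ‖cauchyTransform p z‖ ≤ 1 * ‖∫ w, p w * (w - z)⁻¹‖ := by
        rw [cauchyTransform, norm_mul]; gcongr
    _ ≤ ∫ w, ‖p w‖ * ‖w - z‖⁻¹ := by
        rw [one_mul]
        refine (norm_integral_le_integral_norm _).trans_eq ?_
        simp only [norm_mul, norm_inv]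

variable {p : ℂ → ℂ} {r s : ℝ}

lemma norm_mul_inv_pow_le (hrs : r < s) (h0 : ∀ w ∈ ball (0 : ℂ) s, p w = 0) {z : ℂ}
    (hz : z ∈ ball 0 r) (n : ℕ) (w : ℂ) : ‖p w‖ * ‖w - z‖⁻¹ ^ n ≤ ‖p w‖ * (s - r)⁻¹ ^ n := by
  by_cases hw : w ∈ ball (0 : ℂ) s
  · simp [h0 w hw]
  · rw [mem_ball_zero_iff] at hz hw
    have := norm_sub_norm_le w z
    have := sub_pos.2 hrs
    gcongr
    linarith

lemma differentiableOn_cauchyTransform (hp : Integrable p) (hrs : r < s)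
    (h0 : ∀ w ∈ ball (0 : ℂ) s, p w = 0) : DifferentiableOn ℂ (cauchyTransform p) (ball 0 r) := by
  intro z₀ hz₀
  have hmeas (n : ℕ) (z : ℂ) : AEStronglyMeasurable (fun w ↦ p w * (w - z)⁻¹ ^ n) :=
    hp.aestronglyMeasurable.mul
      ((measurable_id.sub_const z).inv.pow_const n).aestronglyMeasurable
  have hbound (n : ℕ) {z : ℂ} (hz : z ∈ ball 0 r) (w : ℂ) :
      ‖p w * (w - z)⁻¹ ^ n‖ ≤ ‖p w‖ * (s - r)⁻¹ ^ n := by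
    rw [norm_mul, norm_pow, norm_inv]
    exact norm_mul_inv_pow_le hrs h0 hz n w
  have hderiv := (hasDerivAt_integral_of_dominated_loc_of_deriv_le (μ := volume)
    (F := fun z w ↦ p w * (w - z)⁻¹ ^ 1) (F' := fun z w ↦ p w * (w - z)⁻¹ ^ 2)
    (isOpen_ball.mem_nhds hz₀) (.of_forall fun z ↦ hmeas 1 z)
    ((hp.norm.mul_const _).mono' (hmeas 1 z₀) (ae_of_all _ (hbound 1 hz₀))) (hmeas 2 z₀)
    (ae_of_all _ fun w z hz ↦ hbound 2 hz w) (hp.norm.mul_const _)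
    (ae_of_all _ fun w z hz ↦ ?_)).2
  · simp only [pow_one] at hderiv
    exact (hderiv.differentiableAt.const_mul _).differentiableWithinAt
  · by_cases hw : w ∈ ball (0 : ℂ) s
    · simpa only [h0 w hw, zero_mul] using hasDerivAt_const z (0 : ℂ)
    · have hne : w - z ≠ 0 := sub_ne_zero.2 fun h ↦ hw (h ▸ ball_subset_ball hrs.le hz)
      have := (((hasDerivAt_id z).const_sub w).inv hne).const_mul (p w)
      simpa using this

lemma norm_cauchyTransform_le_of_eq_zero_on_ball (hp : Integrable p) (hrs : r < s)
    (h0 : ∀ w ∈ ball (0 : ℂ) s, p w = 0) {z : ℂ} (hz : z ∈ ball 0 r) :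
    ‖cauchyTransform p z‖ ≤ (∫ w, ‖p w‖) * (s - r)⁻¹ := by
  refine (norm_cauchyTransform_le p z).trans ?_
  rw [← integral_mul_const]
  refine integral_mono_of_nonneg (ae_of_all _ fun w ↦ by positivity) (hp.norm.mul_const _)
    (ae_of_all _ fun w ↦ ?_)
  simpa only [pow_one] using norm_mul_inv_pow_le hrs h0 hz 1 w

end CauchyTransform

section HolomorphicDivision

open Complex ComplexConjugate Metric

lemma le_mul_rpow_inv_of_pow_le {x y C : ℝ} {n : ℕ} (hn : n ≠ 0) (hC : 1 ≤ C) (hy : 0 ≤ y)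
    (h : x ^ n ≤ C * y) : x ≤ C * y ^ (n⁻¹ : ℝ) := by
  refine le_of_pow_le_pow_left₀ hn (by positivity) (h.trans ?_)
  rw [mul_pow, Real.rpow_inv_natCast_pow hy hn]
  gcongr
  exact le_self_pow₀ hC hn

variable {j : ℕ} {C η : ℝ}

lemma norm_mul_div_le {g h : ℂ} (hj : j ≠ 0) (hC : 1 ≤ C) (hη : 0 < η)
    (hh : ‖h‖ ^ (2 * j) ≤ C * (‖g‖ ^ 2 + η ^ 2) ^ (j + 1)) :
    ‖h‖ * η / (‖g‖ ^ 2 + η ^ 2) ≤ C * (η ^ 2) ^ ((2 * j : ℕ)⁻¹ : ℝ) := by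
  refine le_mul_rpow_inv_of_pow_le (by positivity) hC (by positivity) ?_
  obtain ⟨i, rfl⟩ := Nat.exists_eq_add_one_of_ne_zero hj
  set W := ‖g‖ ^ 2 + η ^ 2
  have hηW : η ^ 2 ≤ W := le_add_of_nonneg_left (sq_nonneg _)
  have : 0 < W := by positivity
  rw [div_pow, mul_pow, div_le_iff₀ (by positivity)]
  calc ‖h‖ ^ (2 * (i + 1)) * η ^ (2 * (i + 1)) ≤
        C * W ^ (i + 1 + 1) * (η ^ 2 * (η ^ 2) ^ i) := by
        rw [pow_mul η, pow_succ' (η ^ 2)]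
        gcongr
    _ ≤ C * W ^ (i + 1 + 1) * (η ^ 2 * W ^ i) := by gcongr
    _ = C * η ^ 2 * W ^ (2 * (i + 1)) := by ring

lemma norm_dbar_regDiv_le {G H : ℂ → ℂ} {z : ℂ} (hj : j ≠ 0) (hC : 1 ≤ C) (hη : 0 < η)
    (hG : Differentiable ℂ G) (hH : Differentiable ℂ H)
    (h : ‖H z‖ ^ (2 * j) ≤ C * (‖G z‖ ^ 2 + η ^ 2) ^ (j + 1)) :
    ‖dbar (fun w ↦ regDiv η (H w) (G w)) z‖ ≤
      2 * C * (η ^ 2) ^ ((2 * j : ℕ)⁻¹ : ℝ) * sphericalDeriv η G z := by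
  have hW : 0 < ‖G z‖ ^ 2 + η ^ 2 := by positivity
  calc ‖dbar (fun w ↦ regDiv η (H w) (G w)) z‖
      = 2 * (‖H z‖ * η / (‖G z‖ ^ 2 + η ^ 2)) * sphericalDeriv η G z := by
        rw [dbar_regDiv hη hG hH, mul_conj_add_sq, sphericalDeriv]
        simp only [norm_div, norm_mul, norm_pow, norm_real, RCLike.norm_conj, Complex.norm_two,
          Real.norm_of_nonneg hη.le, Real.norm_of_nonneg hW.le]
        field_simp
    _ ≤ 2 * (C * (η ^ 2) ^ ((2 * j : ℕ)⁻¹ : ℝ)) * sphericalDeriv η G z := by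
        have := sphericalDeriv_nonneg (G := G) hη.le z
        have := norm_mul_div_le hj hC hη h
        gcongr
    _ = _ := by ring

lemma norm_regDiv_le {g h : ℂ} (hj : j ≠ 0) (hC : 1 ≤ C) (hη : 0 < η) (hη1 : η ≤ 1)
    (hg : ‖g‖ ≤ C) (hh : ‖h‖ ^ (2 * j) ≤ C * (‖g‖ ^ 2 + η ^ 2) ^ (j + 1)) :
    ‖regDiv η h g‖ ≤ C * (C ^ 2 + 1) := by
  rw [norm_regDiv]
  set W := ‖g‖ ^ 2 + η ^ 2
  have : 0 < W := by positivity
  have hgW : ‖g‖ ^ 2 ≤ W := le_add_of_nonneg_right (sq_nonneg _)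
  refine le_of_pow_le_pow_left₀ (n := 2 * j) (by positivity) (by positivity) ?_
  rw [div_pow, mul_pow, div_le_iff₀ (by positivity), pow_mul ‖g‖]
  calc ‖h‖ ^ (2 * j) * (‖g‖ ^ 2) ^ j ≤ C * W ^ (j + 1) * W ^ j := by gcongr
    _ = C * W * W ^ (2 * j) := by ring
    _ ≤ C * (C ^ 2 + 1) * W ^ (2 * j) := by
        gcongr
        exact add_le_add (by gcongr) (pow_le_one₀ hη.le hη1)
    _ ≤ (C * (C ^ 2 + 1)) ^ (2 * j) * W ^ (2 * j) := by
        gcongr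
        exact le_self_pow₀ (one_le_mul_of_one_le_of_one_le hC (by nlinarith)) (by positivity)

lemma cauchyTransform_mul_dbar_add {u v : ℂ → ℂ} (hu : ContDiff ℝ 1 u) (hv : ContDiff ℝ 1 v)
    (hc : HasCompactSupport v) (z : ℂ) :
    cauchyTransform (fun w ↦ u w * dbar v w) z + cauchyTransform (fun w ↦ v w * dbar u w) z =
      u z * v z := by
  have hadd := cauchyTransform_add (hu.continuous.mul (continuous_wirtinger (c := I) hv))
    (hasCompactSupport_wirtinger hc).mul_left (hv.continuous.mul (continuous_wirtinger (c := I) hu))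
    hc.mul_right z
  refine hadd.symm.trans (Eq.trans ?_ (cauchyTransform_dbar (hu.mul hv) hc.mul_left z))
  congr 1
  funext w
  exact (wirtinger_mul (hu.differentiable one_ne_zero w) (hv.differentiable one_ne_zero w)).symm

lemma norm_cauchyTransform_le_mul_setIntegral {p : ℂ → ℂ} {g : ℂ → ℝ} {r c : ℝ} (hg : Continuous g)
    (hpg : ∀ w ∈ closedBall 0 r, ‖p w‖ ≤ c * g w) (hp : ∀ w ∉ closedBall 0 r, p w = 0) (z : ℂ) :
    ‖cauchyTransform p z‖ ≤ c * ∫ w in closedBall 0 r, g w * ‖w - z‖⁻¹ := by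
  refine (norm_cauchyTransform_le p z).trans ?_
  have hker : IntegrableOn (fun w ↦ ‖w - z‖⁻¹) (closedBall 0 r) := by
    have := (setIntegral_comp_sub_le (fun w ↦ by positivity)
      (integrableOn_norm_rpow_neg one_lt_two (r + ‖z‖)) le_rfl).1
    simpa only [Real.rpow_neg_one] using this
  rw [← setIntegral_eq_integral_of_forall_compl_eq_zero (s := closedBall 0 r)
    fun w hw ↦ by rw [hp w hw, norm_zero, zero_mul], ← integral_const_mul]
  refine integral_mono_of_nonneg (ae_of_all _ fun w ↦ by positivity)
    ((hker.continuousOn_mul hg.continuousOn (isCompact_closedBall 0 r)).const_mul c)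
    ((ae_restrict_iff' measurableSet_closedBall).2 (ae_of_all _ fun w hw ↦ ?_))
  dsimp only
  rw [← mul_assoc]
  gcongr
  exact hpg w hw

lemma exists_cutoff : ∃ S : ℂ → ℂ, ContDiff ℝ 1 S ∧ HasCompactSupport S ∧ (∀ w, ‖S w‖ ≤ 1) ∧
    (∀ w ∉ closedBall 0 (3 / 4), S w = 0 ∧ dbar S w = 0) ∧
    ∀ w ∈ ball 0 (1 / 2), S w = 1 ∧ dbar S w = 0 := by
  let χ : ContDiffBump (0 : ℂ) := ⟨1 / 2, 3 / 4, by norm_num, by norm_num⟩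
  have hconst {U : Set ℂ} (hU : IsOpen U) {c : ℝ} (h : ∀ w ∈ U, χ w = c) (w : ℂ) (hw : w ∈ U) :
      (χ w : ℂ) = c ∧ dbar (fun x ↦ (χ x : ℂ)) w = 0 := by
    have heq : (fun x ↦ (χ x : ℂ)) =ᶠ[nhds w] fun _ ↦ (c : ℂ) :=
      eventually_of_mem (hU.mem_nhds hw) fun x hx ↦ congrArg ofReal (h x hx)
    exact ⟨congrArg ofReal (h w hw), by rw [dbar, wirtinger_congr heq]; simp [wirtinger]⟩
  refine ⟨fun w ↦ χ w, ofRealCLM.contDiff.comp χ.contDiff,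
    χ.hasCompactSupport.comp_left ofReal_zero, fun w ↦ ?_, fun w hw ↦ ?_, fun w hw ↦ ?_⟩
  · rw [norm_real, Real.norm_of_nonneg χ.nonneg]
    exact χ.le_one
  · simpa using hconst isClosed_closedBall.isOpen_compl (c := 0)
      (fun x hx ↦ χ.zero_of_le_dist (not_le.1 (mem_closedBall.not.1 hx)).le) w hw
  · simpa using hconst isOpen_ball (c := 1)
      (fun x hx ↦ χ.one_of_mem_closedBall (ball_subset_closedBall hx)) w hw

lemma integral_norm_mul_dbar_le {Q S : ℂ → ℂ} {B : ℝ} (hS : ContDiff ℝ 1 S)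
    (hSc : HasCompactSupport S) (hB : ∀ w, dbar S w ≠ 0 → ‖Q w‖ ≤ B) :
    ∫ w, ‖Q w * dbar S w‖ ≤ B * ∫ w, ‖dbar S w‖ := by
  rw [← integral_const_mul]
  refine integral_mono_of_nonneg (ae_of_all _ fun w ↦ norm_nonneg _)
    (((continuous_wirtinger hS).integrable_of_hasCompactSupport
      (hasCompactSupport_wirtinger hSc)).norm.const_mul B) (ae_of_all _ fun w ↦ ?_)
  by_cases hw : dbar S w = 0
  · simp [hw]
  · simp only [norm_mul]
    gcongr
    exact hB w hw

lemma exists_norm_cauchyTransform_mul_dbar_regDiv_le {r : ℝ} (hr : 0 < r) (hr1 : r < 1)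
    (hj : j ≠ 0) (hC : 1 ≤ C) :
    ∃ K, ∀ (S G H : ℂ → ℂ) (η : ℝ), (∀ w, ‖S w‖ ≤ 1) → (∀ w ∉ closedBall 0 r, S w = 0) →
      Differentiable ℂ G → Differentiable ℂ H → 0 < η → η ≤ 1 →
      (∀ z ∈ ball (0 : ℂ) 1, ‖G z‖ ≤ C) →
      (∀ z ∈ ball (0 : ℂ) 1, ‖H z‖ ^ (2 * j) ≤ C * (‖G z‖ ^ 2 + η ^ 2) ^ (j + 1)) →
      ∀ z ∈ ball (0 : ℂ) 1,
        ‖cauchyTransform (fun w ↦ S w * dbar (fun w ↦ regDiv η (H w) (G w)) w) z‖ ≤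
          K * η ^ ((2 * j : ℕ)⁻¹ : ℝ) := by
  set e : ℝ := ((2 * j : ℕ)⁻¹ : ℝ)
  have he0 : 0 < e := by positivity
  have he1 : e / 2 < 1 := by
    have : e ≤ 1 := Nat.cast_inv_le_one _
    linarith
  obtain ⟨K, hK⟩ := exists_setIntegral_sphericalDeriv_mul_inv_le (half_pos he0) he1 hr hr1 C
  refine ⟨2 * C * K, fun S G H η hS hS0 hG hH hη hη1 hGC hHC z hz ↦ ?_⟩
  have hHC' {w : ℂ} (hw : w ∈ closedBall (0 : ℂ) r) := hHC w (closedBall_subset_ball hr1 hw)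
  calc _ ≤ 2 * C * (η ^ 2) ^ e * ∫ w in closedBall 0 r, sphericalDeriv η G w * ‖w - z‖⁻¹ := by
        refine norm_cauchyTransform_le_mul_setIntegral (continuous_sphericalDeriv hη hG)
          (fun w hw ↦ ?_) (fun w hw ↦ by rw [hS0 w hw, zero_mul]) z
        rw [norm_mul]
        exact (mul_le_of_le_one_left (norm_nonneg _) (hS w)).trans
          (norm_dbar_regDiv_le hj hC hη hG hH (hHC' hw))
    _ ≤ 2 * C * (η ^ 2) ^ e * (K * η ^ (-(2 * (e / 2)))) := by
        gcongr
        exact hK G η hG hη hη1 hGC z hz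
    _ = 2 * C * K * η ^ e := by
        rw [mul_div_cancel₀ _ two_ne_zero, ← Real.rpow_natCast_mul hη.le,
          show ((2 : ℕ) : ℝ) * e = e + e by push_cast; ring, Real.rpow_add hη, Real.rpow_neg hη.le]
        field_simp

/- The regularised quotient `Q` of `H` by `G` is nearly holomorphic. Its correction is
`F = Q S - T (S ∂̄Q) = T (Q ∂̄S)`, with `T` the Cauchy transform and `S` a cutoff function. -/
theorem exists_differentiableOn_norm_sub_regDiv_le (hj : j ≠ 0) (hC : 1 ≤ C) :
    ∃ K, ∀ (G H : ℂ → ℂ) (η : ℝ), Differentiable ℂ G → Differentiable ℂ H → 0 < η → η ≤ 1 →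
      (∀ z ∈ ball (0 : ℂ) 1, ‖G z‖ ≤ C) →
      (∀ z ∈ ball (0 : ℂ) 1, ‖H z‖ ^ (2 * j) ≤ C * (‖G z‖ ^ 2 + η ^ 2) ^ (j + 1)) →
      ∃ F : ℂ → ℂ, DifferentiableOn ℂ F (ball 0 (1 / 4)) ∧ ∀ z ∈ ball (0 : ℂ) (1 / 4),
        ‖F z‖ ≤ K ∧ ‖F z - regDiv η (H z) (G z)‖ ≤ K * η ^ ((2 * j : ℕ)⁻¹ : ℝ) := by
  obtain ⟨S, hS, hSc, hS1, hSout, hSin⟩ := exists_cutoff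
  obtain ⟨K, hK⟩ := exists_norm_cauchyTransform_mul_dbar_regDiv_le (by norm_num : (0 : ℝ) < 3 / 4)
    (by norm_num) hj hC
  refine ⟨max (C * (C ^ 2 + 1) * (∫ w, ‖dbar S w‖) * (1 / 2 - 1 / 4)⁻¹) K,
    fun G H η hG hH hη hη1 hGC hHC ↦ ?_⟩
  set Q : ℂ → ℂ := fun w ↦ regDiv η (H w) (G w)
  have hQ : ContDiff ℝ 1 Q := contDiff_regDiv hη hG hH
  have hpint : Integrable fun w ↦ Q w * dbar S w :=
    (hQ.continuous.mul (continuous_wirtinger hS)).integrable_of_hasCompactSupport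
      (hasCompactSupport_wirtinger hSc).mul_left
  have hp0 : ∀ w ∈ ball (0 : ℂ) (1 / 2), Q w * dbar S w = 0 := fun w hw ↦ by
    rw [(hSin w hw).2, mul_zero]
  have hrs : (1 / 4 : ℝ) < 1 / 2 := by norm_num
  refine ⟨cauchyTransform fun w ↦ Q w * dbar S w, differentiableOn_cauchyTransform hpint hrs hp0,
    fun z hz ↦ ⟨?_, ?_⟩⟩
  · refine (norm_cauchyTransform_le_of_eq_zero_on_ball hpint hrs hp0 hz).trans
      (le_max_of_le_left ?_)
    gcongr
    refine integral_norm_mul_dbar_le hS hSc fun w hw ↦ ?_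
    have hw' : w ∈ ball (0 : ℂ) 1 := closedBall_subset_ball (by norm_num : (3 / 4 : ℝ) < 1)
      (not_not.1 fun h ↦ hw (hSout w h).2)
    exact norm_regDiv_le hj hC hη hη1 (hGC w hw') (hHC w hw')
  · have hsub := cauchyTransform_mul_dbar_add hQ hS hSc z
    rw [(hSin z (ball_subset_ball hrs.le hz)).1, mul_one, ← eq_sub_iff_add_eq] at hsub
    rw [hsub, sub_sub_cancel_left, norm_neg]
    refine (hK S G H η hS1 (fun w hw ↦ (hSout w hw).1) hG hH hη hη1 hGC hHC z
      (ball_subset_ball (by norm_num) hz)).trans ?_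
    gcongr
    exact le_max_right _ _

end HolomorphicDivision

section ApproximateRoots

open Complex ComplexConjugate Metric

lemma norm_pow_sub_pow_le {x y : ℂ} {M : ℝ} (hx : ‖x‖ ≤ M) (hy : ‖y‖ ≤ M) (n : ℕ) :
    ‖x ^ n - y ^ n‖ ≤ n * M ^ (n - 1) * ‖x - y‖ := by
  have hterm : ∀ i ∈ Finset.range n, ‖x ^ i * y ^ (n - 1 - i)‖ ≤ M ^ (n - 1) := fun i hi ↦ by
    have : i + (n - 1 - i) = n - 1 := by have := Finset.mem_range.1 hi; omega
    rw [norm_mul, norm_pow, norm_pow, ← this, pow_add, this]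
    gcongr
    exact pow_nonneg ((norm_nonneg x).trans hx) i
  rw [← (Commute.all x y).geom_sum₂_mul, norm_mul]
  gcongr
  simpa using norm_sum_le_of_le _ hterm

variable {j : ℕ} {C η : ℝ}

lemma norm_pow_sub_pow_succ_le {p g h : ℂ} {M d : ℝ} (hM : 1 ≤ M) (hg : ‖g‖ ≤ M)
    (hh : ‖h‖ ≤ M) (hpg : ‖p ^ j‖ ≤ M) (hph : ‖p ^ (j + 1)‖ ≤ M) (hgd : ‖g - p ^ j‖ ≤ d)
    (hhd : ‖h - p ^ (j + 1)‖ ≤ d) :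
    ‖h ^ j - g ^ (j + 1)‖ ≤ 2 * (j + 1) * M ^ (j + 1) * d := by
  have hsplit : h ^ j - g ^ (j + 1) =
      (h ^ j - (p ^ (j + 1)) ^ j) - (g ^ (j + 1) - (p ^ j) ^ (j + 1)) := by ring
  have : 0 ≤ d := (norm_nonneg _).trans hgd
  rw [hsplit]
  calc _ ≤ j * M ^ (j - 1) * ‖h - p ^ (j + 1)‖ + (j + 1 : ℕ) * M ^ (j + 1 - 1) * ‖g - p ^ j‖ :=
        (norm_sub_le _ _).trans
          (add_le_add (norm_pow_sub_pow_le hh hph j) (norm_pow_sub_pow_le hg hpg (j + 1)))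
    _ ≤ (j + 1 : ℕ) * M ^ (j + 1) * d + (j + 1 : ℕ) * M ^ (j + 1) * d := by
        gcongr <;> omega
    _ = _ := by push_cast; ring

lemma norm_pow_le_of_norm_pow_sub_pow_le {g h : ℂ}
    (hgh : ‖h ^ j - g ^ (j + 1)‖ ≤ C * η ^ (j + 1)) :
    ‖h‖ ^ (2 * j) ≤ 2 * (1 + C ^ 2) * (‖g‖ ^ 2 + η ^ 2) ^ (j + 1) := by
  have hh : ‖h‖ ^ j ≤ ‖g‖ ^ (j + 1) + C * η ^ (j + 1) := by
    have := norm_sub_norm_le (h ^ j) (g ^ (j + 1))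
    rw [norm_pow, norm_pow] at this
    linarith
  calc ‖h‖ ^ (2 * j) = (‖h‖ ^ j) ^ 2 := by ring
    _ ≤ (‖g‖ ^ (j + 1) + C * η ^ (j + 1)) ^ 2 := by gcongr
    _ ≤ 2 * (‖g‖ ^ 2) ^ (j + 1) + 2 * C ^ 2 * (η ^ 2) ^ (j + 1) :=
        add_sq_le.trans_eq (by ring)
    _ ≤ 2 * (‖g‖ ^ 2 + η ^ 2) ^ (j + 1) + 2 * C ^ 2 * (‖g‖ ^ 2 + η ^ 2) ^ (j + 1) := by
        gcongr
        · exact le_add_of_nonneg_right (sq_nonneg _)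
        · exact le_add_of_nonneg_left (sq_nonneg _)
    _ = _ := by ring

lemma norm_mul_sq_div_le {p g : ℂ} (hj : j ≠ 0) (hη : 0 < η) (hη1 : η ≤ 1)
    (hg : ‖g - p ^ j‖ ≤ C * η) :
    ‖p‖ * η ^ 2 / (‖g‖ ^ 2 + η ^ 2) ≤ 2 * (1 + C ^ 2) * η ^ ((2 * j : ℕ)⁻¹ : ℝ) := by
  refine le_mul_rpow_inv_of_pow_le (by positivity) (by nlinarith [sq_nonneg C]) hη.le ?_
  obtain ⟨i, rfl⟩ := Nat.exists_eq_add_one_of_ne_zero hj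
  set W := ‖g‖ ^ 2 + η ^ 2 with hW
  have hηW : η ^ 2 ≤ W := le_add_of_nonneg_left (sq_nonneg _)
  have : 0 < W := by positivity
  have hp : ‖p‖ ^ (i + 1) ≤ ‖g‖ + C * η := by
    have := norm_sub_norm_le (p ^ (i + 1)) g
    rw [norm_pow, norm_sub_rev] at this
    linarith
  have hpW : ‖p‖ ^ (2 * (i + 1)) ≤ 2 * (1 + C ^ 2) * W := by
    calc ‖p‖ ^ (2 * (i + 1)) = (‖p‖ ^ (i + 1)) ^ 2 := by ring
      _ ≤ (‖g‖ + C * η) ^ 2 := by gcongr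
      _ ≤ 2 * (1 + C ^ 2) * W := by
        rw [hW]
        nlinarith [sq_nonneg (‖g‖ - C * η), sq_nonneg (C * ‖g‖), sq_nonneg η]
  rw [div_pow, mul_pow, div_le_iff₀ (by positivity)]
  calc ‖p‖ ^ (2 * (i + 1)) * (η ^ 2) ^ (2 * (i + 1))
      = ‖p‖ ^ (2 * (i + 1)) * (η ^ 2 * (η ^ 2) ^ (2 * i + 1)) := by ring
    _ ≤ 2 * (1 + C ^ 2) * W * (η * W ^ (2 * i + 1)) := by
        gcongr
        exact pow_le_of_le_one hη.le hη1 two_ne_zero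
    _ = 2 * (1 + C ^ 2) * η * W ^ (2 * (i + 1)) := by ring

lemma norm_regDiv_sub_le {p g h : ℂ} (hj : j ≠ 0) (hC : 1 ≤ C) (hη : 0 < η) (hη1 : η ≤ 1)
    (hp : ‖p‖ ≤ C) (hg : ‖g - p ^ j‖ ≤ C * η ^ 2) (hh : ‖h - p ^ (j + 1)‖ ≤ C * η ^ 2) :
    ‖regDiv η h g - p‖ ≤ (2 * C ^ 2 + 2 * (1 + C ^ 2)) * η ^ ((2 * j : ℕ)⁻¹ : ℝ) := by
  set W := ‖g‖ ^ 2 + η ^ 2 with hW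
  have hW0 : 0 < W := by positivity
  have hη2 : η ^ 2 ≤ η := pow_le_of_le_one hη.le hη1 two_ne_zero
  have hηpow : η ≤ η ^ ((2 * j : ℕ)⁻¹ : ℝ) :=
    Real.self_le_rpow_of_le_one hη.le hη1 (Nat.cast_inv_le_one _)
  have hsplit : regDiv η h g - p =
      conj g * ((h - p ^ (j + 1)) - p * (g - p ^ j)) / (W : ℂ) - p * (η : ℂ) ^ 2 / (W : ℂ) := by
    have hne := mul_conj_add_sq_ne_zero g hη
    rw [hW, ← mul_conj_add_sq, regDiv, ← sub_div, eq_div_iff hne, sub_mul, div_mul_cancel₀ _ hne]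
    ring
  have hres : ‖(h - p ^ (j + 1)) - p * (g - p ^ j)‖ ≤ 2 * C ^ 2 * η ^ 2 := by
    calc _ ≤ ‖h - p ^ (j + 1)‖ + ‖p‖ * ‖g - p ^ j‖ := (norm_sub_le _ _).trans_eq (by rw [norm_mul])
      _ ≤ C ^ 2 * η ^ 2 + C * (C * η ^ 2) := by
          gcongr
          exact hh.trans (by gcongr; exact le_self_pow₀ hC two_ne_zero)
      _ = _ := by ring
  have hfst : ‖conj g * ((h - p ^ (j + 1)) - p * (g - p ^ j)) / (W : ℂ)‖ ≤ 2 * C ^ 2 * η := by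
    rw [norm_div, norm_mul, RCLike.norm_conj, norm_real, Real.norm_of_nonneg hW0.le,
      div_le_iff₀ hW0]
    calc _ ≤ ‖g‖ * (2 * C ^ 2 * η ^ 2) := by gcongr
      _ = 2 * C ^ 2 * η * (‖g‖ * η) := by ring
      _ ≤ 2 * C ^ 2 * η * W := by
          gcongr
          nlinarith [sq_nonneg (‖g‖ - η), sq_nonneg (‖g‖ + η)]
  have hsnd := norm_mul_sq_div_le hj hη hη1 (hg.trans (by gcongr))
  rw [hsplit]
  calc _ ≤ 2 * C ^ 2 * η + ‖p‖ * η ^ 2 / W := (norm_sub_le _ _).trans (add_le_add hfst (by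
        rw [norm_div, norm_mul, norm_pow, norm_real, norm_real, Real.norm_of_nonneg hη.le,
          Real.norm_of_nonneg hW0.le]))
    _ ≤ 2 * C ^ 2 * η ^ ((2 * j : ℕ)⁻¹ : ℝ) + 2 * (1 + C ^ 2) * η ^ ((2 * j : ℕ)⁻¹ : ℝ) := by
        gcongr
    _ = _ := by ring

lemma exists_norm_pow_sub_pow_le (j : ℕ) (hC : 1 ≤ C) : ∃ K, ∀ (p : ℝ → ℂ) (G H : ℂ → ℂ)
    (ε η : ℝ), 0 < ε → 0 < η → η ≤ 1 → Differentiable ℂ G → Differentiable ℂ H →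
    (∀ z ∈ ball (0 : ℂ) ε, ‖G z‖ ≤ C ∧ ‖H z‖ ≤ C) →
    (∀ t : ℝ, |t| < ε → ‖p t‖ ≤ C ∧ ‖G t - p t ^ j‖ ≤ C * η ^ (2 * (j + 1)) ∧
      ‖H t - p t ^ (j + 1)‖ ≤ C * η ^ (2 * (j + 1))) →
    ∀ z : ℂ, ‖z‖ ≤ ε / 16 → ‖H z ^ j - G z ^ (j + 1)‖ ≤ K * η ^ (j + 1) := by
  set M := C ^ (j + 1)
  have hM : 1 ≤ M := one_le_pow₀ hC
  have hCM : C ≤ M := le_self_pow₀ hC j.succ_ne_zero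
  set K := 2 * (j + 1) * M ^ (j + 1) * C
  refine ⟨K, fun p G H ε η hε hη hη1 hG hH hbd hp z hz ↦ ?_⟩
  have hsqrt : √(K * (K * η ^ (2 * (j + 1)))) = K * η ^ (j + 1) := by
    rw [show K * (K * η ^ (2 * (j + 1))) = (K * η ^ (j + 1)) ^ 2 by ring,
      Real.sqrt_sq (by positivity)]
  rw [← hsqrt]
  refine norm_le_sqrt_mul_of_norm_le_on_reals (F := fun z ↦ H z ^ j - G z ^ (j + 1))
    (by positivity) (mul_le_of_le_one_right (by positivity) (pow_le_one₀ hη.le hη1))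
    ((hH.pow j).sub (hG.pow (j + 1))).differentiableOn (fun w hw ↦ ?_) (fun t ht ↦ ?_) hε hz
  · have hHw : ‖H w‖ ^ j ≤ M ^ (j + 1) :=
      (pow_le_pow_left₀ (norm_nonneg _) ((hbd w hw).2.trans hCM) j).trans
        (pow_le_pow_right₀ hM j.le_succ)
    have hGw : ‖G w‖ ^ (j + 1) ≤ M ^ (j + 1) := by
      gcongr
      exact (hbd w hw).1.trans hCM
    calc ‖H w ^ j - G w ^ (j + 1)‖ ≤ M ^ (j + 1) + M ^ (j + 1) :=
          (norm_sub_le _ _).trans (add_le_add (by rwa [norm_pow]) (by rwa [norm_pow]))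
      _ = 2 * (0 + 1) * M ^ (j + 1) * 1 := by ring
      _ ≤ K := by
          simp only [K]
          gcongr
          positivity
  · obtain ⟨hpt, hGt, hHt⟩ := hp t ht
    obtain ⟨hGb, hHb⟩ := hbd t (by simpa using ht)
    have hpow (n : ℕ) (hn : n ≤ j + 1) : ‖p t ^ n‖ ≤ M := by
      rw [norm_pow]
      exact (pow_le_pow_left₀ (norm_nonneg _) hpt n).trans (pow_le_pow_right₀ hC hn)
    refine (norm_pow_sub_pow_succ_le hM (hGb.trans hCM) (hHb.trans hCM)
      (hpow j j.le_succ) (hpow _ le_rfl) hGt hHt).trans_eq ?_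
    ring

theorem exists_differentiableOn_norm_sub_le_of_approx_pow (hj : j ≠ 0) (hC : 1 ≤ C) :
    ∃ K, ∀ (p : ℝ → ℂ) (G H : ℂ → ℂ) (ε η : ℝ), 0 < ε → 0 < η → η ≤ 1 →
      Differentiable ℂ G → Differentiable ℂ H →
      (∀ z ∈ ball (0 : ℂ) ε, ‖G z‖ ≤ C ∧ ‖H z‖ ≤ C) →
      (∀ t : ℝ, |t| < ε → ‖p t‖ ≤ C ∧ ‖G t - p t ^ j‖ ≤ C * η ^ (2 * (j + 1)) ∧
        ‖H t - p t ^ (j + 1)‖ ≤ C * η ^ (2 * (j + 1))) →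
      ∃ F : ℂ → ℂ, DifferentiableOn ℂ F (ball 0 (ε / 64)) ∧
        (∀ z ∈ ball (0 : ℂ) (ε / 64), ‖F z‖ ≤ K) ∧
        ∀ t : ℝ, |t| < ε / 64 → ‖F t - p t‖ ≤ K * η ^ ((2 * j : ℕ)⁻¹ : ℝ) := by
  obtain ⟨C₁, hC₁⟩ := exists_norm_pow_sub_pow_le j hC
  obtain ⟨C₂, hC₂⟩ := exists_differentiableOn_norm_sub_regDiv_le (C := 2 * (1 + C₁ ^ 2) + C) hj
    (by nlinarith [sq_nonneg C₁])
  refine ⟨C₂ + (2 * C ^ 2 + 2 * (1 + C ^ 2)), fun p G H ε η hε hη hη1 hG hH hbd hp ↦ ?_⟩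
  set c : ℂ := ((ε / 16 : ℝ) : ℂ) with hc
  have hcnorm : ‖c‖ = ε / 16 := by rw [hc, norm_real, Real.norm_of_nonneg (by positivity)]
  have hc0 : c ≠ 0 := norm_pos_iff.1 (by rw [hcnorm]; positivity)
  have hscale {z : ℂ} (hz : z ∈ ball (0 : ℂ) 1) : ‖c * z‖ ≤ ε / 16 := by
    rw [norm_mul, hcnorm]
    exact mul_le_of_le_one_right (by positivity) (mem_ball_zero_iff.1 hz).le
  obtain ⟨F, hF, hFbd⟩ := hC₂ (fun z ↦ G (c * z)) (fun z ↦ H (c * z)) η (by fun_prop)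
    (by fun_prop) hη hη1
    (fun z hz ↦ (hbd _ (mem_ball_zero_iff.2 (by linarith [hscale hz]))).1.trans
      (by nlinarith [sq_nonneg C₁]))
    (fun z hz ↦ (norm_pow_le_of_norm_pow_sub_pow_le
      (hC₁ p G H ε η hε hη hη1 hG hH hbd hp _ (hscale hz))).trans (by gcongr; linarith))
  have hmaps : MapsTo (fun z ↦ c⁻¹ * z) (ball (0 : ℂ) (ε / 64)) (ball 0 (1 / 4)) := fun z hz ↦ by
    rw [mem_ball_zero_iff] at hz ⊢
    rw [norm_mul, norm_inv, hcnorm, ← div_eq_inv_mul, div_lt_iff₀ (by positivity)]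
    linarith
  refine ⟨fun z ↦ F (c⁻¹ * z), hF.comp (by fun_prop) hmaps,
    fun z hz ↦ (hFbd _ (hmaps hz)).1.trans (le_add_of_nonneg_right (by positivity)),
    fun t ht ↦ ?_⟩
  have hquot := (hFbd _ (hmaps (show (t : ℂ) ∈ ball (0 : ℂ) (ε / 64) by simpa using ht))).2
  simp only [mul_inv_cancel_left₀ hc0] at hquot
  obtain ⟨hpt, hGt, hHt⟩ := hp t (by linarith)
  have hη2 : η ^ (2 * (j + 1)) ≤ η ^ 2 := pow_le_pow_of_le_one hη.le hη1 (by omega)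
  rw [add_mul]
  exact (norm_sub_le_norm_sub_add_norm_sub _ _ _).trans (add_le_add hquot
    (norm_regDiv_sub_le hj hC hη hη1 hpt (hGt.trans (by gcongr)) (hHt.trans (by gcongr))))

end ApproximateRoots

section WeightFunctions

/-- The weights `k ↦ exp (φ*_ω(ρ k) / ρ)` that bound the derivatives of functions of class
`E^{ω}` and `E^{(ω)}`. -/
def weightSeq (ω : ℝ → ℝ) (ρ : ℝ) (k : ℕ) : ℝ := Real.exp (phiStar ω (ρ * k) / ρ)

lemma weightSeq_pos (ω : ℝ → ℝ) (ρ : ℝ) (k : ℕ) : 0 < weightSeq ω ρ k := Real.exp_pos _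

lemma exists_subgradient_of_monotoneOn {φ : ℝ → ℝ} (hφ : ConvexOn ℝ (Ici 0) φ)
    (hm : MonotoneOn φ (Ici 0)) {S : ℝ} (hS : 0 < S) :
    ∃ σ, 0 ≤ σ ∧ ∀ s, 0 ≤ s → φ S + σ * (s - S) ≤ φ s := by
  have hSi : S ∈ interior (Ici (0 : ℝ)) := by simpa using hS
  have hleft : ∀ s, 0 ≤ s → s < S → slope φ s S ≤ derivWithin φ (Ioi S) S := fun s hs hsS ↦
    (hφ.slope_le_leftDeriv_of_mem_interior hs hSi hsS).trans
      (hφ.leftDeriv_le_rightDeriv_of_mem_interior hSi)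
  refine ⟨derivWithin φ (Ioi S) S, le_trans ?_ (hleft 0 le_rfl hS), fun s hs ↦ ?_⟩
  · rw [slope_def_field]
    exact div_nonneg (sub_nonneg.2 (hm self_mem_Ici hS.le hS.le)) (by linarith)
  · rcases lt_trichotomy s S with h | rfl | h
    · have := hleft s hs h
      rw [slope_def_field, div_le_iff₀ (by linarith)] at this
      linarith
    · simp
    · have := hφ.rightDeriv_le_slope_of_mem_interior hSi hs h
      rw [slope_def_field, le_div_iff₀ (by linarith)] at this
      linarith

namespace IsWeightFunction

variable {ω : ℝ → ℝ} {ρ R t : ℝ}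

lemma continuousOn (hω : IsWeightFunction ω) : ContinuousOn ω (Ici 0) := hω.1

lemma mono (hω : IsWeightFunction ω) (ht : 0 ≤ t) (htR : t ≤ R) : ω t ≤ ω R :=
  hω.2.1 ht (ht.trans htR) htR

lemma nonneg (hω : IsWeightFunction ω) (ht : 0 ≤ t) : 0 ≤ ω t := hω.2.2.1 t ht

lemma isLittleO_id (hω : IsWeightFunction ω) : ω =o[atTop] fun t ↦ t := hω.2.2.2.2.1

lemma isLittleO_log (hω : IsWeightFunction ω) : (fun t ↦ Real.log t) =o[atTop] ω :=
  hω.2.2.2.2.2.1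

lemma convexOn_exp (hω : IsWeightFunction ω) : ConvexOn ℝ (Ici 0) fun t ↦ ω (Real.exp t) :=
  hω.2.2.2.2.2.2

lemma eventually_log_le (hω : IsWeightFunction ω) {c : ℝ} (hc : 0 < c) :
    ∀ᶠ R in atTop, Real.log R ≤ c * ω R := by
  filter_upwards [hω.isLittleO_log.bound hc, eventually_ge_atTop 0] with R hR hR0
  rw [Real.norm_of_nonneg (hω.nonneg hR0)] at hR
  exact (le_abs_self _).trans hR

lemma eventually_le_mul (hω : IsWeightFunction ω) {c : ℝ} (hc : 0 < c) :
    ∀ᶠ R in atTop, ω R ≤ c * R := by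
  filter_upwards [hω.isLittleO_id.bound hc, eventually_ge_atTop 0] with R hR hR0
  rw [Real.norm_of_nonneg hR0] at hR
  exact (le_abs_self _).trans hR

lemma tendsto_atTop (hω : IsWeightFunction ω) : Tendsto ω atTop atTop :=
  tendsto_atTop_mono' _ ((hω.eventually_log_le one_pos).mono fun _ h ↦ by rwa [one_mul] at h)
    Real.tendsto_log_atTop

lemma eventually_exp_neg_le (hω : IsWeightFunction ω) {b : ℝ} (hb : 0 < b) (m : ℕ) :
    ∀ᶠ R in atTop, Real.exp (-(b * ω R)) ≤ (R ^ m)⁻¹ := by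
  filter_upwards [hω.eventually_log_le (c := b / (m + 1)) (by positivity), eventually_ge_atTop 1]
    with R hR hR1
  have hlog : 0 ≤ Real.log R := Real.log_nonneg hR1
  rw [div_mul_eq_mul_div, le_div_iff₀ (by positivity)] at hR
  rw [← Real.exp_log (zero_lt_one.trans_le hR1), ← Real.exp_nat_mul, ← Real.exp_neg,
    Real.exp_log (zero_lt_one.trans_le hR1)]
  exact Real.exp_le_exp.2 (by linarith)

lemma bddAbove_phiStar (hω : IsWeightFunction ω) {s : ℝ} (hs : 0 ≤ s) :
    BddAbove ((fun t ↦ s * t - ω (Real.exp t)) '' Ici 0) := by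
  obtain ⟨R₀, hR₀⟩ := eventually_atTop.1 (hω.eventually_log_le (c := 1 / (s + 1)) (by positivity))
  refine ⟨s * max 0 R₀, ?_⟩
  rintro _ ⟨t, ht, rfl⟩
  have hωt : 0 ≤ ω (Real.exp t) := hω.nonneg (Real.exp_pos t).le
  rcases le_total t (max 0 R₀) with h | h
  · dsimp only
    nlinarith
  · have := hR₀ (Real.exp t) (by linarith [le_max_right 0 R₀, Real.add_one_le_exp t])
    rw [Real.log_exp, div_mul_eq_mul_div, one_mul, le_div_iff₀ (by positivity)] at this
    have : 0 ≤ s * max 0 R₀ := by positivity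
    have : 0 ≤ t := ht
    dsimp only
    linarith

theorem weightSeq_le_iff (hω : IsWeightFunction ω) (hρ : 0 < ρ) {k : ℕ} {A : ℝ} (hA : 0 < A) :
    weightSeq ω ρ k ≤ A ↔ ∀ t, 1 ≤ t → t ^ k * Real.exp (-(ω t / ρ)) ≤ A := by
  have hterm : ∀ s, Real.exp s ^ k * Real.exp (-(ω (Real.exp s) / ρ)) ≤ A ↔
      ρ * k * s - ω (Real.exp s) ≤ Real.log A * ρ := fun s ↦ by
    rw [← Real.exp_nat_mul, ← Real.exp_add, ← Real.le_log_iff_exp_le hA, ← div_le_iff₀ hρ]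
    congr! 1
    field_simp
    ring
  rw [weightSeq, ← Real.le_log_iff_exp_le hA, div_le_iff₀ hρ, phiStar,
    csSup_le_iff (hω.bddAbove_phiStar (by positivity)) (nonempty_Ici.image _), forall_mem_image]
  refine ⟨fun h t ht ↦ ?_, fun h s hs ↦ (hterm s).1 (h _ (Real.one_le_exp hs))⟩
  rw [← Real.exp_log (zero_lt_one.trans_le ht)]
  exact (hterm _).2 (h (Real.log_nonneg ht))

lemma pow_mul_exp_neg_le_weightSeq (hω : IsWeightFunction ω) (hρ : 0 < ρ) (k : ℕ) (ht : 1 ≤ t) :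
    t ^ k * Real.exp (-(ω t / ρ)) ≤ weightSeq ω ρ k :=
  (hω.weightSeq_le_iff hρ (weightSeq_pos ω ρ k)).1 le_rfl t ht

lemma weightSeq_mono (hω : IsWeightFunction ω) {ρ' : ℝ} (hρ : 0 < ρ) (h : ρ ≤ ρ') (k : ℕ) :
    weightSeq ω ρ k ≤ weightSeq ω ρ' k := by
  refine (hω.weightSeq_le_iff hρ (weightSeq_pos _ _ _)).2 fun t ht ↦
    le_trans ?_ (hω.pow_mul_exp_neg_le_weightSeq (hρ.trans_le h) k ht)
  have : 0 ≤ ω t := hω.nonneg (by linarith)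
  gcongr

lemma weightSeq_zero_le (hω : IsWeightFunction ω) (hρ : 0 < ρ) : weightSeq ω ρ 0 ≤ 1 := by
  refine (hω.weightSeq_le_iff hρ one_pos).2 fun t ht ↦ ?_
  have : 0 ≤ ω t := hω.nonneg (by linarith)
  rw [pow_zero, one_mul, Real.exp_le_one_iff]
  exact neg_nonpos.2 (by positivity)

lemma exists_tangent_log (hω : IsWeightFunction ω) (hR : 1 < R) :
    ∃ σ, 0 ≤ σ ∧ ∀ t, 1 ≤ t → ω R + σ * (Real.log t - Real.log R) ≤ ω t := by
  obtain ⟨σ, hσ, hsub⟩ := exists_subgradient_of_monotoneOn hω.convexOn_exp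
    (fun a _ b _ hab ↦ hω.mono (Real.exp_pos a).le (Real.exp_le_exp.2 hab)) (Real.log_pos hR)
  refine ⟨σ, hσ, fun t ht ↦ ?_⟩
  have := hsub (Real.log t) (Real.log_nonneg ht)
  rwa [Real.exp_log (by linarith), Real.exp_log (by linarith)] at this

lemma div_mul_le (hω : IsWeightFunction ω) (hconc : ConcaveOn ℝ (Ici 0) ω) (ht : 0 ≤ t)
    (htR : t ≤ R) (hR : 0 < R) : t / R * ω R ≤ ω t := by
  have hle : 0 ≤ 1 - t / R := sub_nonneg.2 ((div_le_one hR).2 htR)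
  have h := hconc.2 self_mem_Ici hR.le hle (show 0 ≤ t / R by positivity) (by ring)
  simp only [smul_eq_mul, mul_zero, zero_add] at h
  rw [div_mul_cancel₀ _ hR.ne'] at h
  linarith [mul_nonneg hle (hω.nonneg le_rfl)]

lemma div_le_div (hω : IsWeightFunction ω) (hconc : ConcaveOn ℝ (Ici 0) ω) (ht : 0 < t)
    (htR : t ≤ R) (hωt : 0 < ω t) : t / ω t ≤ R / ω R := by
  have hωR : 0 < ω R := hωt.trans_le (hω.mono ht.le htR)
  have := hω.div_mul_le hconc ht.le htR (ht.trans_le htR)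
  rw [div_le_div_iff₀ hωt hωR]
  rwa [div_mul_eq_mul_div, div_le_iff₀ (ht.trans_le htR), mul_comm (ω t)] at this

lemma pow_mul_exp_neg_le_factorial (hω : IsWeightFunction ω) (hconc : ConcaveOn ℝ (Ici 0) ω)
    (hρ : 0 < ρ) (hωR : 0 < ω R) (k : ℕ) (ht : 0 ≤ t) (htR : t ≤ R) (hR : 0 < R) :
    t ^ k * Real.exp (-(ω t / ρ)) ≤ k.factorial * (ρ * R / ω R) ^ k := by
  set x := t / R * ω R / ρ with hx
  have hx0 : 0 ≤ x := by positivity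
  have hxt : x ≤ ω t / ρ := by
    have := hω.div_mul_le hconc ht htR hR
    rw [hx]
    gcongr
  have htx : t = ρ * R / ω R * x := by rw [hx]; field_simp
  have hfac : x ^ k * Real.exp (-x) ≤ k.factorial := by
    have := Real.pow_div_factorial_le_exp x hx0 k
    rw [div_le_iff₀ (by positivity)] at this
    rw [Real.exp_neg, ← div_eq_mul_inv, div_le_iff₀ (Real.exp_pos x)]
    linarith
  calc t ^ k * Real.exp (-(ω t / ρ)) ≤ t ^ k * Real.exp (-x) := by gcongr
    _ = (ρ * R / ω R) ^ k * (x ^ k * Real.exp (-x)) := by rw [← mul_assoc, ← mul_pow, ← htx]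
    _ ≤ (ρ * R / ω R) ^ k * k.factorial := by gcongr
    _ = _ := mul_comm _ _

lemma weightSeq_le_factorial_mul (hω : IsWeightFunction ω) (hconc : ConcaveOn ℝ (Ici 0) ω)
    (hρ : 0 < ρ) (hR : 1 < R) (hωR : 0 < ω R) {σ : ℝ}
    (hσ : ∀ t, 1 ≤ t → ω R + σ * (Real.log t - Real.log R) ≤ ω t) {k : ℕ} (hk : k ≤ σ / ρ) :
    weightSeq ω ρ k ≤ k.factorial * (ρ * R / ω R) ^ k := by
  have hR0 : 0 < R := by linarith
  refine (hω.weightSeq_le_iff hρ (by positivity)).2 fun t ht ↦ ?_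
  rcases le_or_gt t R with htR | htR
  · exact hω.pow_mul_exp_neg_le_factorial hconc hρ hωR k (by linarith) htR hR0
  refine le_trans ?_ (hω.pow_mul_exp_neg_le_factorial hconc hρ hωR k hR0.le le_rfl hR0)
  have hlog : 0 ≤ Real.log t - Real.log R := sub_nonneg.2 (Real.log_le_log hR0 htR.le)
  have hdrop : k * (Real.log t - Real.log R) ≤ ω t / ρ - ω R / ρ := by
    calc k * (Real.log t - Real.log R) ≤ σ / ρ * (Real.log t - Real.log R) := by gcongr
      _ = (σ * (Real.log t - Real.log R)) / ρ := by ring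
      _ ≤ (ω t - ω R) / ρ := by gcongr; linarith [hσ t ht]
      _ = _ := sub_div _ _ _
  rw [← Real.exp_log (hR0.trans htR), ← Real.exp_log hR0, ← Real.exp_nat_mul,
    ← Real.exp_nat_mul, ← Real.exp_add, ← Real.exp_add, Real.exp_log (hR0.trans htR),
    Real.exp_log hR0]
  exact Real.exp_le_exp.2 (by linarith)

lemma weightSeq_le_pow_mul_exp_neg (hω : IsWeightFunction ω) (hρ : 0 < ρ) (hR : 1 < R) {σ : ℝ}
    (hσ : ∀ t, 1 ≤ t → ω R + σ * (Real.log t - Real.log R) ≤ ω t) {K : ℕ} (hK : K ≤ σ / ρ)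
    (hK' : σ / ρ < K + 1) :
    weightSeq ω ρ K ≤ R ^ (K + 1) * Real.exp (-(ω R / ρ)) := by
  have hR0 : 0 < R := by linarith
  refine (hω.weightSeq_le_iff hρ (by positivity)).2 fun t ht ↦ ?_
  have ht0 : 0 < t := by linarith
  have hlogt : 0 ≤ Real.log t := Real.log_nonneg ht
  have hlogR : 0 ≤ Real.log R := Real.log_nonneg hR.le
  have hdrop : σ / ρ * (Real.log t - Real.log R) ≤ ω t / ρ - ω R / ρ := by
    rw [← sub_div, div_mul_eq_mul_div]
    exact div_le_div_of_nonneg_right (by linarith [hσ t ht]) hρ.le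
  have hfrac : (K - σ / ρ) * (Real.log t - Real.log R) ≤ Real.log R := by
    rcases le_total (Real.log t) (Real.log R) with _ | _ <;> nlinarith
  rw [← Real.exp_log ht0, ← Real.exp_log hR0, ← Real.exp_nat_mul, ← Real.exp_nat_mul,
    ← Real.exp_add, ← Real.exp_add, Real.exp_log ht0, Real.exp_log hR0]
  push_cast
  exact Real.exp_le_exp.2 (by linarith)

/- The order `K = ⌊σ / ρ⌋`, with `σ` the slope of `s ↦ ω (exp s)` at `log R`, balances the two
estimates. -/
theorem exists_weightSeq_mul_pow_div_factorial_le (hω : IsWeightFunction ω)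
    (hconc : ConcaveOn ℝ (Ici 0) ω) (hρ : 0 < ρ) (hR : 1 < R) (hωR : 0 < ω R)
    (hlog : Real.log R ≤ ω R / (4 * ρ)) {ε : ℝ} (hε : ε = ω R / (4 * ρ) / R) :
    ∃ K : ℕ, (∀ k ≤ K, weightSeq ω ρ k * ε ^ k / k.factorial ≤ (1 / 4) ^ k) ∧
      weightSeq ω ρ K * ε ^ K / K.factorial ≤ Real.exp (-(ω R / (2 * ρ))) := by
  obtain ⟨σ, hσ0, hσ⟩ := hω.exists_tangent_log hR
  have hR0 : 0 < R := by linarith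
  have hε0 : 0 < ε := by rw [hε]; positivity
  have hKle : (⌊σ / ρ⌋₊ : ℝ) ≤ σ / ρ := Nat.floor_le (by positivity)
  refine ⟨⌊σ / ρ⌋₊, fun k hk ↦ ?_, ?_⟩
  · rw [div_le_iff₀ (by positivity)]
    calc weightSeq ω ρ k * ε ^ k ≤ k.factorial * (ρ * R / ω R) ^ k * ε ^ k := by
          gcongr
          exact hω.weightSeq_le_factorial_mul hconc hρ hR hωR hσ
            (le_trans (by exact_mod_cast hk) hKle)
      _ = (ρ * R / ω R * ε) ^ k * k.factorial := by rw [mul_pow]; ring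
      _ = _ := by rw [hε]; field_simp
  · generalize hK : ⌊σ / ρ⌋₊ = K at hKle
    have hM := hω.weightSeq_le_pow_mul_exp_neg hρ hR hσ hKle (hK ▸ Nat.lt_floor_add_one _)
    have hx : ε * R = ω R / (4 * ρ) := by rw [hε]; field_simp
    calc weightSeq ω ρ K * ε ^ K / K.factorial
        ≤ R ^ (K + 1) * Real.exp (-(ω R / ρ)) * ε ^ K / K.factorial := by gcongr
      _ = (ε * R) ^ K / K.factorial * (R * Real.exp (-(ω R / ρ))) := by
          rw [mul_pow]; ring
      _ ≤ Real.exp (ω R / (4 * ρ)) * (Real.exp (ω R / (4 * ρ)) * Real.exp (-(ω R / ρ))) := by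
          rw [hx]
          gcongr
          · exact Real.pow_div_factorial_le_exp _ (by positivity) K
          · rwa [← Real.log_le_iff_le_exp hR0]
      _ = _ := by
          rw [← Real.exp_add, ← Real.exp_add]
          congr 1
          field_simp
          ring

lemma exists_ge_weight_eq (hω : IsWeightFunction ω) (hR : 0 ≤ R) {y : ℝ} (hy : ω R ≤ y) :
    ∃ S, R ≤ S ∧ ω S = y := by
  obtain ⟨T, hT, hRT⟩ :=
    ((hω.tendsto_atTop.eventually_ge_atTop y).and (eventually_ge_atTop R)).exists
  obtain ⟨S, hS, hωS⟩ := intermediate_value_Icc hRT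
    (hω.continuousOn.mono fun t ht ↦ hR.trans ht.1) ⟨hy, hT⟩
  exact ⟨S, hS.1, hωS⟩

theorem factorial_mul_pow_mul_exp_neg_le (hω : IsWeightFunction ω)
    (hconc : ConcaveOn ℝ (Ici 0) ω) (hρ : 0 < ρ) (hR : 1 ≤ R) (hωR : 0 < ω R) (k : ℕ) :
    k.factorial * (R / ω R) ^ k * Real.exp (-(ω R / ρ)) ≤
      (Real.exp 1 / ρ) ^ k * weightSeq ω ρ k := by
  have hR0 : 0 < R := by linarith
  obtain ⟨S, hRS, hS⟩ := hω.exists_ge_weight_eq hR0.le (le_max_left (ω R) (ρ * k))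
  have hωS : 0 < ω S := hωR.trans_le (hω.mono hR0.le hRS)
  have hkS : (k : ℝ) ≤ ω S / ρ := by
    rw [le_div_iff₀ hρ, hS, mul_comm]
    exact le_max_right _ _
  have hSk : ω S / ρ ≤ k + ω R / ρ := by
    rw [div_le_iff₀ hρ, add_mul, div_mul_cancel₀ _ hρ.ne', hS]
    exact max_le (by nlinarith [hω.nonneg hR0.le, Nat.cast_nonneg (α := ℝ) k]) (by linarith)
  have hfac : (k.factorial : ℝ) ≤ (ω S / ρ) ^ k :=
    (by exact_mod_cast Nat.factorial_le_pow k : (k.factorial : ℝ) ≤ (k : ℝ) ^ k).trans (by gcongr)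
  calc k.factorial * (R / ω R) ^ k * Real.exp (-(ω R / ρ))
      ≤ (ω S / ρ) ^ k * (S / ω S) ^ k * Real.exp (k - ω S / ρ) := by
        have := hω.div_le_div hconc hR0 hRS hωR
        have : 0 < S := hR0.trans_le hRS
        gcongr
        linarith
    _ = (Real.exp 1 / ρ) ^ k * (S ^ k * Real.exp (-(ω S / ρ))) := by
        rw [sub_eq_add_neg, Real.exp_add, ← mul_one (k : ℝ), Real.exp_nat_mul, ← mul_pow,
          ← mul_assoc, ← mul_pow, ← mul_assoc, ← mul_pow]
        congr 2
        field_simp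
    _ ≤ _ := by
        gcongr
        exact hω.pow_mul_exp_neg_le_weightSeq hρ k (hR.trans hRS)

lemma pow_mul_weightSeq_le (hω : IsWeightFunction ω) (hconc : ConcaveOn ℝ (Ici 0) ω)
    (hρ : 0 < ρ) {a : ℝ} (ha : 1 ≤ a) (k : ℕ) :
    a ^ k * weightSeq ω ρ k ≤ weightSeq ω (a * ρ) k := by
  have : 0 < a := by linarith
  rw [← le_div_iff₀' (by positivity),
    hω.weightSeq_le_iff hρ (div_pos (weightSeq_pos _ _ _) (by positivity))]
  intro t ht
  rw [le_div_iff₀' (by positivity), ← mul_assoc, ← mul_pow]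
  refine le_trans ?_ (hω.pow_mul_exp_neg_le_weightSeq (by positivity) k
    (show 1 ≤ a * t from one_le_mul_of_one_le_of_one_le ha ht))
  have := hω.div_mul_le hconc (t := t) (R := a * t) (by linarith) (by nlinarith) (by positivity)
  gcongr ?_ * Real.exp (-?_)
  calc ω (a * t) / (a * ρ) = t / (a * t) * ω (a * t) / ρ := by field_simp
    _ ≤ _ := by gcongr

end IsWeightFunction

end WeightFunctions

section HolomorphicApproximation

open Metric

variable {E : Type*} [NormedAddCommGroup E] [NormedSpace ℝ E]

lemma norm_add_sub_sum_iteratedFDeriv_le {F : Type*} [NormedAddCommGroup F] [NormedSpace ℝ F]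
    [CompleteSpace F] {f : E → F} {x v : E} {n : ℕ} {B : ℝ}
    (hf : ∀ t ∈ Icc (0 : ℝ) 1, ContDiffAt ℝ n f (x + t • v))
    (hB : ∀ t ∈ Icc (0 : ℝ) 1, ‖iteratedFDeriv ℝ n f (x + t • v)‖ ≤ B) :
    ‖f (x + v) - ∑ k ∈ Finset.range n, (k.factorial : ℝ)⁻¹ • iteratedFDeriv ℝ k f x fun _ ↦ v‖ ≤
      B * ‖v‖ ^ n / n.factorial := by
  rcases n with _ | n
  · simpa using hB 1 (by simp)
  have hint : ∫ t in (0 : ℝ)..1, (1 - t) ^ n * (B * ‖v‖ ^ (n + 1)) =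
      (n + 1 : ℝ)⁻¹ * (B * ‖v‖ ^ (n + 1)) := by
    rw [intervalIntegral.integral_mul_const, intervalIntegral.integral_comp_sub_left (· ^ n)]
    simp
  have hbound : ∀ t ∈ Icc (0 : ℝ) 1,
      ‖(1 - t) ^ n • iteratedFDeriv ℝ (n + 1) f (x + t • v) fun _ ↦ v‖ ≤
        (1 - t) ^ n * (B * ‖v‖ ^ (n + 1)) := fun t ht ↦ by
    have : 0 ≤ 1 - t := sub_nonneg.2 ht.2
    rw [norm_smul, Real.norm_of_nonneg (by positivity)]
    gcongr
    exact (ContinuousMultilinearMap.le_of_opNorm_le (hB t ht) _).trans_eq (by simp)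
  rw [map_add_eq_sum_add_integral_iteratedFDeriv (f := f) (y := v) (n := n) fun t ht ↦ by
      exact_mod_cast hf t ht,
    add_sub_cancel_left, norm_smul, norm_inv, Real.norm_natCast]
  calc _ ≤ (n.factorial : ℝ)⁻¹ * ∫ t in (0 : ℝ)..1, (1 - t) ^ n * (B * ‖v‖ ^ (n + 1)) := by
        gcongr
        refine intervalIntegral.norm_integral_le_of_norm_le zero_le_one
          (ae_of_all _ fun t ht ↦ hbound t ⟨ht.1.le, ht.2⟩) (Continuous.intervalIntegrable ?_ _ _)
        fun_prop
    _ = _ := by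
        rw [hint, Nat.factorial_succ]
        push_cast
        field_simp

/-- `F` is holomorphic and bounded by `C` on the disc of radius `κ * ω R / R` around `0`, and its
distance to `u` on the real diameter of that disc is at most `C * exp (-b * ω R)`. -/
structure IsHolomorphicApprox (ω : ℝ → ℝ) (u : ℝ → ℂ) (κ b C R : ℝ) (F : ℂ → ℂ) : Prop where
  differentiableOn : DifferentiableOn ℂ F (ball 0 (κ * ω R / R))
  norm_le : ∀ z ∈ ball (0 : ℂ) (κ * ω R / R), ‖F z‖ ≤ C
  norm_sub_le : ∀ t : ℝ, |t| < κ * ω R / R → ‖F t - u t‖ ≤ C * Real.exp (-(b * ω R))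

/-- `f` has holomorphic approximants along all lines through the points of `s`, with uniform
constants and at all sufficiently small scales `ω R / R`. -/
def HasHolomorphicApprox (ω : ℝ → ℝ) (f : E → ℂ) (s : Set E) (κ b C : ℝ) : Prop :=
  ∀ᶠ R in atTop, ∀ x ∈ s, ∀ v : E, ‖v‖ ≤ 1 →
    ∃ F : ℂ → ℂ, IsHolomorphicApprox ω (fun t ↦ f (x + t • v)) κ b C R F

variable {ω : ℝ → ℝ} {ρ R A r ε : ℝ} {f : E → ℂ} {x v : E}

lemma norm_sum_div_factorial_mul_le {K : ℕ} {M : ℕ → ℝ} {c : ℕ → ℂ} (hA : 0 ≤ A)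
    (hc : ∀ k, ‖c k‖ ≤ A * M k) (hM : ∀ k ≤ K, M k * ε ^ k / k.factorial ≤ (1 / 4) ^ k)
    {z : ℂ} (hz : ‖z‖ ≤ ε) :
    ‖∑ k ∈ Finset.range K, z ^ k / k.factorial * c k‖ ≤ 2 * A := by
  have hterm : ∀ k ∈ Finset.range K, ‖z ^ k / k.factorial * c k‖ ≤ A * (1 / 4) ^ k := by
    intro k hk
    rw [norm_mul, norm_div, norm_pow, Complex.norm_natCast]
    calc ‖z‖ ^ k / k.factorial * ‖c k‖ ≤ ε ^ k / k.factorial * (A * M k) := by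
          have : 0 ≤ ε := (norm_nonneg z).trans hz
          gcongr
          exact hc k
      _ = A * (M k * ε ^ k / k.factorial) := by ring
      _ ≤ _ := by
          gcongr
          exact hM k (Finset.mem_range.1 hk).le
  calc _ ≤ ∑ k ∈ Finset.range K, A * (1 / 4) ^ k := norm_sum_le_of_le _ hterm
    _ ≤ A * 2 := by
        rw [← Finset.mul_sum]
        gcongr
        refine (Summable.sum_le_tsum _ (fun k _ ↦ by positivity)
          (summable_geometric_of_lt_one (by norm_num) (by norm_num))).trans ?_
        rw [tsum_geometric_of_lt_one (by norm_num) (by norm_num)]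
        norm_num
    _ = _ := mul_comm _ _

lemma add_smul_mem_ball (hv : ‖v‖ ≤ 1) {t : ℝ} (ht : |t| < r) : x + t • v ∈ ball x r := by
  rw [mem_ball, dist_self_add_left, norm_smul, Real.norm_eq_abs]
  exact (mul_le_of_le_one_right (abs_nonneg t) hv).trans_lt ht

lemma norm_sub_sum_line_iteratedFDeriv_le {t B : ℝ} {n : ℕ} (hv : ‖v‖ ≤ 1) (ht : |t| < ε)
    (hf : ∀ y ∈ ball x ε, ContDiffAt ℝ n f y)
    (hB : ∀ y ∈ ball x ε, ‖iteratedFDeriv ℝ n f y‖ ≤ B) :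
    ‖f (x + t • v) -
        ∑ k ∈ Finset.range n, (t : ℂ) ^ k / k.factorial * iteratedFDeriv ℝ k f x fun _ ↦ v‖ ≤
      B * ε ^ n / n.factorial := by
  have hmem : ∀ s ∈ Icc (0 : ℝ) 1, x + s • t • v ∈ ball x ε := fun s hs ↦ by
    rw [smul_smul]
    refine add_smul_mem_ball hv (lt_of_le_of_lt ?_ ht)
    rw [abs_mul, abs_of_nonneg hs.1]
    exact mul_le_of_le_one_left (abs_nonneg t) hs.2
  have htaylor := norm_add_sub_sum_iteratedFDeriv_le (fun s hs ↦ hf _ (hmem s hs))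
    fun s hs ↦ hB _ (hmem s hs)
  have hsum : ∑ k ∈ Finset.range n, (k.factorial : ℝ)⁻¹ • iteratedFDeriv ℝ k f x (fun _ ↦ t • v) =
      ∑ k ∈ Finset.range n, (t : ℂ) ^ k / k.factorial * iteratedFDeriv ℝ k f x fun _ ↦ v := by
    refine Finset.sum_congr rfl fun k _ ↦ ?_
    rw [(iteratedFDeriv ℝ k f x).map_smul_univ (fun _ ↦ t), Finset.prod_const, Finset.card_univ,
      Fintype.card_fin, smul_smul, Complex.real_smul]
    push_cast
    ring
  rw [hsum] at htaylor
  have htv : ‖t • v‖ ≤ ε := by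
    rw [norm_smul]
    exact (mul_le_of_le_one_right (norm_nonneg t) hv).trans ht.le
  have : 0 ≤ B := (norm_nonneg _).trans (hB _ (add_smul_mem_ball hv ht))
  exact htaylor.trans (by gcongr)

/- The approximant is a Taylor polynomial whose order is chosen according to `R`. -/
lemma exists_differentiable_approx (hω : IsWeightFunction ω) (hconc : ConcaveOn ℝ (Ici 0) ω)
    (hρ : 0 < ρ) (hR : 1 < R) (hωR : 0 < ω R) (hlog : Real.log R ≤ ω R / (4 * ρ))
    (hε : ε = ω R / (4 * ρ) / R) (hA : 0 ≤ A)
    (hf : ∀ y ∈ ball x ε, ContDiffAt ℝ (⊤ : ℕ∞) f y)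
    (hM : ∀ y ∈ ball x ε, ∀ k, ‖iteratedFDeriv ℝ k f y‖ ≤ A * weightSeq ω ρ k) (hv : ‖v‖ ≤ 1) :
    ∃ G : ℂ → ℂ, Differentiable ℂ G ∧ (∀ z ∈ ball (0 : ℂ) ε, ‖G z‖ ≤ 2 * A) ∧
      ∀ t : ℝ, |t| < ε → ‖G t - f (x + t • v)‖ ≤ A * Real.exp (-(ω R / (2 * ρ))) := by
  obtain ⟨K, hK, hKexp⟩ :=
    hω.exists_weightSeq_mul_pow_div_factorial_le hconc hρ hR hωR hlog hε
  have : 0 < R := by linarith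
  have hε0 : 0 < ε := by rw [hε]; positivity
  refine ⟨fun z ↦ ∑ k ∈ Finset.range K, z ^ k / k.factorial * iteratedFDeriv ℝ k f x fun _ ↦ v,
    by fun_prop, fun z hz ↦ norm_sum_div_factorial_mul_le hA (fun k ↦ ?_) hK
      (mem_ball_zero_iff.1 hz).le, fun t ht ↦ ?_⟩
  · refine (ContinuousMultilinearMap.le_of_opNorm_le (hM x (mem_ball_self hε0) k) _).trans ?_
    have := (weightSeq_pos ω ρ k).le
    rw [Finset.prod_const]
    exact mul_le_of_le_one_right (by positivity) (pow_le_one₀ (norm_nonneg v) hv)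
  · rw [norm_sub_rev]
    calc _ ≤ A * weightSeq ω ρ K * ε ^ K / K.factorial := norm_sub_sum_line_iteratedFDeriv_le hv ht
          (fun y hy ↦ (hf y hy).of_le (by exact_mod_cast le_top)) fun y hy ↦ hM y hy K
      _ = A * (weightSeq ω ρ K * ε ^ K / K.factorial) := by ring
      _ ≤ _ := by gcongr

lemma norm_le_of_norm_iteratedFDeriv_zero_pow_le (hω : IsWeightFunction ω) {j : ℕ} (hj : j ≠ 0)
    (hρ : 0 < ρ) (hA : 1 ≤ A) (h : ‖iteratedFDeriv ℝ 0 (f ^ j) x‖ ≤ A * weightSeq ω ρ 0) :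
    ‖f x‖ ≤ A := by
  have hpow : ‖f x‖ ^ j ≤ A := by
    rw [norm_iteratedFDeriv_zero, Pi.pow_apply, norm_pow] at h
    exact h.trans (mul_le_of_le_one_right (by linarith) (hω.weightSeq_zero_le hρ))
  rcases le_total ‖f x‖ 1 with hle | hge
  · exact hle.trans hA
  · exact (le_self_pow₀ hge hj).trans hpow

lemma exists_differentiableOn_approx_of_pow (hω : IsWeightFunction ω)
    (hconc : ConcaveOn ℝ (Ici 0) ω) {j : ℕ} (hj : j ≠ 0) (hρ : 0 < ρ) (hA : 1 ≤ A) :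
    ∃ C, ∀ (f : E → ℂ) (x v : E) (R ε : ℝ), ‖v‖ ≤ 1 → 1 < R → 0 < ω R →
      Real.log R ≤ ω R / (4 * ρ) → ε = ω R / (4 * ρ) / R →
      (∀ i ∈ ({j, j + 1} : Set ℕ), ∀ y ∈ ball x ε, ContDiffAt ℝ (⊤ : ℕ∞) (f ^ i) y ∧
        ∀ k, ‖iteratedFDeriv ℝ k (f ^ i) y‖ ≤ A * weightSeq ω ρ k) →
      ∃ F : ℂ → ℂ, DifferentiableOn ℂ F (ball 0 (ε / 64)) ∧
        (∀ z ∈ ball (0 : ℂ) (ε / 64), ‖F z‖ ≤ C) ∧ ∀ t : ℝ, |t| < ε / 64 →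
          ‖F t - f (x + t • v)‖ ≤ C * Real.exp (-(1 / (8 * ρ * j * (j + 1)) * ω R)) := by
  obtain ⟨C, hC⟩ := exists_differentiableOn_norm_sub_le_of_approx_pow hj
    (show 1 ≤ 2 * A by linarith)
  refine ⟨C, fun f x v R ε hv hR hωR hlog hε hf ↦ ?_⟩
  have happrox : ∀ i ∈ ({j, j + 1} : Set ℕ), ∃ G : ℂ → ℂ, Differentiable ℂ G ∧
      (∀ z ∈ ball (0 : ℂ) ε, ‖G z‖ ≤ 2 * A) ∧ ∀ t : ℝ, |t| < ε →
        ‖G t - (f ^ i) (x + t • v)‖ ≤ A * Real.exp (-(ω R / (2 * ρ))) := fun i hi ↦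
    exists_differentiable_approx hω hconc hρ hR hωR hlog hε (by linarith)
      (fun y hy ↦ (hf i hi y hy).1) (fun y hy ↦ (hf i hi y hy).2) hv
  obtain ⟨G, hG, hGA, hGf⟩ := happrox j (by simp)
  obtain ⟨H, hH, hHA, hHf⟩ := happrox (j + 1) (by simp)
  set η := Real.exp (-(ω R / (4 * ρ * (j + 1)))) with hη
  have hηpow : Real.exp (-(ω R / (2 * ρ))) = η ^ (2 * (j + 1)) := by
    rw [hη, ← Real.exp_nat_mul]
    congr 1
    push_cast
    field_simp
    ring
  have hηroot : Real.exp (-(1 / (8 * ρ * j * (j + 1)) * ω R)) = η ^ ((2 * j : ℕ)⁻¹ : ℝ) := by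
    rw [hη, ← Real.exp_mul]
    congr 1
    push_cast
    field_simp
    ring
  have hle : A * Real.exp (-(ω R / (2 * ρ))) ≤ 2 * A * η ^ (2 * (j + 1)) := by
    rw [hηpow]
    gcongr
    linarith
  rw [hηroot]
  refine hC (fun t ↦ f (x + t • v)) G H ε η (by rw [hε]; positivity) (Real.exp_pos _)
    (Real.exp_le_one_iff.2 (neg_nonpos.2 (by positivity))) hG hH
    (fun z hz ↦ ⟨hGA z hz, hHA z hz⟩) fun t ht ↦
      ⟨?_, (hGf t ht).trans hle, (hHf t ht).trans hle⟩
  exact (norm_le_of_norm_iteratedFDeriv_zero_pow_le hω hj hρ hA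
    ((hf j (by simp) _ (add_smul_mem_ball hv ht)).2 0)).trans (by linarith)

theorem exists_hasHolomorphicApprox_of_pow (hω : IsWeightFunction ω)
    (hconc : ConcaveOn ℝ (Ici 0) ω) {j : ℕ} (hj : j ≠ 0) (hρ : 0 < ρ) (hA : 1 ≤ A) {a : E}
    (hr : 0 < r)
    (hf : ∀ i ∈ ({j, j + 1} : Set ℕ), ∀ y ∈ ball a (2 * r), ContDiffAt ℝ (⊤ : ℕ∞) (f ^ i) y ∧
      ∀ k, ‖iteratedFDeriv ℝ k (f ^ i) y‖ ≤ A * weightSeq ω ρ k) :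
    ∃ C, HasHolomorphicApprox ω f (ball a r) (1 / (256 * ρ)) (1 / (8 * ρ * j * (j + 1))) C := by
  obtain ⟨C, hC⟩ := exists_differentiableOn_approx_of_pow (E := E) hω hconc hj hρ hA
  refine ⟨C, ?_⟩
  filter_upwards [hω.eventually_log_le (c := (4 * ρ)⁻¹) (by positivity),
    hω.eventually_le_mul (c := 4 * ρ * r) (by positivity), eventually_gt_atTop 1,
    hω.tendsto_atTop.eventually_gt_atTop 0] with R hlog hsmall hR hωR x hx v hv
  have hεr : ω R / (4 * ρ) / R ≤ r := by
    rw [div_div, div_le_iff₀ (by positivity)]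
    linarith
  have hrad : 1 / (256 * ρ) * ω R / R = ω R / (4 * ρ) / R / 64 := by
    field_simp
    ring
  rw [← div_eq_inv_mul] at hlog
  obtain ⟨F, hF, hFC, hFf⟩ := hC f x v R _ hv hR hωR hlog rfl fun i hi y hy ↦
    hf i hi y (ball_subset_ball' (by linarith [mem_ball.1 hx]) hy)
  rw [← hrad] at hF hFC hFf
  exact ⟨F, hF, hFC, hFf⟩

end HolomorphicApproximation

section PolynomialApproximation

open Metric Topology Polynomial
open scoped fwdDiff

lemma norm_fwdDiff_iter_le_of_norm_sub_eval_le {M : Type*} [AddCommMonoid M] {f : M → ℂ} {x τ : M}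
    {n : ℕ} {P : ℂ[X]} (hP : P.natDegree < n) {c : ℂ} {δ : ℝ}
    (hδ : ∀ k ≤ n, ‖f (x + k • τ) - P.eval (k * c)‖ ≤ δ) : ‖(Δ_[τ])^[n] f x‖ ≤ 2 ^ n * δ := by
  have hpoly : ∑ k ∈ Finset.range (n + 1),
      ((-1 : ℤ) ^ (n - k) * n.choose k) • P.eval (k * c) = 0 := by
    have hdeg : (P.comp (C c * X)).natDegree < n := by
      have : (C c * X).natDegree ≤ 1 := natDegree_C_mul_le c X |>.trans natDegree_X_le
      exact natDegree_comp_le.trans_lt (by nlinarith)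
    have hzero := congrFun (fwdDiff_iter_eq_zero_of_degree_lt hdeg) 0
    rw [fwdDiff_iter_eq_sum_shift] at hzero
    simpa [eval_comp, mul_comm c] using hzero
  rw [fwdDiff_iter_eq_sum_shift, ← sub_zero (Finset.sum _ _), ← hpoly, ← Finset.sum_sub_distrib]
  calc _ ≤ ∑ k ∈ Finset.range (n + 1), (n.choose k : ℝ) * δ := by
        refine norm_sum_le_of_le _ fun k hk ↦ ?_
        rw [← smul_sub, zsmul_eq_mul, norm_mul]
        have := hδ k (Nat.lt_succ_iff.1 (Finset.mem_range.1 hk))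
        push_cast
        simp only [norm_mul, norm_pow, norm_neg, norm_one, one_pow, one_mul, Complex.norm_natCast]
        gcongr
    _ = _ := by
        rw [← Finset.sum_mul]
        congr 1
        exact_mod_cast Nat.sum_range_choose n

lemma norm_sub_taylor_sum_le_of_norm_le {F : ℂ → ℂ} {r C : ℝ} {z : ℂ} (hr : 0 < r)
    (hF : DifferentiableOn ℂ F (ball 0 r)) (hC : ∀ w ∈ ball (0 : ℂ) r, ‖F w‖ ≤ C)
    (hz : ‖z‖ ≤ r / 4) (n : ℕ) :
    ‖F z - ∑ k ∈ Finset.range n, z ^ k / k.factorial * iteratedDeriv k F 0‖ ≤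
      2 * C * (2 * ‖z‖ / r) ^ n := by
  have hC0 : 0 ≤ C := (norm_nonneg _).trans (hC 0 (mem_ball_self hr))
  have hsub : closedBall (0 : ℂ) (r / 2) ⊆ ball 0 r := closedBall_subset_ball (by linarith)
  have hcauchy : ∀ k, ‖iteratedDeriv k F 0‖ ≤ k.factorial * C / (r / 2) ^ k := fun k ↦
    Complex.norm_iteratedDeriv_le_of_forall_mem_sphere_norm_le k (by positivity)
      (hF.mono (closure_ball_subset_closedBall.trans hsub)).diffContOnCl
      fun w hw ↦ hC w (hsub (sphere_subset_closedBall hw))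
  set q := 2 * ‖z‖ / r with hq
  have : 0 ≤ q := by positivity
  have hq1 : q ≤ 1 / 2 := by rw [hq, div_le_iff₀ hr]; linarith
  have hterm : ∀ k, ‖z ^ k / k.factorial * iteratedDeriv k F 0‖ ≤ C * q ^ k := fun k ↦ by
    rw [norm_mul, norm_div, norm_pow, Complex.norm_natCast]
    calc ‖z‖ ^ k / k.factorial * ‖iteratedDeriv k F 0‖
        ≤ ‖z‖ ^ k / k.factorial * (k.factorial * C / (r / 2) ^ k) := by
          gcongr
          exact hcauchy k
      _ = C * q ^ k := by
          rw [hq]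
          have : 2 * ‖z‖ / r = ‖z‖ / (r / 2) := by field_simp
          rw [this, div_pow ‖z‖]
          field_simp
  have htaylor : HasSum (fun k : ℕ ↦ z ^ k / k.factorial * iteratedDeriv k F 0) (F z) := by
    refine (Complex.hasSum_taylorSeries_on_ball hF
      (mem_ball_zero_iff.2 (hz.trans_lt (by linarith)))).congr_fun fun k ↦ ?_
    rw [sub_zero, smul_eq_mul, smul_eq_mul]
    ring
  have hgeom : HasSum (fun i : ℕ ↦ C * q ^ n * (1 / 2 : ℝ) ^ i) (2 * C * q ^ n) := by
    rw [mul_comm 2, mul_right_comm]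
    exact hasSum_geometric_two.mul_left (C * q ^ n)
  refine ((hasSum_nat_add_iff' n).2 htaylor).norm_le_of_bounded hgeom fun i ↦ (hterm _).trans ?_
  rw [pow_add, mul_comm (q ^ i), ← mul_assoc]
  gcongr

variable {E : Type*} [NormedAddCommGroup E] [NormedSpace ℝ E] {f g : E → ℂ} {s : Set E}
  {m n n' : ℕ} {L : ℝ}

/-- Approximation of order `m` by polynomials along the line segments through the points of `s`:
for all small `h`, on each segment of half-length `L * h` the function `f` is within `O(h ^ m)` of
a bounded polynomial of degree at most `n`. -/
def HasPolynomialApprox (f : E → ℂ) (s : Set E) (m n : ℕ) (L : ℝ) : Prop :=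
  ∃ D, ∀ᶠ h in 𝓝[>] (0 : ℝ), ∀ x ∈ s, ∀ v : E, ‖v‖ ≤ 1 → ∃ P : ℂ[X], P.natDegree ≤ n ∧
    ∀ t : ℝ, |t| ≤ L * h → ‖P.eval (t : ℂ)‖ ≤ D ∧ ‖f (x + t • v) - P.eval (t : ℂ)‖ ≤ D * h ^ m

lemma HasPolynomialApprox.mono {s' : Set E} (hf : HasPolynomialApprox f s m n L) (hs : s' ⊆ s) :
    HasPolynomialApprox f s' m n L := by
  obtain ⟨D, hD⟩ := hf
  exact ⟨D, hD.mono fun h hh x hx ↦ hh x (hs hx)⟩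

lemma exists_natDegree_le_eval_eq_sum (n : ℕ) (c : ℕ → ℂ) : ∃ P : ℂ[X], P.natDegree ≤ n ∧
    ∀ z, P.eval z = ∑ k ∈ Finset.range n, z ^ k / k.factorial * c k := by
  refine ⟨∑ k ∈ Finset.range n, C (c k / k.factorial) * X ^ k,
    natDegree_sum_le_of_forall_le _ _ fun k hk ↦ (natDegree_C_mul_X_pow_le _ _).trans
      (Finset.mem_range.1 hk).le, fun z ↦ ?_⟩
  rw [eval_finsetSum]
  refine Finset.sum_congr rfl fun k _ ↦ ?_
  rw [eval_C_mul, eval_X_pow]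
  ring

lemma eventually_nhdsGT_pos_and_le_one : ∀ᶠ h in 𝓝[>] (0 : ℝ), 0 < h ∧ h ≤ 1 :=
  eventually_mem_nhdsWithin.and (nhdsWithin_le_nhds (eventually_le_nhds one_pos))

theorem HasPolynomialApprox.mul (hf : HasPolynomialApprox f s m n L)
    (hg : HasPolynomialApprox g s m n' L) : HasPolynomialApprox (f * g) s m (n + n') L := by
  obtain ⟨A, hA⟩ := hf
  obtain ⟨B, hB⟩ := hg
  refine ⟨3 * A * B, ?_⟩
  filter_upwards [hA, hB, eventually_nhdsGT_pos_and_le_one] with h hA hB ⟨hh0, hh1⟩ x hx v hv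
  obtain ⟨P, hPdeg, hP⟩ := hA x hx v hv
  obtain ⟨Q, hQdeg, hQ⟩ := hB x hx v hv
  refine ⟨P * Q, natDegree_mul_le.trans (add_le_add hPdeg hQdeg), fun t ht ↦ ?_⟩
  obtain ⟨hPA, hfP⟩ := hP t ht
  obtain ⟨hQB, hgQ⟩ := hQ t ht
  have hA0 : 0 ≤ A := (norm_nonneg _).trans hPA
  have hB0 : 0 ≤ B := (norm_nonneg _).trans hQB
  rw [eval_mul, Pi.mul_apply]
  set y := x + t • v
  have hgB : ‖g y‖ ≤ 2 * B := calc
    ‖g y‖ ≤ ‖g y - Q.eval (t : ℂ)‖ + ‖Q.eval (t : ℂ)‖ := norm_le_norm_sub_add _ _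
    _ ≤ B * 1 + B := by
        gcongr
        exact hgQ.trans (by gcongr; exact pow_le_one₀ hh0.le hh1)
    _ = 2 * B := by ring
  constructor
  · rw [norm_mul]
    nlinarith [mul_le_mul hPA hQB (norm_nonneg _) hA0, mul_nonneg hA0 hB0]
  · calc ‖f y * g y - P.eval (t : ℂ) * Q.eval (t : ℂ)‖
        = ‖(f y - P.eval (t : ℂ)) * g y + P.eval (t : ℂ) * (g y - Q.eval (t : ℂ))‖ := by ring_nf
      _ ≤ A * h ^ m * (2 * B) + A * (B * h ^ m) := by
          refine norm_add_le_of_le ?_ ?_ <;> rw [norm_mul] <;> gcongr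
      _ = 3 * A * B * h ^ m := by ring

theorem hasPolynomialApprox_of_hasCompactSupport (hf : ContDiff ℝ m f) (hc : HasCompactSupport f)
    (hL : 0 ≤ L) : HasPolynomialApprox f univ m m L := by
  obtain ⟨A, hA⟩ := hc.exists_bound_of_continuous hf.continuous
  obtain ⟨B, hB⟩ := (hc.iteratedFDeriv m).exists_bound_of_continuous 
    (hf.continuous_iteratedFDeriv le_rfl)
  have hA0 : 0 ≤ A := (norm_nonneg _).trans (hA 0)
  have hB0 : 0 ≤ B := (norm_nonneg _).trans (hB 0)
  have : 0 ≤ B * (L + 1) ^ m := by positivity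
  refine ⟨A + B * (L + 1) ^ m, ?_⟩
  filter_upwards [eventually_nhdsGT_pos_and_le_one] with h ⟨hh0, hh1⟩ x _ v hv
  obtain ⟨P, hPdeg, hP⟩ :=
    exists_natDegree_le_eval_eq_sum m fun k ↦ iteratedFDeriv ℝ k f x fun _ ↦ v
  refine ⟨P, hPdeg, fun t ht ↦ ?_⟩
  have hfP : ‖f (x + t • v) - P.eval (t : ℂ)‖ ≤ B * (L + 1) ^ m * h ^ m := by
    rw [hP]
    calc _ ≤ B * ((L + 1) * h) ^ m / m.factorial :=
          norm_sub_sum_line_iteratedFDeriv_le hv (ht.trans_lt (by linarith))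
            (fun y _ ↦ hf.contDiffAt) fun y _ ↦ hB y
      _ ≤ B * ((L + 1) * h) ^ m :=
          div_le_self (by positivity) (by exact_mod_cast m.factorial_pos)
      _ = _ := by rw [mul_pow, mul_assoc]
  constructor
  · calc ‖P.eval (t : ℂ)‖ ≤ ‖f (x + t • v)‖ + ‖f (x + t • v) - P.eval (t : ℂ)‖ :=
          norm_le_norm_add_norm_sub _ _
      _ ≤ A + B * (L + 1) ^ m * 1 := by
          refine add_le_add (hA _) (hfP.trans ?_)
          gcongr
          exact pow_le_one₀ hh0.le hh1
      _ = _ := by rw [mul_one]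
  · exact hfP.trans (by gcongr; linarith)

lemma exists_polynomial_norm_sub_le_of_norm_le {F : ℂ → ℂ} {d C σ : ℝ} (hd : 0 < d)
    (hF : DifferentiableOn ℂ F (ball 0 d)) (hC : ∀ z ∈ ball (0 : ℂ) d, ‖F z‖ ≤ C) (hσ0 : 0 ≤ σ)
    (hσ : σ ≤ 1 / 2) (n : ℕ) : ∃ P : ℂ[X], P.natDegree ≤ n ∧ ∀ z, 2 * ‖z‖ ≤ σ * d →
      ‖P.eval z‖ ≤ 3 * C ∧ ‖F z - P.eval z‖ ≤ 2 * C * σ ^ n := by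
  obtain ⟨P, hPdeg, hP⟩ := exists_natDegree_le_eval_eq_sum n fun k ↦ iteratedDeriv k F 0
  refine ⟨P, hPdeg, fun z hz ↦ ?_⟩
  have hσd : σ * d ≤ 1 / 2 * d := by gcongr
  have hC0 : 0 ≤ C := (norm_nonneg _).trans (hC 0 (mem_ball_self hd))
  have hFP : ‖F z - P.eval z‖ ≤ 2 * C * σ ^ n := by
    rw [hP]
    refine (norm_sub_taylor_sum_le_of_norm_le hd hF hC (by linarith) n).trans ?_
    gcongr
    rwa [div_le_iff₀ hd]
  refine ⟨?_, hFP⟩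
  calc ‖P.eval z‖ ≤ ‖F z‖ + ‖F z - P.eval z‖ := norm_le_norm_add_norm_sub _ _
    _ ≤ C + 2 * C * 1 := by
        refine add_le_add (hC z (mem_ball_zero_iff.2 (by linarith [norm_nonneg z])))
          (hFP.trans ?_)
        gcongr
        exact pow_le_one₀ hσ0 (by linarith)
    _ = 3 * C := by ring

/- With `R = h ^ (-1/2)` the approximants of `f` are holomorphic on discs of radius of order
`ω R * √h`, much larger than `h`, so their Taylor polynomials of degree `2 * m` are `O(h ^ m)`
close to them, while `exp (-b * ω R)` decays faster than any power of `h`. -/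
theorem HasHolomorphicApprox.hasPolynomialApprox {ω : ℝ → ℝ} {κ b C : ℝ}
    (hf : HasHolomorphicApprox ω f s κ b C) (hω : IsWeightFunction ω) (hκ : 0 < κ) (hb : 0 < b)
    (m : ℕ) (L : ℝ) : HasPolynomialApprox f s m (2 * m) L := by
  refine ⟨3 * C, ?_⟩
  have hlim : Tendsto (fun h : ℝ ↦ (√h)⁻¹) (𝓝[>] 0) atTop :=
    tendsto_inv_nhdsGT_zero.comp (tendsto_nhdsWithin_iff.2
      ⟨(Real.continuous_sqrt.tendsto' 0 0 Real.sqrt_zero).mono_left nhdsWithin_le_nhds,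
        eventually_mem_nhdsWithin.mono fun h hh ↦ Real.sqrt_pos.2 hh⟩)
  filter_upwards [hlim.eventually (hf.and ((hω.eventually_exp_neg_le hb (2 * m)).and
    ((hω.tendsto_atTop.eventually_ge_atTop (2 * L / κ)).and
      ((hω.tendsto_atTop.eventually_gt_atTop 0).and (eventually_ge_atTop 2))))),
    eventually_mem_nhdsWithin] with h ⟨hF, hexp, hωL, hω0, hR⟩ hh x hx v hv
  obtain ⟨F, hF, hFC, hFf⟩ := hF x hx v hv
  set σ := √h with hσ
  have hσ0 : 0 < σ := Real.sqrt_pos.2 hh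
  have hhσ : h = σ ^ 2 := (Real.sq_sqrt (le_of_lt hh)).symm
  have hσ1 : σ ≤ 1 / 2 := by rw [le_inv_comm₀ two_pos hσ0] at hR; linarith
  set d := κ * ω σ⁻¹ / σ⁻¹ with hd
  have hd0 : 0 < d := by positivity
  have htd : ∀ t : ℝ, |t| ≤ L * h → 2 * |t| ≤ σ * d := fun t ht ↦ calc
    2 * |t| ≤ 2 * L * σ ^ 2 := by rw [mul_assoc, ← hhσ]; linarith
    _ ≤ ω σ⁻¹ * κ * σ ^ 2 := mul_le_mul_of_nonneg_right ((div_le_iff₀ hκ).1 hωL) (sq_nonneg σ)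
    _ = σ * d := by rw [hd]; field_simp
  have hσh : σ ^ (2 * m) = h ^ m := by rw [hhσ, pow_mul]
  obtain ⟨P, hPdeg, hP⟩ :=
    exists_polynomial_norm_sub_le_of_norm_le hd0 hF hFC hσ0.le hσ1 (2 * m)
  refine ⟨P, hPdeg, fun t ht ↦ ?_⟩
  obtain ⟨hPC, hFP⟩ := hP t (by simpa using htd t ht)
  refine ⟨hPC, ?_⟩
  have htd' : |t| < d := by linarith [htd t ht, mul_le_mul_of_nonneg_right hσ1 hd0.le, abs_nonneg t]
  calc ‖f (x + t • v) - P.eval (t : ℂ)‖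
      ≤ ‖f (x + t • v) - F t‖ + ‖F t - P.eval (t : ℂ)‖ := norm_sub_le_norm_sub_add_norm_sub _ _ _
    _ ≤ C * (σ⁻¹ ^ (2 * m))⁻¹ + 2 * C * σ ^ (2 * m) := by
        rw [norm_sub_rev]
        have : 0 ≤ C := (norm_nonneg _).trans (hFC 0 (mem_ball_self hd0))
        gcongr
        exact (hFf t htd').trans (by gcongr)
    _ = 3 * C * h ^ m := by
        rw [inv_pow, inv_inv, hσh]
        ring

lemma HasPolynomialApprox.exists_norm_fwdDiff_iter_le {N : ℕ}
    (hf : HasPolynomialApprox f s m n N) (hn : n < N) :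
    ∃ D, ∀ᶠ h in 𝓝[>] (0 : ℝ), ∀ x ∈ s, ∀ τ : E, ‖τ‖ = h → ‖(Δ_[τ])^[N] f x‖ ≤ D * h ^ m := by
  obtain ⟨D, hD⟩ := hf
  refine ⟨2 ^ N * D, ?_⟩
  filter_upwards [hD, eventually_mem_nhdsWithin] with h hD hh x hx τ hτ
  have hh0 : 0 < h := hh
  obtain ⟨P, hPdeg, hP⟩ := hD x hx (h⁻¹ • τ) (by
    rw [norm_smul, norm_inv, hτ, Real.norm_of_nonneg hh0.le, inv_mul_cancel₀ hh0.ne'])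
  rw [mul_assoc]
  refine norm_fwdDiff_iter_le_of_norm_sub_eval_le (c := h) (hPdeg.trans_lt hn) fun k hk ↦ ?_
  have hkh := (hP (k * h) (by rw [abs_of_nonneg (by positivity)]; gcongr)).2
  rwa [smul_smul, mul_inv_cancel_right₀ hh0.ne', Nat.cast_smul_eq_nsmul, Complex.ofReal_mul,
    Complex.ofReal_natCast] at hkh

end PolynomialApproximation

section FourierDecay

open Metric Topology FourierTransform
open scoped fwdDiff RealInnerProductSpace

lemma integrable_fwdDiff_iter {E : Type*} [AddCommGroup E] [MeasurableSpace E] [MeasurableAdd E]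
    {F : Type*} [NormedAddCommGroup F] {μ : Measure E} [μ.IsAddRightInvariant] {ψ : E → F}
    (hψ : Integrable ψ μ) (τ : E) (n : ℕ) : Integrable ((Δ_[τ])^[n] ψ) μ := by
  induction n with
  | zero => exact hψ
  | succ n ih =>
    rw [Function.iterate_succ_apply']
    exact (ih.comp_add_right τ).sub ih

lemma fwdDiff_iter_eq_zero_of_le_norm {E : Type*} [NormedAddCommGroup E] {F : Type*}
    [AddCommGroup F] {ψ : E → F} {a x τ : E} {r ε : ℝ} {n : ℕ}
    (hψ : ∀ y, r ≤ dist y a → ψ y = 0) (hx : r + ε ≤ dist x a) (hτ : n * ‖τ‖ ≤ ε) :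
    (Δ_[τ])^[n] ψ x = 0 := by
  rw [fwdDiff_iter_eq_sum_shift]
  refine Finset.sum_eq_zero fun k hk ↦ ?_
  have hkτ : ‖k • τ‖ ≤ ε := (norm_nsmul_le.trans (by
    gcongr
    exact Nat.lt_succ_iff.1 (Finset.mem_range.1 hk))).trans hτ
  have := dist_triangle_left x a (x + k • τ)
  rw [dist_self_add_left] at this
  rw [hψ _ (by linarith), smul_zero]

variable {E : Type*} [NormedAddCommGroup E] [InnerProductSpace ℝ E] [FiniteDimensional ℝ E]
  [MeasurableSpace E] [BorelSpace E] {ψ : E → ℂ}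

lemma fourier_fwdDiff_iter (hψ : Integrable ψ) (τ ξ : E) (n : ℕ) :
    𝓕 ((Δ_[τ])^[n] ψ) ξ = ((Real.fourierChar ⟪τ, ξ⟫ : ℂ) - 1) ^ n * 𝓕 ψ ξ := by
  induction n with
  | zero => simp
  | succ n ih =>
    set φ := (Δ_[τ])^[n] ψ
    have hφ : Integrable φ := integrable_fwdDiff_iter hψ τ n
    have hshift : 𝓕 (fun x ↦ φ (x + τ)) ξ = Real.fourierChar ⟪τ, ξ⟫ • 𝓕 φ ξ :=
      congrFun (VectorFourier.fourierIntegral_comp_add_right Real.fourierChar volume (innerₗ E)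
        φ τ) ξ
    have hsub : 𝓕 (Δ_[τ] φ) ξ = 𝓕 (fun x ↦ φ (x + τ)) ξ - 𝓕 φ ξ := by
      simp only [Real.fourier_eq, fwdDiff, smul_sub]
      exact integral_sub ((Real.fourierIntegral_convergent_iff ξ).2 (hφ.comp_add_right τ))
        ((Real.fourierIntegral_convergent_iff ξ).2 hφ)
    rw [Function.iterate_succ_apply', hsub, hshift, ih, Circle.smul_def, smul_eq_mul]
    ring

/- The translation `τ = ξ / (2 ‖ξ‖²)` multiplies the Fourier transform at `ξ` by `-1`. -/
lemma exists_norm_fourier_le_norm_fwdDiff_iter (hψ : Integrable ψ) {ξ : E} (hξ : ξ ≠ 0) (n : ℕ) :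
    ∃ τ : E, ‖τ‖ = (2 * ‖ξ‖)⁻¹ ∧ ‖𝓕 ψ ξ‖ ≤ ‖𝓕 ((Δ_[τ])^[n] ψ) ξ‖ := by
  have : 0 < ‖ξ‖ := norm_pos_iff.2 hξ
  refine ⟨(2 * ‖ξ‖ ^ 2)⁻¹ • ξ, ?_, ?_⟩
  · rw [norm_smul, Real.norm_of_nonneg (by positivity)]
    field_simp
  · have hinner : ⟪(2 * ‖ξ‖ ^ 2)⁻¹ • ξ, ξ⟫ = 1 / 2 := by
      rw [real_inner_smul_left, real_inner_self_eq_norm_sq]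
      field_simp
    have hchar : (Real.fourierChar (1 / 2) : ℂ) = -1 := by
      rw [Real.fourierChar_apply, ← Complex.exp_pi_mul_I]
      congr 1
      push_cast
      ring
    rw [fourier_fwdDiff_iter hψ, hinner, hchar, norm_mul, norm_pow]
    refine le_mul_of_one_le_left (norm_nonneg _) (one_le_pow₀ ?_)
    norm_num

lemma norm_fourier_le_integral_norm (ψ : E → ℂ) (ξ : E) : ‖𝓕 ψ ξ‖ ≤ ∫ x, ‖ψ x‖ :=
  VectorFourier.norm_fourierIntegral_le_integral_norm _ _ _ _ _

lemma eventually_norm_fourier_le_of_fwdDiff (hψ : Integrable ψ) {a : E} {r ε D : ℝ} {m n : ℕ}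
    (hε : 0 < ε) (hsupp : ∀ x, r ≤ dist x a → ψ x = 0)
    (hD : ∀ᶠ h in 𝓝[>] (0 : ℝ), ∀ x ∈ ball a (r + ε), ∀ τ : E, ‖τ‖ = h →
      ‖(Δ_[τ])^[n] ψ x‖ ≤ D * h ^ m) :
    ∃ B, ∀ᶠ X in atTop, ∀ ξ : E, ‖ξ‖ = X → X ^ m * ‖𝓕 ψ ξ‖ ≤ B := by
  set V := (volume : Measure E).real (ball a (r + ε))
  refine ⟨|D| * V, ?_⟩
  have hlim : Tendsto (fun X : ℝ ↦ (2 * X)⁻¹) atTop (𝓝[>] 0) :=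
    tendsto_inv_atTop_nhdsGT_zero.comp (tendsto_id.const_mul_atTop two_pos)
  filter_upwards [hlim.eventually hD, eventually_ge_atTop (n / (2 * ε)), eventually_gt_atTop 0]
    with X hD hXε hX ξ hξ
  obtain ⟨τ, hτ, hle⟩ := exists_norm_fourier_le_norm_fwdDiff_iter hψ (ξ := ξ)
    (by rw [← norm_pos_iff, hξ]; exact hX) n
  rw [hξ] at hτ
  have hnτ : n * ‖τ‖ ≤ ε := by
    rw [hτ, ← div_eq_mul_inv, div_le_iff₀ (by positivity)]
    rw [div_le_iff₀ (by positivity)] at hXε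
    linarith
  have hfourier : ‖𝓕 ((Δ_[τ])^[n] ψ) ξ‖ ≤ |D| * (2 * X)⁻¹ ^ m * V := by
    refine (norm_fourier_le_integral_norm _ ξ).trans ?_
    rw [← setIntegral_eq_integral_of_forall_compl_eq_zero (s := ball a (r + ε)) fun x hx ↦ by
      rw [fwdDiff_iter_eq_zero_of_le_norm hsupp (not_lt.1 hx) hnτ, norm_zero]]
    refine (Real.le_norm_self _).trans (norm_setIntegral_le_of_norm_le_const measure_ball_lt_top
      fun x hx ↦ ?_)
    rw [norm_norm]
    refine (hD x hx τ hτ).trans ?_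
    gcongr
    exact le_abs_self D
  calc X ^ m * ‖𝓕 ψ ξ‖ ≤ X ^ m * (|D| * (2 * X)⁻¹ ^ m * V) := by
        gcongr
        exact hle.trans hfourier
    _ = |D| * V * (X * (2 * X)⁻¹) ^ m := by rw [mul_pow]; ring
    _ ≤ |D| * V * 1 := by
        have : X * (2 * X)⁻¹ = 1 / 2 := by field_simp
        rw [this]
        gcongr
        exact pow_le_one₀ (by norm_num) (by norm_num)
    _ = _ := mul_one _

lemma contDiff_of_norm_pow_mul_fourier_le (hψ : Integrable ψ) (hcont : Continuous ψ)
    (h : ∀ m : ℕ, ∃ B, ∀ᶠ X in atTop, ∀ ξ : E, ‖ξ‖ = X → X ^ m * ‖𝓕 ψ ξ‖ ≤ B) :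
    ContDiff ℝ (⊤ : ℕ∞) ψ := by
  have hbound : ∀ m : ℕ, ∃ B, ∀ ξ : E, ‖ξ‖ ^ m * ‖𝓕 ψ ξ‖ ≤ B := fun m ↦ by
    obtain ⟨B, hB⟩ := h m
    obtain ⟨X, hX⟩ := eventually_atTop.1 (hB.and (eventually_ge_atTop 0))
    refine ⟨max B (X ^ m * ∫ x, ‖ψ x‖), fun ξ ↦ ?_⟩
    rcases le_total X ‖ξ‖ with hξ | hξ
    · exact le_max_of_le_left ((hX _ hξ).1 ξ rfl)
    · refine le_max_of_le_right ?_
      have := (hX X le_rfl).2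
      gcongr
      exact norm_fourier_le_integral_norm ψ ξ
  have hFcont : Continuous (𝓕 ψ) :=
    VectorFourier.fourierIntegral_continuous Real.continuous_fourierChar continuous_inner hψ
  have hFint : ∀ n : ℕ, Integrable fun ξ : E ↦ ‖ξ‖ ^ n * ‖𝓕 ψ ξ‖ := fun n ↦ by
    obtain ⟨B, hB⟩ := hbound (n + (volume : Measure E).integrablePower)
    exact integrable_of_le_of_pow_mul_le (norm_fourier_le_integral_norm ψ) hB
      hFcont.aestronglyMeasurable
  have hinv := hcont.fourierInv_fourier_eq hψ <| by
    simpa [integrable_norm_iff hFcont.aestronglyMeasurable] using hFint 0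
  have hψ_eq : ψ = fun x ↦ 𝓕 (𝓕 ψ) (-x) := by
    funext x
    rw [← Real.fourierInv_eq_fourier_neg, hinv]
  have hF : ContDiff ℝ ((⊤ : ℕ∞) : WithTop ℕ∞) (𝓕 (𝓕 ψ)) := Real.contDiff_fourier fun n _ ↦ hFint n
  rw [hψ_eq]
  exact hF.comp contDiff_neg

end FourierDecay

section SmoothnessFromPolynomialApproximation

open Metric

variable {E : Type*} [NormedAddCommGroup E] [InnerProductSpace ℝ E] [FiniteDimensional ℝ E]

/- After multiplication by a cutoff function, high order finite differences of `f` at scale `h` are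
`O(h ^ m)` for every `m`, so that the Fourier transform decays rapidly. -/
theorem contDiffOn_of_hasPolynomialApprox {f : E → ℂ} {a : E} {r : ℝ} (hr : 0 < r)
    (hcont : ContinuousOn f (ball a r))
    (hf : ∀ m, ∃ n, ∀ L, HasPolynomialApprox f (ball a r) m n L) :
    ContDiffOn ℝ (⊤ : ℕ∞) f (ball a (r / 2)) := by
  borelize E
  let χ : ContDiffBump a := ⟨r / 2, 3 * r / 4, by positivity, by linarith⟩
  set ψ : E → ℂ := (fun x ↦ (χ x : ℂ)) * f with hψ
  have hχ : ContDiff ℝ (⊤ : ℕ∞) fun x ↦ (χ x : ℂ) := Complex.ofRealCLM.contDiff.comp χ.contDiff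
  have hχc : HasCompactSupport fun x ↦ (χ x : ℂ) :=
    χ.hasCompactSupport.comp_left Complex.ofReal_zero
  have hsupp : ∀ x, 3 * r / 4 ≤ dist x a → ψ x = 0 := fun x hx ↦ by
    simp [hψ, χ.zero_of_le_dist hx]
  have hψcont : Continuous ψ := by
    refine continuous_of_tsupport fun x hx ↦ ?_
    have hx' : x ∈ closedBall a (3 * r / 4) := closure_minimal (fun y hy ↦ by
      by_contra hya
      exact hy (hsupp y (not_le.1 hya).le)) isClosed_closedBall hx
    exact hχ.continuous.continuousAt.mul (hcont.continuousAt
      (isOpen_ball.mem_nhds (closedBall_subset_ball (by linarith) hx')))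
  have hψint : Integrable ψ := hψcont.integrable_of_hasCompactSupport hχc.mul_right
  have hψsmooth : ContDiff ℝ (⊤ : ℕ∞) ψ := by
    refine contDiff_of_norm_pow_mul_fourier_le hψint hψcont fun m ↦ ?_
    obtain ⟨n, hn⟩ := hf m
    have hL : (0 : ℝ) ≤ (m + n + 1 : ℕ) := by positivity
    have hχapprox := hasPolynomialApprox_of_hasCompactSupport (m := m) (hχ.of_le (by
      exact_mod_cast le_top)) hχc hL
    obtain ⟨D, hD⟩ := ((hχapprox.mono (subset_univ _)).mul (hn _)).exists_norm_fwdDiff_iter_le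
      (Nat.lt_succ_self (m + n))
    refine eventually_norm_fourier_le_of_fwdDiff hψint (n := m + n + 1) (D := D)
      (ε := r / 4) (by positivity) hsupp ?_
    rwa [show 3 * r / 4 + r / 4 = r by ring]
  refine hψsmooth.contDiffOn.congr fun x hx ↦ ?_
  simp [hψ, χ.one_of_mem_closedBall (ball_subset_closedBall hx)]

end SmoothnessFromPolynomialApproximation

section DerivativesAlongLines

open Metric Topology

variable {E : Type*} [NormedAddCommGroup E] [NormedSpace ℝ E] {f : E → ℂ} {x v : E}

lemma contDiffAt_zero_of_differentiableOn_ball {F : ℂ → ℂ} {r : ℝ} (hr : 0 < r)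
    (hF : DifferentiableOn ℂ F (ball 0 r)) (n : WithTop ℕ∞) : ContDiffAt ℂ n F 0 :=
  (hF.contDiffOn isOpen_ball).contDiffAt (ball_mem_nhds 0 hr)

lemma norm_iteratedDeriv_sub_le_of_norm_sub_le_on_reals {F G : ℂ → ℂ} {r C C' δ : ℝ} (hr : 0 < r)
    (hδ : 0 < δ) (hδC : δ ≤ C + C') (hF : DifferentiableOn ℂ F (ball 0 r))
    (hG : DifferentiableOn ℂ G (ball 0 r)) (hFC : ∀ z ∈ ball (0 : ℂ) r, ‖F z‖ ≤ C)
    (hGC : ∀ z ∈ ball (0 : ℂ) r, ‖G z‖ ≤ C') (hFG : ∀ t : ℝ, |t| < r → ‖F t - G t‖ ≤ δ) (k : ℕ) :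
    ‖iteratedDeriv k F 0 - iteratedDeriv k G 0‖ ≤
      k.factorial * √((C + C') * δ) / (r / 16) ^ k := by
  rw [← iteratedDeriv_sub (contDiffAt_zero_of_differentiableOn_ball hr hF _)
    (contDiffAt_zero_of_differentiableOn_ball hr hG _)]
  exact norm_iteratedDeriv_le_of_norm_le_on_reals hr hδ hδC (hF.sub hG)
    (fun z hz ↦ norm_sub_le_of_le (hFC z hz) (hGC z hz)) hFG k

lemma norm_iteratedDeriv_sub_le_mul_sqrt {F G : ℂ → ℂ} {r C C' D : ℝ} {k : ℕ} (hr : 0 < r)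
    (hr1 : r ≤ 1) (hD : 0 < D) (hDC : D ≤ C + C') (hF : DifferentiableOn ℂ F (ball 0 r))
    (hG : DifferentiableOn ℂ G (ball 0 r)) (hFC : ∀ z ∈ ball (0 : ℂ) r, ‖F z‖ ≤ C)
    (hGC : ∀ z ∈ ball (0 : ℂ) r, ‖G z‖ ≤ C')
    (hFG : ∀ t : ℝ, |t| < r → ‖F t - G t‖ ≤ D * r ^ (2 * k + 1)) :
    ‖iteratedDeriv k F 0 - iteratedDeriv k G 0‖ ≤
      k.factorial * √((C + C') * D) * 16 ^ k * √r := by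
  have hδ : D * r ^ (2 * k + 1) ≤ C + C' :=
    (mul_le_of_le_one_right hD.le (pow_le_one₀ hr.le hr1)).trans hDC
  have hsqrt : √(r ^ (2 * k + 1)) = r ^ k * √r := by
    rw [pow_succ, pow_mul', Real.sqrt_mul (sq_nonneg _), Real.sqrt_sq (by positivity)]
  refine (norm_iteratedDeriv_sub_le_of_norm_sub_le_on_reals hr (by positivity) hδ hF hG hFC hGC
    hFG k).trans_eq ?_
  rw [← mul_assoc, Real.sqrt_mul (mul_nonneg (hD.le.trans hDC) hD.le), hsqrt, div_pow]
  field_simp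

lemma iteratedDeriv_sum_pow_div_factorial_mul {k n : ℕ} (hk : k < n) (c : ℕ → ℂ) :
    iteratedDeriv k (fun z : ℂ ↦ ∑ i ∈ Finset.range n, z ^ i / i.factorial * c i) 0 = c k := by
  simp only [div_eq_mul_inv, mul_assoc]
  rw [iteratedDeriv_fun_sum fun i _ ↦ by fun_prop]
  simp only [iteratedDeriv_mul_const_field, iteratedDeriv_fun_pow_zero]
  rw [Finset.sum_eq_single_of_mem k (Finset.mem_range.2 hk) fun i _ hi ↦ by simp [hi.symm],
    if_pos rfl]
  exact mul_inv_cancel_left₀ (Nat.cast_ne_zero.2 k.factorial_ne_zero) _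

lemma exists_eventually_norm_sub_sum_line_iteratedFDeriv_le {n : ℕ} (hf : ContDiffAt ℝ n f x)
    (hv : ‖v‖ ≤ 1) : ∃ B, ∀ᶠ ε in 𝓝[>] (0 : ℝ), ∀ t : ℝ, |t| < ε → ‖f (x + t • v) -
      ∑ k ∈ Finset.range n, (t : ℂ) ^ k / k.factorial * iteratedFDeriv ℝ k f x fun _ ↦ v‖ ≤
        B * ε ^ n := by
  obtain ⟨ε₀, hε₀, hball⟩ := eventually_nhds_iff_ball.1 ((hf.eventually (by simp)).and
    ((hf.continuousAt_iteratedFDeriv le_rfl).norm.eventually_le_const (lt_add_one _)))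
  refine ⟨(‖iteratedFDeriv ℝ n f x‖ + 1) / n.factorial, ?_⟩
  filter_upwards [Ioo_mem_nhdsGT hε₀] with ε hε t ht
  have hsub := ball_subset_ball (x := x) hε.2.le
  rw [div_mul_eq_mul_div]
  exact norm_sub_sum_line_iteratedFDeriv_le hv ht (fun y hy ↦ (hball y (hsub hy)).1)
    fun y hy ↦ (hball y (hsub hy)).2

theorem tendsto_iteratedDeriv_of_approx_line {ι : Type*} {l : Filter ι} {d : ι → ℝ}
    {F : ι → ℂ → ℂ} {A C : ℝ} {k : ℕ} (hf : ContDiffAt ℝ (2 * k + 1 : ℕ) f x) (hv : ‖v‖ ≤ 1)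
    (hd : Tendsto d l (𝓝[>] 0)) (hF : ∀ i, DifferentiableOn ℂ (F i) (ball 0 (d i)))
    (hFC : ∀ i, ∀ z ∈ ball (0 : ℂ) (d i), ‖F i z‖ ≤ C)
    (hFf : ∀ᶠ i in l, ∀ t : ℝ, |t| < d i → ‖F i t - f (x + t • v)‖ ≤ A * d i ^ (2 * k + 1)) :
    Tendsto (fun i ↦ iteratedDeriv k (F i) 0) l (𝓝 (iteratedFDeriv ℝ k f x fun _ ↦ v)) := by
  set T : ℂ → ℂ := fun z ↦ ∑ i ∈ Finset.range (2 * k + 1),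
    z ^ i / i.factorial * iteratedFDeriv ℝ i f x fun _ ↦ v
  have hTdiff : Differentiable ℂ T := by fun_prop
  obtain ⟨C', hC'⟩ := (isCompact_closedBall (0 : ℂ) 1).exists_bound_of_continuousOn
    hTdiff.continuous.continuousOn
  obtain ⟨B, hB⟩ := exists_eventually_norm_sub_sum_line_iteratedFDeriv_le hf hv
  set D := max (A + B) 1
  have hD0 : 0 < D := lt_max_of_lt_right one_pos
  have hbound : ∀ᶠ i in l, ‖iteratedDeriv k (F i) 0 - iteratedDeriv k T 0‖ ≤
      k.factorial * √((C + D + C') * D) * 16 ^ k * √(d i) := by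
    filter_upwards [hFf, hd.eventually hB, hd.eventually (Ioo_mem_nhdsGT one_pos)]
      with i hFfi hTf hi
    have hC : 0 ≤ C := (norm_nonneg _).trans (hFC i 0 (mem_ball_self hi.1))
    have : 0 ≤ C' := (norm_nonneg _).trans (hC' 0 (by simp))
    refine norm_iteratedDeriv_sub_le_mul_sqrt hi.1 hi.2.le hD0 (by linarith) (hF i)
      hTdiff.differentiableOn (fun z hz ↦ (hFC i z hz).trans (by linarith))
      (fun z hz ↦ hC' z (ball_subset_closedBall (ball_subset_ball hi.2.le hz))) fun t ht ↦ ?_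
    calc ‖F i t - T t‖ ≤ ‖F i t - f (x + t • v)‖ + ‖f (x + t • v) - T t‖ :=
          norm_sub_le_norm_sub_add_norm_sub _ _ _
      _ ≤ (A + B) * d i ^ (2 * k + 1) := by
          rw [add_mul]
          exact add_le_add (hFfi t ht) (hTf t ht)
      _ ≤ _ := by
          have := hi.1
          gcongr
          exact le_max_left _ _
  have hlim : Tendsto (fun i ↦ k.factorial * √((C + D + C') * D) * 16 ^ k * √(d i)) l (𝓝 0) := by
    have := (Real.continuous_sqrt.tendsto' 0 0 Real.sqrt_zero).comp (hd.mono_right inf_le_left)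
    simpa using this.const_mul (k.factorial * √((C + D + C') * D) * 16 ^ k)
  rw [← iteratedDeriv_sum_pow_div_factorial_mul (show k < 2 * k + 1 by lia)
    fun i ↦ iteratedFDeriv ℝ i f x fun _ ↦ v]
  exact tendsto_iff_norm_sub_tendsto_zero.2
    (squeeze_zero' (Eventually.of_forall fun i ↦ norm_nonneg _) hbound hlim)

section Telescoping

variable {ω : ℝ → ℝ} {u : ℝ → ℂ} {κ ρ b C R : ℝ} {F G : ℂ → ℂ}

lemma IsHolomorphicApprox.mono {C' : ℝ} (hF : IsHolomorphicApprox ω u κ b C R F) (hC : C ≤ C') :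
    IsHolomorphicApprox ω u κ b C' R F :=
  ⟨hF.differentiableOn, fun z hz ↦ (hF.norm_le z hz).trans hC,
    fun t ht ↦ (hF.norm_sub_le t ht).trans (by gcongr)⟩

lemma HasHolomorphicApprox.mono {s : Set E} {C' : ℝ} (hf : HasHolomorphicApprox ω f s κ b C)
    (hC : C ≤ C') : HasHolomorphicApprox ω f s κ b C' :=
  Eventually.mono hf fun _ h x hx v hv ↦ (h x hx v hv).imp fun _ hF ↦ hF.mono hC

lemma IsWeightFunction.factorial_div_pow_le (hω : IsWeightFunction ω)
    (hconc : ConcaveOn ℝ (Ici 0) ω) (hρ : 0 < ρ) (hκ : 0 < κ) (hR : 1 ≤ R) (hωR : 0 < ω R)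
    (k : ℕ) : k.factorial / (κ * ω R / R / 32) ^ k ≤
      (32 * Real.exp 1 / (κ * ρ)) ^ k * weightSeq ω ρ k * Real.exp (ω R / ρ) := by
  have : 0 < R := by linarith
  calc k.factorial / (κ * ω R / R / 32) ^ k
      = (32 / κ) ^ k * (k.factorial * (R / ω R) ^ k * Real.exp (-(ω R / ρ))) *
          Real.exp (ω R / ρ) := by
        rw [Real.exp_neg]
        simp only [div_pow, mul_pow]
        field_simp
    _ ≤ (32 / κ) ^ k * ((Real.exp 1 / ρ) ^ k * weightSeq ω ρ k) * Real.exp (ω R / ρ) := by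
        gcongr _ * ?_ * _
        exact hω.factorial_mul_pow_mul_exp_neg_le hconc hρ hR hωR k
    _ = _ := by
        rw [← mul_assoc, ← mul_pow]
        congr 3
        field_simp

lemma IsHolomorphicApprox.norm_iteratedDeriv_le (hF : IsHolomorphicApprox ω u κ b C R F)
    (hω : IsWeightFunction ω) (hconc : ConcaveOn ℝ (Ici 0) ω) (hρ : 0 < ρ) (hκ : 0 < κ)
    (hR : 1 ≤ R) (hωR : 0 < ω R) (k : ℕ) : ‖iteratedDeriv k F 0‖ ≤
      C * Real.exp (ω R / ρ) * ((32 * Real.exp 1 / (κ * ρ)) ^ k * weightSeq ω ρ k) := by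
  set d := κ * ω R / R
  have hd0 : 0 < d := by positivity
  have hsub : closedBall (0 : ℂ) (d / 32) ⊆ ball 0 d := closedBall_subset_ball (by linarith)
  have hC : 0 ≤ C := (norm_nonneg _).trans (hF.norm_le 0 (mem_ball_self hd0))
  calc ‖iteratedDeriv k F 0‖ ≤ k.factorial * C / (d / 32) ^ k :=
        Complex.norm_iteratedDeriv_le_of_forall_mem_sphere_norm_le k (by positivity)
          (hF.differentiableOn.diffContOnCl_ball hsub)
          fun z hz ↦ hF.norm_le z (hsub (sphere_subset_closedBall hz))
    _ = C * (k.factorial / (d / 32) ^ k) := by ring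
    _ ≤ C * ((32 * Real.exp 1 / (κ * ρ)) ^ k * weightSeq ω ρ k * Real.exp (ω R / ρ)) := by
        gcongr
        exact hω.factorial_div_pow_le hconc hρ hκ hR hωR k
    _ = _ := by ring

lemma IsWeightFunction.mul_div_anti (hω : IsWeightFunction ω) (hconc : ConcaveOn ℝ (Ici 0) ω)
    (hκ : 0 < κ) {R' : ℝ} (hR : 0 < R) (hRR' : R ≤ R') (hωR : 0 < ω R) :
    κ * ω R' / R' ≤ κ * ω R / R := by
  rw [← div_div_eq_mul_div, ← div_div_eq_mul_div]
  have := hω.div_le_div hconc hR hRR' hωR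
  gcongr

lemma IsHolomorphicApprox.norm_sub_le_of_weight_le {R' : ℝ} (hF : IsHolomorphicApprox ω u κ b C R F)
    (hG : IsHolomorphicApprox ω u κ b C R' G) (hb : 0 ≤ b) (hC : 0 ≤ C) (hωR : ω R ≤ ω R') {t : ℝ}
    (ht : |t| < κ * ω R / R) (ht' : |t| < κ * ω R' / R') :
    ‖G t - F t‖ ≤ 2 * C * Real.exp (-(b * ω R)) := by
  have hGt : ‖G t - u t‖ ≤ C * Real.exp (-(b * ω R)) := (hG.norm_sub_le t ht').trans (by gcongr)
  have := norm_sub_le_of_le hGt (hF.norm_sub_le t ht)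
  rw [sub_sub_sub_cancel_right] at this
  linarith

lemma IsHolomorphicApprox.norm_iteratedDeriv_sub_le_mul_exp_div
    (hF : IsHolomorphicApprox ω u κ (2 * b) C R F) {R' : ℝ}
    (hG : IsHolomorphicApprox ω u κ (2 * b) C R' G) (hω : IsWeightFunction ω)
    (hconc : ConcaveOn ℝ (Ici 0) ω) (hb : 0 ≤ b) (hκ : 0 < κ) (hC : 0 < C) (hR : 0 < R)
    (hRR' : R ≤ R') (hωR : 0 < ω R) (k : ℕ) : ‖iteratedDeriv k G 0 - iteratedDeriv k F 0‖ ≤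
      2 * C * Real.exp (-(b * ω R)) * (k.factorial / (κ * ω R' / R' / 16) ^ k) := by
  have hωR' : ω R ≤ ω R' := hω.mono hR.le hRR'
  have hle := hω.mul_div_anti hconc hκ hR hRR' hωR
  have hd : 0 < κ * ω R' / R' := by
    have := hωR.trans_le hωR'
    have := hR.trans_le hRR'
    positivity
  have hδC : 2 * C * Real.exp (-(2 * b * ω R)) ≤ C + C := by
    rw [two_mul]
    exact mul_le_of_le_one_right (by positivity)
      (Real.exp_le_one_iff.2 (neg_nonpos.2 (by positivity)))
  have hexp : Real.exp (-(2 * b * ω R)) = Real.exp (-(b * ω R)) ^ 2 := by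
    rw [← Real.exp_nat_mul]
    congr 1
    push_cast
    ring
  have hsub := ball_subset_ball (x := (0 : ℂ)) hle
  refine (norm_iteratedDeriv_sub_le_of_norm_sub_le_on_reals hd (by positivity) hδC
    hG.differentiableOn (hF.differentiableOn.mono hsub) hG.norm_le
    (fun z hz ↦ hF.norm_le z (hsub hz)) (fun t ht ↦ hF.norm_sub_le_of_weight_le hG
      (by positivity) hC.le hωR' (ht.trans_le hle) ht) k).trans_eq ?_
  rw [hexp, ← two_mul, ← mul_assoc, ← sq, ← mul_pow, Real.sqrt_sq (by positivity)]
  ring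

lemma IsHolomorphicApprox.norm_iteratedDeriv_sub_le (hF : IsHolomorphicApprox ω u κ (4 / ρ) C R F)
    (hG : IsHolomorphicApprox ω u κ (4 / ρ) C (2 * R) G) (hω : IsWeightFunction ω)
    (hconc : ConcaveOn ℝ (Ici 0) ω) (hρ : 0 < ρ) (hκ : 0 < κ) (hC : 0 < C) (hR : 1 ≤ R)
    (hωR : 0 < ω R) (k : ℕ) : ‖iteratedDeriv k G 0 - iteratedDeriv k F 0‖ ≤
      2 * C * Real.exp (-(ω R / ρ)) * ((32 * Real.exp 1 / (κ * ρ)) ^ k * weightSeq ω ρ k) := by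
  have hge : κ * ω R / R / 32 ≤ κ * ω (2 * R) / (2 * R) / 16 := by
    have := hω.mono (show 0 ≤ R by linarith) (show R ≤ 2 * R by linarith)
    calc κ * ω R / R / 32 = κ * ω R / (2 * R) / 16 := by field_simp; norm_num
      _ ≤ _ := by gcongr
  rw [show 4 / ρ = 2 * (2 / ρ) by ring] at hF hG
  calc _ ≤ 2 * C * Real.exp (-(2 / ρ * ω R)) *
          (k.factorial / (κ * ω (2 * R) / (2 * R) / 16) ^ k) :=
        hF.norm_iteratedDeriv_sub_le_mul_exp_div hG hω hconc (by positivity) hκ hC (by linarith)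
          (by linarith) hωR k
    _ ≤ 2 * C * Real.exp (-(2 / ρ * ω R)) * (k.factorial / (κ * ω R / R / 32) ^ k) := by gcongr
    _ ≤ 2 * C * Real.exp (-(2 / ρ * ω R)) *
          ((32 * Real.exp 1 / (κ * ρ)) ^ k * weightSeq ω ρ k * Real.exp (ω R / ρ)) := by
        gcongr
        exact hω.factorial_div_pow_le hconc hρ hκ hR hωR k
    _ = 2 * C * (Real.exp (-(2 / ρ * ω R)) * Real.exp (ω R / ρ)) *
          ((32 * Real.exp 1 / (κ * ρ)) ^ k * weightSeq ω ρ k) := by ring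
    _ = _ := by
        rw [← Real.exp_add]
        congr 4
        ring

lemma IsWeightFunction.tendsto_mul_div (hω : IsWeightFunction ω) (hκ : 0 < κ) :
    Tendsto (fun R ↦ κ * ω R / R) atTop (𝓝[>] 0) := by
  refine tendsto_nhdsWithin_iff.2 ⟨?_, ?_⟩
  · simpa [mul_div_assoc] using hω.isLittleO_id.tendsto_div_nhds_zero.const_mul κ
  · filter_upwards [hω.tendsto_atTop.eventually_gt_atTop 0, eventually_gt_atTop 0] with R hωR hR
    exact mem_Ioi.2 (by positivity)

lemma IsWeightFunction.eventually_exp_neg_le_mul_pow (hω : IsWeightFunction ω) (hκ : 0 < κ)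
    (hb : 0 < b) (n : ℕ) :
    ∀ᶠ R in atTop, Real.exp (-(b * ω R)) ≤ (κ ^ n)⁻¹ * (κ * ω R / R) ^ n := by
  filter_upwards [hω.eventually_exp_neg_le hb n, hω.tendsto_atTop.eventually_ge_atTop 1,
    eventually_gt_atTop 0] with R hexp hωR hR
  calc Real.exp (-(b * ω R)) ≤ (R ^ n)⁻¹ := hexp
    _ ≤ ω R ^ n * (R ^ n)⁻¹ := le_mul_of_one_le_left (by positivity) (one_le_pow₀ hωR)
    _ = _ := by
        rw [div_pow, mul_pow]
        field_simp

lemma tendsto_iteratedDeriv_of_isHolomorphicApprox {ι : Type*} {l : Filter ι} {R : ι → ℝ}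
    {F : ι → ℂ → ℂ} {k : ℕ} (hf : ContDiffAt ℝ (2 * k + 1 : ℕ) f x) (hv : ‖v‖ ≤ 1)
    (hω : IsWeightFunction ω) (hκ : 0 < κ) (hb : 0 < b) (hC : 0 ≤ C) (hR : Tendsto R l atTop)
    (hF : ∀ i, IsHolomorphicApprox ω (fun t ↦ f (x + t • v)) κ b C (R i) (F i)) :
    Tendsto (fun i ↦ iteratedDeriv k (F i) 0) l (𝓝 (iteratedFDeriv ℝ k f x fun _ ↦ v)) := by
  refine tendsto_iteratedDeriv_of_approx_line (A := C * (κ ^ (2 * k + 1))⁻¹) hf hv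
    ((hω.tendsto_mul_div hκ).comp hR) (fun i ↦ (hF i).differentiableOn)
    (fun i ↦ (hF i).norm_le) ?_
  filter_upwards [hR.eventually (hω.eventually_exp_neg_le_mul_pow hκ hb (2 * k + 1))]
    with i hi t ht
  rw [mul_assoc]
  exact ((hF i).norm_sub_le t ht).trans (mul_le_mul_of_nonneg_left hi hC)

theorem norm_iteratedFDeriv_apply_le_of_isHolomorphicApprox {S : ℝ} {k : ℕ}
    (hf : ContDiffAt ℝ (2 * k + 1 : ℕ) f x) (hv : ‖v‖ ≤ 1) (hω : IsWeightFunction ω)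
    (hconc : ConcaveOn ℝ (Ici 0) ω) (hκ : 0 < κ) (hρ : 0 < ρ) (hC : 0 < C) (hS : 1 ≤ S)
    (hωS : 0 < ω S) (hexp : ∀ R, S ≤ R → Real.exp (-(ω R / ρ)) ≤ R⁻¹)
    (hF : ∀ R, S ≤ R → ∃ F, IsHolomorphicApprox ω (fun t ↦ f (x + t • v)) κ (4 / ρ) C R F) :
    ‖iteratedFDeriv ℝ k f x fun _ ↦ v‖ ≤
      C * (Real.exp (ω S / ρ) + 4) * ((32 * Real.exp 1 / (κ * ρ)) ^ k * weightSeq ω ρ k) := by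
  set M := (32 * Real.exp 1 / (κ * ρ)) ^ k * weightSeq ω ρ k
  have hM0 : 0 < M := mul_pos (by positivity) (weightSeq_pos _ _ _)
  have hSn : ∀ n : ℕ, S ≤ 2 ^ n * S := fun n ↦
    le_mul_of_one_le_left (by linarith) (one_le_pow₀ one_le_two)
  choose F hF using fun n ↦ hF _ (hSn n)
  have hlim := tendsto_iteratedDeriv_of_isHolomorphicApprox hf hv hω hκ (by positivity) hC.le
    ((tendsto_pow_atTop_atTop_of_one_lt one_lt_two).atTop_mul_const (by linarith)) hF
  have hdist : ∀ n, dist (iteratedDeriv k (F n) 0) (iteratedDeriv k (F (n + 1)) 0) ≤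
      4 * C * M / 2 / 2 ^ n := fun n ↦ by
    have hSn1 : 1 ≤ 2 ^ n * S := hS.trans (hSn n)
    rw [dist_comm, dist_eq_norm]
    calc _ ≤ 2 * C * Real.exp (-(ω (2 ^ n * S) / ρ)) * M :=
          (hF n).norm_iteratedDeriv_sub_le (by simpa only [pow_succ', mul_assoc] using hF (n + 1))
            hω hconc hρ hκ hC hSn1 (hωS.trans_le (hω.mono (by linarith) (hSn n))) k
      _ ≤ 2 * C * (2 ^ n)⁻¹ * M := by
          gcongr
          exact (hexp _ (hSn n)).trans
            (inv_anti₀ (by positivity) (le_mul_of_one_le_right (by positivity) hS))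
      _ = _ := by ring
  have h0 := (hF 0).norm_iteratedDeriv_le hω hconc hρ hκ (by simpa) (by simpa) k
  have := norm_le_norm_add_norm_sub' (iteratedFDeriv ℝ k f x fun _ ↦ v) (iteratedDeriv k (F 0) 0)
  have htel := dist_le_of_le_geometric_two_of_tendsto₀ hdist hlim
  rw [dist_comm, dist_eq_norm] at htel
  rw [pow_zero, one_mul] at h0
  linarith

theorem HasHolomorphicApprox.exists_norm_iteratedFDeriv_apply_le {s : Set E}
    (hf : HasHolomorphicApprox ω f s κ (4 / ρ) C) (hω : IsWeightFunction ω)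
    (hconc : ConcaveOn ℝ (Ici 0) ω) (hκ : 0 < κ) (hρ : 0 < ρ)
    (hs : ∀ x ∈ s, ContDiffAt ℝ (⊤ : ℕ∞) f x) :
    ∃ C', ∀ x ∈ s, ∀ v, ‖v‖ ≤ 1 → ∀ k, ‖iteratedFDeriv ℝ k f x fun _ ↦ v‖ ≤
      C' * ((32 * Real.exp 1 / (κ * ρ)) ^ k * weightSeq ω ρ k) := by
  have hev := Eventually.and (hf.mono (le_max_left C 1)) (hω.eventually_exp_neg_le (inv_pos.2 hρ) 1)
  obtain ⟨S, ⟨hS, hωS⟩, hS1⟩ := ((eventually_forall_ge_atTop.2 hev).and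
    (hω.tendsto_atTop.eventually_gt_atTop 0)).and (eventually_ge_atTop 1) |>.exists
  refine ⟨max C 1 * (Real.exp (ω S / ρ) + 4), fun x hx v hv k ↦ ?_⟩
  exact norm_iteratedFDeriv_apply_le_of_isHolomorphicApprox
    (contDiffAt_infty.1 (hs x hx) _) hv hω hconc hκ hρ (lt_max_of_lt_right one_pos) hS1
    hωS (fun R hR ↦ by simpa [div_eq_inv_mul] using (hS R hR).2)
    fun R hR ↦ (hS R hR).1 x hx v hv

end Telescoping

end DerivativesAlongLines

section SymmetricMultilinear

lemma factorial_smul_eq_sum_neg_one_pow_smul {R ι M N : Type*} [Semiring R] [Fintype ι]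
    [DecidableEq ι] [AddCommMonoid M] [Module R M] [AddCommGroup N] [Module R N]
    (m : MultilinearMap R (fun _ : ι ↦ M) N)
    (hm : ∀ (σ : Equiv.Perm ι) (v : ι → M), m (v ∘ σ) = m v) (v : ι → M) :
    (Fintype.card ι).factorial • m v =
      ∑ t : Finset ι, (-1 : ℤ) ^ t.card • m fun _ ↦ ∑ i ∈ tᶜ, v i := by
  have hperm : ∑ q : ι → ι with q.Surjective, m (v ∘ q) = ∑ σ : Equiv.Perm ι, m (v ∘ σ) :=
    .symm <| Finset.sum_nbij (fun σ ↦ σ) (fun σ _ ↦ by simpa using σ.surjective)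
      DFunLike.coe_injective.injOn
      (fun q hq ↦ ⟨.ofBijective q (Finite.surjective_iff_bijective.1 (by simpa using hq)), by simp⟩)
      fun _ _ ↦ rfl
  have hsum : ∀ t : Finset ι,
      (m fun _ ↦ ∑ i ∈ tᶜ, v i) = ∑ q : ι → ι with ∀ i, q i ∉ t, m (v ∘ q) := fun t ↦ by
    rw [m.map_sum_finset (fun _ ↦ v)]
    exact Finset.sum_congr (by ext; simp [Fintype.mem_piFinset]) fun _ _ ↦ rfl
  have hincl := Finset.inclusion_exclusion_sum_inf_compl Finset.univ
    (fun i ↦ ({q | i ∉ range q} : Finset (ι → ι))) fun q ↦ m (v ∘ q)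
  calc (Fintype.card ι).factorial • m v = ∑ σ : Equiv.Perm ι, m (v ∘ σ) := by
        simp [hm, Fintype.card_perm]
    _ = ∑ q : ι → ι with q.Surjective, m (v ∘ q) := hperm.symm
    _ = ∑ t : Finset ι, (-1 : ℤ) ^ t.card • ∑ q : ι → ι with ∀ i, q i ∉ t, m (v ∘ q) := by
        rw [Finset.powerset_univ] at hincl
        convert hincl using 2
        · ext q
          simp only [Finset.mem_filter, Finset.mem_univ, true_and, Finset.mem_inf,
            Finset.mem_compl, mem_range, not_not, forall_const]
          rfl
        · congr! 2
          ext q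
          simp only [Finset.mem_inf, Finset.mem_filter, Finset.mem_univ, true_and, mem_range]
          grind
    _ = _ := by simp only [hsum]

lemma max_one_pow_le_exp_mul_factorial (n : ℕ) :
    max 1 (n : ℝ) ^ n ≤ Real.exp 1 ^ n * n.factorial := by
  rcases n.eq_zero_or_pos with rfl | hn
  · simp
  · rw [max_eq_right (by exact_mod_cast hn), ← div_le_iff₀ (by positivity), ← Real.exp_nat_mul,
      mul_one]
    exact Real.pow_div_factorial_le_exp _ (by positivity) n

variable {ι E F : Type*} [Fintype ι] [NormedAddCommGroup E] [NormedSpace ℝ E]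
  [NormedAddCommGroup F] [NormedSpace ℝ F] {B : ℝ}

lemma norm_apply_const_le_of_norm_le_mul (m : ContinuousMultilinearMap ℝ (fun _ : ι ↦ E) F)
    (hB : ∀ w : E, ‖w‖ ≤ 1 → ‖m fun _ ↦ w‖ ≤ B) {w : E} {c : ℝ} (hc : 0 < c) (hw : ‖w‖ ≤ c) :
    ‖m fun _ ↦ w‖ ≤ c ^ Fintype.card ι * B := by
  have := hB (c⁻¹ • w) (by
    rwa [norm_smul, norm_inv, Real.norm_of_nonneg hc.le, inv_mul_le_one₀ hc])
  rw [m.map_smul_univ fun _ ↦ c⁻¹, Finset.prod_const, Finset.card_univ, norm_smul, norm_pow,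
    norm_inv, Real.norm_of_nonneg hc.le, inv_pow, inv_mul_le_iff₀ (by positivity)] at this
  exact this

lemma norm_le_of_norm_apply_le_of_norm_le_one {m : ContinuousMultilinearMap ℝ (fun _ : ι ↦ E) F}
    (hm : ∀ v : ι → E, (∀ i, ‖v i‖ ≤ 1) → ‖m v‖ ≤ B) : ‖m‖ ≤ B := by
  refine ContinuousMultilinearMap.opNorm_le_bound
    ((norm_nonneg _).trans (hm 0 fun _ ↦ by simp)) fun v ↦ ?_
  have hv : v = fun i ↦ ‖v i‖ • ‖v i‖⁻¹ • v i := funext fun i ↦ by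
    rcases eq_or_ne (v i) 0 with h | h
    · simp [h]
    · rw [smul_inv_smul₀ (norm_ne_zero_iff.2 h)]
  conv_lhs => rw [hv]
  rw [m.map_smul_univ, norm_smul, Real.norm_of_nonneg (by positivity), mul_comm]
  gcongr
  refine hm _ fun i ↦ ?_
  rw [norm_smul, norm_inv, norm_norm]
  exact inv_mul_le_one

theorem norm_le_of_norm_apply_const_le (m : ContinuousMultilinearMap ℝ (fun _ : ι ↦ E) F)
    (hm : ∀ (σ : Equiv.Perm ι) (v : ι → E), m (v ∘ σ) = m v)
    (hB : ∀ w : E, ‖w‖ ≤ 1 → ‖m fun _ ↦ w‖ ≤ B) :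
    ‖m‖ ≤ (2 * Real.exp 1) ^ Fintype.card ι * B := by
  classical
  refine norm_le_of_norm_apply_le_of_norm_le_one fun v hv ↦ ?_
  have hB0 : 0 ≤ B := (norm_nonneg _).trans (hB 0 (by simp))
  have hterm : ∀ t : Finset ι, ‖(-1 : ℤ) ^ t.card • m fun _ ↦ ∑ i ∈ tᶜ, v i‖ ≤
      max 1 (Fintype.card ι : ℝ) ^ Fintype.card ι * B := fun t ↦ by
    have hsum : ‖∑ i ∈ tᶜ, v i‖ ≤ Fintype.card ι :=
      (norm_sum_le_of_le _ fun i _ ↦ hv i).trans (by simpa using Finset.card_le_univ tᶜ)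
    rw [← Int.cast_smul_eq_zsmul ℝ, norm_smul, Int.cast_pow, norm_pow]
    simpa using norm_apply_const_le_of_norm_le_mul m hB (lt_max_of_lt_left one_pos)
      (hsum.trans (le_max_right 1 _))
  have hpol := congrArg norm (factorial_smul_eq_sum_neg_one_pow_smul m.toMultilinearMap hm v)
  rw [← Nat.cast_smul_eq_nsmul ℝ, norm_smul, Real.norm_natCast] at hpol
  refine le_of_mul_le_mul_left (hpol.trans_le ((norm_sum_le_of_le _ fun t _ ↦ hterm t).trans ?_))
    (show (0 : ℝ) < (Fintype.card ι).factorial by positivity)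
  rw [Finset.sum_const, Finset.card_univ, Fintype.card_finset, nsmul_eq_mul]
  push_cast
  calc 2 ^ Fintype.card ι * (max 1 (Fintype.card ι : ℝ) ^ Fintype.card ι * B)
      ≤ 2 ^ Fintype.card ι * (Real.exp 1 ^ Fintype.card ι * (Fintype.card ι).factorial * B) := by
        gcongr
        exact max_one_pow_le_exp_mul_factorial _
    _ = _ := by ring

end SymmetricMultilinear

section IteratedFDerivSymmetric

open Topology

variable {E F : Type*} [NormedAddCommGroup E] [NormedSpace ℝ E] [NormedAddCommGroup F]
  [NormedSpace ℝ F] {f : E → F} {x : E}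

lemma iteratedFDeriv_add_two_apply (k : ℕ) (v : Fin (k + 2) → E) :
    iteratedFDeriv ℝ (k + 2) f x v =
      fderiv ℝ (fderiv ℝ (iteratedFDeriv ℝ k f)) x (v 0) (v 1) (Fin.tail (Fin.tail v)) := by
  rw [iteratedFDeriv_succ_apply_left, iteratedFDeriv_succ_eq_comp_left]
  let curry : (E →L[ℝ] E [×k]→L[ℝ] F) ≃L[ℝ] E [×k + 1]→L[ℝ] F :=
    (continuousMultilinearCurryLeftEquiv ℝ (fun _ ↦ E) F).symm.toContinuousLinearEquiv
  exact congrArg (fun D : E →L[ℝ] E [×k + 1]→L[ℝ] F ↦ D (v 0) (Fin.tail v))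
    (curry.comp_fderiv (f := fderiv ℝ (iteratedFDeriv ℝ k f)) (x := x))

theorem iteratedFDeriv_comp_swap_castSucc_succ {k : ℕ} (hf : ContDiffAt ℝ (k + 1 : ℕ) f x)
    (i : Fin k) (v : Fin (k + 1) → E) :
    iteratedFDeriv ℝ (k + 1) f x (v ∘ Equiv.swap i.castSucc i.succ) =
      iteratedFDeriv ℝ (k + 1) f x v := by
  induction k generalizing x with
  | zero => exact i.elim0
  | succ k ih =>
    cases i using Fin.cases with
    | zero =>
      have hsymm : IsSymmSndFDerivAt ℝ (iteratedFDeriv ℝ k f) x :=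
        (hf.iteratedFDeriv_right (m := 2) (by norm_cast; lia)).isSymmSndFDerivAt (by simp)
      have htail : Fin.tail (Fin.tail (v ∘ Equiv.swap (Fin.castSucc 0) (Fin.succ 0))) =
          Fin.tail (Fin.tail v) := funext fun l ↦ congrArg v
        (Equiv.swap_apply_of_ne_of_ne (by simp [Fin.ext_iff]) (by simp [Fin.ext_iff]))
      rw [iteratedFDeriv_add_two_apply, iteratedFDeriv_add_two_apply, htail, hsymm.eq]
      simp
    | succ i =>
      have hdiff : DifferentiableAt ℝ (iteratedFDeriv ℝ (k + 1) f) x :=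
        hf.differentiableAt_iteratedFDeriv (by norm_cast; lia)
      have htail : Fin.tail (v ∘ Equiv.swap i.succ.castSucc i.succ.succ) =
          Fin.tail v ∘ Equiv.swap i.castSucc i.succ := by
        funext l
        simp only [Fin.tail, Function.comp, Equiv.swap_apply_def, ← Fin.succ_castSucc,
          Fin.succ_inj]
        split_ifs <;> rfl
      have hev : (fun y ↦ iteratedFDeriv ℝ (k + 1) f y (Fin.tail v ∘ Equiv.swap i.castSucc i.succ))
          =ᶠ[𝓝 x] fun y ↦ iteratedFDeriv ℝ (k + 1) f y (Fin.tail v) :=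
        ((hf.of_le (m := (k + 1 : ℕ)) (by norm_cast; lia)).eventually (by simp)).mono
          fun y hy ↦ ih hy i _
      rw [hdiff.iteratedFDeriv_succ_apply_left', hdiff.iteratedFDeriv_succ_apply_left', htail,
        hev.fderiv_eq]
      rfl

theorem iteratedFDeriv_comp_perm {k : ℕ} (hf : ContDiffAt ℝ k f x) (σ : Equiv.Perm (Fin k))
    (v : Fin k → E) : iteratedFDeriv ℝ k f x (v ∘ σ) = iteratedFDeriv ℝ k f x v := by
  cases k with
  | zero => exact congrArg _ (Subsingleton.elim _ _)
  | succ k =>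
    have hσ : σ ∈ Submonoid.closure (range fun i : Fin k ↦ Equiv.swap i.castSucc i.succ) := by
      rw [Equiv.Perm.mclosure_swap_castSucc_succ]
      exact Submonoid.mem_top σ
    induction hσ using Submonoid.closure_induction generalizing v with
    | mem _ hs =>
      obtain ⟨i, rfl⟩ := hs
      exact iteratedFDeriv_comp_swap_castSucc_succ hf i v
    | one => rfl
    | mul σ τ _ _ hσ hτ => exact (hτ (v ∘ σ)).trans (hσ v)

theorem norm_iteratedFDeriv_le_of_norm_apply_const_le {k : ℕ} {B : ℝ} (hf : ContDiffAt ℝ k f x)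
    (hB : ∀ v, ‖v‖ ≤ 1 → ‖iteratedFDeriv ℝ k f x fun _ ↦ v‖ ≤ B) :
    ‖iteratedFDeriv ℝ k f x‖ ≤ (2 * Real.exp 1) ^ k * B := by
  simpa using norm_le_of_norm_apply_const_le _ (iteratedFDeriv_comp_perm hf) hB

end IteratedFDerivSymmetric

section RootsOfGerms

open Metric

lemma continuousOn_of_pow {X K : Type*} [TopologicalSpace X] [NormedField K] {f : X → K} {j : ℕ}
    (hj : j ≠ 0) {s : Set X} (hf : ContinuousOn (f ^ j) s) (hf' : ContinuousOn (f ^ (j + 1)) s) :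
    ContinuousOn f s := fun x hx ↦ by
  by_cases h0 : f x = 0
  · have hpow := (hf x hx).norm.tendsto
    rw [Pi.pow_apply, h0, zero_pow hj, norm_zero] at hpow
    rw [ContinuousWithinAt, h0, Metric.tendsto_nhds]
    intro ε hε
    filter_upwards [hpow.eventually_lt_const (pow_pos hε j)] with y hy
    rw [Pi.pow_apply, norm_pow] at hy
    rw [dist_zero_right]
    exact lt_of_pow_lt_pow_left₀ j hε.le hy
  · have hquot : f = f ^ (j + 1) / f ^ j := funext fun y ↦ by
      rcases eq_or_ne (f y) 0 with hy | hy
      · simp [hy]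
      · simp [pow_succ', hy]
    rw [hquot]
    exact ContinuousWithinAt.div (hf' x hx) (hf x hx) (pow_ne_zero j h0)

/-- The derivatives of `f` grow on `s` at most like `weightSeq ω ρ`. The classes of Roumieu and
Beurling are obtained by letting this hold locally for some, respectively for every, `ρ > 0`. -/
def HasWeightGrowthOn {E : Type*} [NormedAddCommGroup E] [NormedSpace ℝ E] (ω : ℝ → ℝ) (ρ : ℝ)
    (f : E → ℂ) (s : Set E) : Prop :=
  ∃ C, 0 < C ∧ ∀ x ∈ s, ContDiffAt ℝ (⊤ : ℕ∞) f x ∧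
    ∀ k, ‖iteratedFDeriv ℝ k f x‖ ≤ C * weightSeq ω ρ k

section NormedSpace

variable {E : Type*} [NormedAddCommGroup E] [NormedSpace ℝ E] {ω : ℝ → ℝ} {f : E → ℂ}
  {s U : Set E} {ρ ρ' : ℝ}

lemma HasWeightGrowthOn.mono_weight (hf : HasWeightGrowthOn ω ρ f s) (hω : IsWeightFunction ω)
    (hρ : 0 < ρ) (h : ρ ≤ ρ') : HasWeightGrowthOn ω ρ' f s := by
  obtain ⟨C, hC, hf⟩ := hf
  refine ⟨C, hC, fun x hx ↦ ⟨(hf x hx).1, fun k ↦ ((hf x hx).2 k).trans ?_⟩⟩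
  gcongr
  exact hω.weightSeq_mono hρ h k

lemma HasWeightGrowthOn.mono {t : Set E} (hf : HasWeightGrowthOn ω ρ f s) (h : t ⊆ s) :
    HasWeightGrowthOn ω ρ f t := by
  obtain ⟨C, hC, hf⟩ := hf
  exact ⟨C, hC, fun x hx ↦ hf x (h hx)⟩

lemma HasWeightGrowthOn.contDiffOn (hf : HasWeightGrowthOn ω ρ f s) :
    ContDiffOn ℝ (⊤ : ℕ∞) f s := by
  obtain ⟨C, -, hf⟩ := hf
  exact fun x hx ↦ (hf x hx).1.contDiffWithinAt

lemma hasWeightGrowthOn_iff_within (hU : IsOpen U) (hf : ContDiffOn ℝ (⊤ : ℕ∞) f U) (hs : s ⊆ U) :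
    HasWeightGrowthOn ω ρ f s ↔ ∃ C, 0 < C ∧ ∀ x ∈ s, ∀ k,
      ‖iteratedFDerivWithin ℝ k f U x‖ ≤ C * Real.exp (phiStar ω (ρ * k) / ρ) := by
  refine exists_congr fun C ↦ and_congr_right fun _ ↦ forall₂_congr fun x hx ↦ ?_
  simp only [iteratedFDerivWithin_of_isOpen _ hU (hs hx), weightSeq,
    hf.contDiffAt (hU.mem_nhds (hs hx)), true_and]

lemma exists_omegaRoumieuOn_iff [ProperSpace E] {a : E} :
    (∃ U, IsOpen U ∧ a ∈ U ∧ OmegaRoumieuOn ω f U) ↔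
      ∃ r > 0, ∃ ρ > 0, HasWeightGrowthOn ω ρ f (ball a r) := by
  constructor
  · rintro ⟨U, hU, ha, hf, hb⟩
    obtain ⟨r, hr, hrU⟩ := nhds_basis_closedBall.mem_iff.1 (hU.mem_nhds ha)
    have hcl := closure_ball_subset_closedBall.trans hrU
    obtain ⟨C, ρ, hC, hρ, h⟩ := hb _ isOpen_ball isBounded_ball.isCompact_closure hcl
    exact ⟨r, hr, ρ, hρ,
      (hasWeightGrowthOn_iff_within hU hf (subset_closure.trans hcl)).2 ⟨C, hC, h⟩⟩
  · rintro ⟨r, hr, ρ, hρ, h⟩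
    refine ⟨ball a r, isOpen_ball, mem_ball_self hr, h.contDiffOn, fun V _ _ hV ↦ ?_⟩
    have hV := subset_closure.trans hV
    obtain ⟨C, hC, hb⟩ := (hasWeightGrowthOn_iff_within isOpen_ball h.contDiffOn hV).1 (h.mono hV)
    exact ⟨C, ρ, hC, hρ, hb⟩

lemma exists_omegaBeurlingOn_iff [ProperSpace E] {a : E} :
    (∃ U, IsOpen U ∧ a ∈ U ∧ OmegaBeurlingOn ω f U) ↔
      ∃ r > 0, ∀ ρ > 0, HasWeightGrowthOn ω ρ f (ball a r) := by
  constructor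
  · rintro ⟨U, hU, ha, hf, hb⟩
    obtain ⟨r, hr, hrU⟩ := nhds_basis_closedBall.mem_iff.1 (hU.mem_nhds ha)
    have hcl := closure_ball_subset_closedBall.trans hrU
    exact ⟨r, hr, fun ρ hρ ↦ (hasWeightGrowthOn_iff_within hU hf (subset_closure.trans hcl)).2
      (hb _ isOpen_ball isBounded_ball.isCompact_closure hcl ρ hρ)⟩
  · rintro ⟨r, hr, h⟩
    have hf := (h 1 one_pos).contDiffOn
    refine ⟨ball a r, isOpen_ball, mem_ball_self hr, hf, fun V _ _ hV ρ hρ ↦ ?_⟩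
    have hV := subset_closure.trans hV
    exact (hasWeightGrowthOn_iff_within isOpen_ball hf hV).1 ((h ρ hρ).mono hV)

lemma HasHolomorphicApprox.mono_set {κ b C : ℝ} {t : Set E}
    (hf : HasHolomorphicApprox ω f s κ b C) (h : t ⊆ s) : HasHolomorphicApprox ω f t κ b C :=
  Eventually.mono hf fun _ hR x hx ↦ hR x (h hx)

lemma HasHolomorphicApprox.hasWeightGrowthOn {κ C A : ℝ}
    (hf : HasHolomorphicApprox ω f s κ (4 / ρ) C) (hω : IsWeightFunction ω)
    (hconc : ConcaveOn ℝ (Ici 0) ω) (hκ : 0 < κ) (hρ : 0 < ρ) (hA : 1 ≤ A)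
    (hκA : 64 * Real.exp 1 ^ 2 / (κ * ρ) ≤ A) (hs : ∀ x ∈ s, ContDiffAt ℝ (⊤ : ℕ∞) f x) :
    HasWeightGrowthOn ω (A * ρ) f s := by
  obtain ⟨C', hC'⟩ := hf.exists_norm_iteratedFDeriv_apply_le hω hconc hκ hρ hs
  refine ⟨max C' 1, by positivity, fun x hx ↦ ⟨hs x hx, fun k ↦ ?_⟩⟩
  have hM := weightSeq_pos ω ρ k
  calc ‖iteratedFDeriv ℝ k f x‖
      ≤ (2 * Real.exp 1) ^ k * (C' * ((32 * Real.exp 1 / (κ * ρ)) ^ k * weightSeq ω ρ k)) :=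
        norm_iteratedFDeriv_le_of_norm_apply_const_le (contDiffAt_infty.1 (hs x hx) k)
          fun v hv ↦ hC' x hx v hv k
    _ = C' * ((2 * Real.exp 1 * (32 * Real.exp 1 / (κ * ρ))) ^ k * weightSeq ω ρ k) := by
        rw [mul_pow _ (32 * _ / _)]
        ring
    _ ≤ max C' 1 * (A ^ k * weightSeq ω ρ k) := by
        gcongr
        · exact le_max_left _ _
        · exact hκA.trans_eq' (by ring)
    _ ≤ max C' 1 * weightSeq ω (A * ρ) k := by
        gcongr
        exact hω.pow_mul_weightSeq_le hconc hρ hA k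

end NormedSpace

variable {E : Type*} [NormedAddCommGroup E] [InnerProductSpace ℝ E] [FiniteDimensional ℝ E]
  {ω : ℝ → ℝ} {f : E → ℂ} {a : E} {j : ℕ}

theorem exists_hasWeightGrowthOn_of_pow (hω : IsWeightFunction ω)
    (hconc : ConcaveOn ℝ (Ici 0) ω) (hj : j ≠ 0) :
    ∃ γ > 0, ∀ {ρ r : ℝ} {f : E → ℂ}, 0 < ρ → 0 < r →
      HasWeightGrowthOn ω ρ (f ^ j) (ball a (2 * r)) →
      HasWeightGrowthOn ω ρ (f ^ (j + 1)) (ball a (2 * r)) →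
      HasWeightGrowthOn ω (γ * ρ) f (ball a (r / 2)) := by
  have hj1 : (1 : ℝ) ≤ j := by exact_mod_cast Nat.one_le_iff_ne_zero.2 hj
  refine ⟨256 * Real.exp 1 ^ 2 * (32 * j * (j + 1)), by positivity, fun {ρ r f} hρ hr hf hf' ↦ ?_⟩
  have hsub : ball a r ⊆ ball a (2 * r) := ball_subset_ball (by linarith)
  have hcont : ContinuousOn f (ball a r) := continuousOn_of_pow hj
    (hf.contDiffOn.continuousOn.mono hsub) (hf'.contDiffOn.continuousOn.mono hsub)
  obtain ⟨A, -, hA⟩ := hf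
  obtain ⟨A', -, hA'⟩ := hf'
  obtain ⟨C, hC⟩ := exists_hasHolomorphicApprox_of_pow (f := f) hω hconc hj hρ
    (le_max_left 1 (max A A')) hr (a := a) <| by
      rintro i (rfl | rfl) y hy
      · exact ⟨(hA y hy).1, fun k ↦ ((hA y hy).2 k).trans <|
          mul_le_mul_of_nonneg_right (by simp) (weightSeq_pos ω ρ k).le⟩
      · exact ⟨(hA' y hy).1, fun k ↦ ((hA' y hy).2 k).trans <|
          mul_le_mul_of_nonneg_right (by simp) (weightSeq_pos ω ρ k).le⟩
  have hsmooth : ContDiffOn ℝ (⊤ : ℕ∞) f (ball a (r / 2)) :=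
    contDiffOn_of_hasPolynomialApprox hr hcont fun m ↦
      ⟨2 * m, hC.hasPolynomialApprox hω (by positivity) (by positivity) m⟩
  have hexp : 4 / (32 * j * (j + 1) * ρ) = 1 / (8 * ρ * j * (j + 1)) := by
    field_simp
    norm_num
  rw [mul_assoc]
  refine (hexp ▸ hC.mono_set (ball_subset_ball (by linarith))).hasWeightGrowthOn hω hconc
    (by positivity) (by positivity) ?_ ?_ fun x hx ↦ hsmooth.contDiffAt (isOpen_ball.mem_nhds hx)
  · nlinarith [Real.one_le_exp one_pos.le]
  · rw [div_le_iff₀ (by positivity)]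
    field_simp
    nlinarith

theorem exists_omegaRoumieuOn_of_pow (hω : IsWeightFunction ω) (hconc : ConcaveOn ℝ (Ici 0) ω)
    (hj : j ≠ 0) (hf : ∃ U, IsOpen U ∧ a ∈ U ∧ OmegaRoumieuOn ω (f ^ j) U)
    (hf' : ∃ U, IsOpen U ∧ a ∈ U ∧ OmegaRoumieuOn ω (f ^ (j + 1)) U) :
    ∃ U, IsOpen U ∧ a ∈ U ∧ OmegaRoumieuOn ω f U := by
  rw [exists_omegaRoumieuOn_iff] at hf hf' ⊢
  obtain ⟨r, hr, ρ, hρ, hf⟩ := hf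
  obtain ⟨r', hr', ρ', hρ', hf'⟩ := hf'
  obtain ⟨γ, hγ, h⟩ := exists_hasWeightGrowthOn_of_pow (a := a) hω hconc hj
  refine ⟨min r r' / 2 / 2, by positivity, γ * max ρ ρ', by positivity,
    h (by positivity) (by positivity) ?_ ?_⟩ <;> rw [mul_div_cancel₀ _ two_ne_zero]
  · exact (hf.mono (ball_subset_ball (min_le_left r r'))).mono_weight hω hρ (le_max_left ρ ρ')
  · exact (hf'.mono (ball_subset_ball (min_le_right r r'))).mono_weight hω hρ' (le_max_right ρ ρ')

theorem exists_omegaBeurlingOn_of_pow (hω : IsWeightFunction ω) (hconc : ConcaveOn ℝ (Ici 0) ω)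
    (hj : j ≠ 0) (hf : ∃ U, IsOpen U ∧ a ∈ U ∧ OmegaBeurlingOn ω (f ^ j) U)
    (hf' : ∃ U, IsOpen U ∧ a ∈ U ∧ OmegaBeurlingOn ω (f ^ (j + 1)) U) :
    ∃ U, IsOpen U ∧ a ∈ U ∧ OmegaBeurlingOn ω f U := by
  rw [exists_omegaBeurlingOn_iff] at hf hf' ⊢
  obtain ⟨r, hr, hf⟩ := hf
  obtain ⟨r', hr', hf'⟩ := hf'
  obtain ⟨γ, hγ, h⟩ := exists_hasWeightGrowthOn_of_pow (a := a) hω hconc hj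
  refine ⟨min r r' / 2 / 2, by positivity, fun ρ hρ ↦ ?_⟩
  have hργ : 0 < ρ / γ := by positivity
  rw [← mul_div_cancel₀ ρ hγ.ne']
  refine h hργ (by positivity) ?_ ?_ <;> rw [mul_div_cancel₀ _ two_ne_zero]
  · exact (hf _ hργ).mono (ball_subset_ball (min_le_left r r'))
  · exact (hf' _ hργ).mono (ball_subset_ball (min_le_right r r'))

end RootsOfGerms

theorem statement8_general {E : Type*} [NormedAddCommGroup E] [InnerProductSpace ℝ E]
    [FiniteDimensional ℝ E] (a : E) {ω : ℝ → ℝ} (hω : IsWeightFunction ω)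
    (hconc : ConcaveOn ℝ (Ici 0) ω) :
    (∀ f : E → ℂ, ∀ j : ℕ, 1 ≤ j → (∃ U, IsOpen U ∧ a ∈ U ∧ OmegaRoumieuOn ω (f ^ j) U) →
        (∃ U, IsOpen U ∧ a ∈ U ∧ OmegaRoumieuOn ω (f ^ (j + 1)) U) →
        ∃ U, IsOpen U ∧ a ∈ U ∧ OmegaRoumieuOn ω f U) ∧
    (∀ f : E → ℂ, ∀ j : ℕ, 1 ≤ j → (∃ U, IsOpen U ∧ a ∈ U ∧ OmegaBeurlingOn ω (f ^ j) U) →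
        (∃ U, IsOpen U ∧ a ∈ U ∧ OmegaBeurlingOn ω (f ^ (j + 1)) U) →
        ∃ U, IsOpen U ∧ a ∈ U ∧ OmegaBeurlingOn ω f U) :=
  ⟨fun _ _ hj ↦ exists_omegaRoumieuOn_of_pow hω hconc (Nat.one_le_iff_ne_zero.1 hj),
    fun _ _ hj ↦ exists_omegaBeurlingOn_of_pow hω hconc (Nat.one_le_iff_ne_zero.1 hj)⟩

/-- for a non-quasianalytic concave weight function `ω` and `d ≥ 1`, the
rings of germs at `0 ∈ ℝ^d` of `E^{ω}`- and `E^{(ω)}`-functions have property (D). -/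
theorem statement8 (d : ℕ) (hd : 1 ≤ d) (ω : ℝ → ℝ) (hω : IsWeightFunction ω)
    (hconc : ConcaveOn ℝ (Ici 0) ω) (hnq : NonQuasianalyticW ω) :
    (∀ f : EuclideanSpace ℝ (Fin d) → ℂ, ∀ j : ℕ, 1 ≤ j →
        (∃ U : Set (EuclideanSpace ℝ (Fin d)), IsOpen U ∧ 0 ∈ U ∧
          OmegaRoumieuOn ω (f ^ j) U) →
        (∃ U : Set (EuclideanSpace ℝ (Fin d)), IsOpen U ∧ 0 ∈ U ∧
          OmegaRoumieuOn ω (f ^ (j + 1)) U) →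
        ∃ U : Set (EuclideanSpace ℝ (Fin d)), IsOpen U ∧ 0 ∈ U ∧ OmegaRoumieuOn ω f U) ∧
    (∀ f : EuclideanSpace ℝ (Fin d) → ℂ, ∀ j : ℕ, 1 ≤ j →
        (∃ U : Set (EuclideanSpace ℝ (Fin d)), IsOpen U ∧ 0 ∈ U ∧
          OmegaBeurlingOn ω (f ^ j) U) →
        (∃ U : Set (EuclideanSpace ℝ (Fin d)), IsOpen U ∧ 0 ∈ U ∧
          OmegaBeurlingOn ω (f ^ (j + 1)) U) →
        ∃ U : Set (EuclideanSpace ℝ (Fin d)), IsOpen U ∧ 0 ∈ U ∧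
          OmegaBeurlingOn ω f U) :=
  statement8_general 0 hω hconc
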